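/- arXiv:2410.11003 — 3 statements merged into one kernel-verified Lean document; each statement's English description precedes it below -/
import Mathlib

section
/- Let m ≥ 1, s ≥ 2 and 1 ≤ t ≤ s be integers and r = ms + t, and let ε, ν ∈ (0, 1/2). There is a constant C = C(ν) such that the following holds for p = C·n^{−2/s}·(log n)^{2/(s(s−1))}. Let G be an n-vertex graph and X ⊆ V(G) with |X| ≤ εn, and assume that for every x ∈ X and every Y ⊆ V(G)\{x} with |Y| ≤ 2rεn, the number of copies of B_{m,s,t} in G that avoid Y and contain x in the class of size t is at least ν·n^{ms+t−1}. Then with high probability (as n → ∞) the graph G ∪ G_{n,p} contains a family {F̃_x : x ∈ X} of pairwise vertex-disjoint copies of K_r such that for each x ∈ X, F̃_x contains a copy of B_{m,s,t} all of whose edges lie in G and which contains x in a class of size t; in particular, X is covered by a partial K_r-factor. -/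
open Finset
open scoped Classical

/-- The degree of a vertex (number of neighbours). -/
noncomputable def degR {V : Type*} (G : SimpleGraph V) (v : V) : ℕ :=
  Nat.card (G.neighborSet v)

/-- The number of edges of a graph on `Fin n`. -/
noncomputable def edgeCount {n : ℕ} (H : SimpleGraph (Fin n)) : ℕ := Nat.card H.edgeSet

/-- The probability that the binomial random graph `G_{n,p}` satisfies the property `P`. -/
noncomputable def Pr (n : ℕ) (p : ℝ) (P : SimpleGraph (Fin n) → Prop) : ℝ :=
  ∑ H : SimpleGraph (Fin n),
    if P H then p ^ edgeCount H * (1 - p) ^ (n.choose 2 - edgeCount H) else 0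

/-- `G` has a `K_r`-factor: a partition of the vertex set into `r`-cliques. -/
def HasCliqueFactor {n : ℕ} (G : SimpleGraph (Fin n)) (r : ℕ) : Prop :=
  ∃ P : Finpartition (Finset.univ : Finset (Fin n)), ∀ c ∈ P.parts, G.IsNClique r c

/-- The threshold function `p_s(n)`: `log n / n` if `s = 2` and `n^{-φ(s)}` with
`φ(s) = 2s/((s-1)(s+2))` if `s ≥ 3`. -/
noncomputable def pThr (s n : ℕ) : ℝ :=
  if s = 2 then Real.log n / n
  else (n : ℝ) ^ (-(2 * (s : ℝ)) / (((s : ℝ) - 1) * ((s : ℝ) + 2)))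

/-- The number of edges of `G` within the vertex set `S`. -/
noncomputable def edgesIn {V : Type*} (G : SimpleGraph V) (S : Set V) : ℕ :=
  Nat.card {e : Sym2 V // e ∈ G.edgeSet ∧ ∀ v ∈ e, v ∈ S}

/-- The number of ordered adjacent pairs between `S` and `T`. -/
noncomputable def edgesBtw {V : Type*} (G : SimpleGraph V) (S T : Set V) : ℕ :=
  Nat.card {p : V × V // p.1 ∈ S ∧ p.2 ∈ T ∧ G.Adj p.1 p.2}

/-- The edge density of the pair `(S, T)` in `G`. -/
noncomputable def density {V : Type*} (G : SimpleGraph V) (S T : Set V) : ℝ :=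
  (edgesBtw G S T : ℝ) / ((S.ncard : ℝ) * (T.ncard : ℝ))

/-- The pair `(S, T)` is `(ε, d)`-regular in `G`. -/
def IsRegularPair {V : Type*} (G : SimpleGraph V) (S T : Set V) (ε d : ℝ) : Prop :=
  ∀ X ⊆ S, ∀ Y ⊆ T, ε * S.ncard ≤ (X.ncard : ℝ) → ε * T.ncard ≤ (Y.ncard : ℝ) →
    |density G X Y - d| < ε

/-- The pair `(S, T)` is `(ε, d, ϑ)`-super-regular in `G`. -/
def IsSuperRegularPair {V : Type*} (G : SimpleGraph V) (S T : Set V) (ε d ϑ : ℝ) : Prop :=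
  IsRegularPair G S T ε d ∧
  (∀ v ∈ S, ϑ * T.ncard ≤ ((T ∩ G.neighborSet v).ncard : ℝ)) ∧
  (∀ v ∈ T, ϑ * S.ncard ≤ ((S ∩ G.neighborSet v).ncard : ℝ))

/-- The classes `A 0, …, A (m-1)` (each of size `s`) and `B` (of size `t`) form a copy of the
complete `(m+1)`-partite graph `B_{m,s,t}` in `G`. -/
def IsBCopy {V : Type*} (G : SimpleGraph V) (m s t : ℕ)
    (A : Fin m → Finset V) (B : Finset V) : Prop :=
  (∀ i, (A i).card = s) ∧ B.card = t ∧
  (Pairwise fun i j => Disjoint (A i) (A j)) ∧ (∀ i, Disjoint (A i) B) ∧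
  (∀ i j, i ≠ j → ∀ x ∈ A i, ∀ y ∈ A j, G.Adj x y) ∧
  (∀ i, ∀ x ∈ A i, ∀ y ∈ B, G.Adj x y)


lemma haxell_aux {ι V : Type*} [DecidableEq ι] [DecidableEq V] (D : Finset ι) (a0 : ι)
    (E : ι → Finset V → Prop) (d : ℕ) (hd1 : 1 ≤ d) (hd : ∀ i e, E i e → e.card ≤ d)
    (hE : ∀ S ⊆ insert a0 D, S.Nonempty → ∀ W : Finset V,
      W.card ≤ (2 * d - 1) * (S.card - 1) → ∃ i ∈ S, ∃ e, E i e ∧ Disjoint e W) :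
    ∀ N : ℕ, ∀ S ⊆ insert a0 D, S.Nonempty → (D \ S).card = N → ∀ W : Finset V,
      W.card ≤ (2 * d - 1) * (S.card - 1) → ∀ f : ι → Finset V,
      (∀ j ∈ D, E j (f j)) → (∀ i ∈ D, ∀ j ∈ D, i ≠ j → Disjoint (f i) (f j)) →
      (∀ j ∈ D, j ∈ S → f j ⊆ W) →
      ∃ (f' : ι → Finset V) (a : ι) (e : Finset V), a ∈ S ∧ E a e ∧ Disjoint e W ∧
        (∀ j ∈ D, E j (f' j)) ∧ (∀ i ∈ D, ∀ j ∈ D, i ≠ j → Disjoint (f' i) (f' j)) ∧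
        (∀ j ∈ D, Disjoint e (f' j)) ∧ (∀ j ∈ D, f' j = f j ∨ Disjoint (f' j) W) ∧
        (∀ j ∈ D, j ∈ S → f' j = f j) := by
  intro N
  induction N using Nat.strong_induction_on with
  | _ N ih =>
  intro S hS hSne hN W hW f hfE hfd hfW
  obtain ⟨a, haS, e, hae, heW⟩ := hE S hS hSne W hW
  -- inner induction
  have inner : ∀ k : ℕ, ∀ f : ι → Finset V,
      (D.filter (fun j => ¬ Disjoint e (f j))).card = k →
      (∀ j ∈ D, E j (f j)) → (∀ i ∈ D, ∀ j ∈ D, i ≠ j → Disjoint (f i) (f j)) →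
      (∀ j ∈ D, j ∈ S → f j ⊆ W) →
      ∃ (f' : ι → Finset V) (a : ι) (e : Finset V), a ∈ S ∧ E a e ∧ Disjoint e W ∧
        (∀ j ∈ D, E j (f' j)) ∧ (∀ i ∈ D, ∀ j ∈ D, i ≠ j → Disjoint (f' i) (f' j)) ∧
        (∀ j ∈ D, Disjoint e (f' j)) ∧ (∀ j ∈ D, f' j = f j ∨ Disjoint (f' j) W) ∧
        (∀ j ∈ D, j ∈ S → f' j = f j) := by
    intro k
    induction k using Nat.strong_induction_on with
    | _ k ihk =>
    intro f hk hfE hfd hfW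
    set M := D.filter (fun j => ¬ Disjoint e (f j)) with hM
    by_cases hMe : M = ∅
    · refine ⟨f, a, e, haS, hae, heW, hfE, hfd, ?_, fun j _ => Or.inl rfl, fun _ _ _ => rfl⟩
      intro j hj
      by_contra hc
      have : j ∈ M := by rw [hM, mem_filter]; exact ⟨hj, hc⟩
      rw [hMe] at this
      simp at this
    have hMne : M.Nonempty := nonempty_iff_ne_empty.mpr hMe
    have hMD : M ⊆ D := filter_subset _ _
    have hMS : Disjoint S M := by
      rw [disjoint_right]
      intro j hjM hjS
      have h1 := (mem_filter.mp hjM)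
      exact h1.2 (heW.mono_right (hfW j h1.1 hjS))
    set W' := W ∪ (e ∪ M.biUnion (fun j => f j \ e)) with hW'
    have hMpos : 1 ≤ M.card := hMne.card_pos
    have hSpos : 1 ≤ S.card := hSne.card_pos
    have hcard : W'.card ≤ (2 * d - 1) * ((S ∪ M).card - 1) := by
      rw [card_union_of_disjoint hMS]
      have h1 : W'.card ≤ W.card + (e.card + (M.biUnion (fun j => f j \ e)).card) :=
        (card_union_le _ _).trans (Nat.add_le_add_left (card_union_le _ _) _)
      have h2 : (M.biUnion (fun j => f j \ e)).card ≤ M.card * (d - 1) := by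
        refine card_biUnion_le_card_mul _ _ _ ?_
        intro j hj
        have hj' := mem_filter.mp hj
        have h3 := hd j _ (hfE j hj'.1)
        have h4 : (f j \ e).card < (f j).card := by
          apply card_lt_card
          refine ⟨sdiff_subset, fun hc => hj'.2 ?_⟩
          rw [disjoint_right]
          intro x hx
          exact (mem_sdiff.mp (hc hx)).2
        omega
      have h3 := hd a e hae
      obtain ⟨c, rfl⟩ : ∃ c, d = c + 1 := ⟨d - 1, by omega⟩
      obtain ⟨u, hu⟩ : ∃ u, S.card = u + 1 := ⟨S.card - 1, by omega⟩
      obtain ⟨v, hv⟩ : ∃ v, M.card = v + 1 := ⟨M.card - 1, by omega⟩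
      rw [hu] at hW ⊢
      rw [hv] at h2 ⊢
      have e1 : 2 * (c + 1) - 1 = 2 * c + 1 := by omega
      have e2 : u + 1 + (v + 1) - 1 = u + v + 1 := by omega
      rw [e1] at hW ⊢
      rw [e2]
      simp only [Nat.add_sub_cancel] at hW h2
      nlinarith
    have hlt : (D \ (S ∪ M)).card < N := by
      rw [← hN]
      apply card_lt_card
      refine ⟨fun x hx => ?_, fun hc => ?_⟩
      · simp only [mem_sdiff, mem_union, not_or] at hx ⊢
        exact ⟨hx.1, hx.2.1⟩
      · obtain ⟨j, hj⟩ := hMne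
        have h1 := hc (mem_sdiff.mpr ⟨hMD hj, disjoint_right.mp hMS hj⟩)
        simp only [mem_sdiff, mem_union, not_or] at h1
        exact h1.2.2 hj
    have heW' : e ⊆ W' := by rw [hW']; intro x hx; simp [hx]
    have hWW' : W ⊆ W' := by rw [hW']; intro x hx; simp [hx]
    obtain ⟨f', a', e', ha', hE', heW2, hf'E, hf'd, hf'e, hf'o, hf'S⟩ :=
      ih _ hlt (S ∪ M) (union_subset hS (hMD.trans (subset_insert _ _))) (hSne.mono subset_union_left) rfl
        W' hcard f hfE hfd (by
          intro j hj hjS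
          rcases mem_union.mp hjS with h | h
          · exact (hfW j hj h).trans hWW'
          · intro x hx
            by_cases hxe : x ∈ e
            · exact heW' hxe
            · rw [hW']
              simp only [mem_union, mem_biUnion, mem_sdiff]
              exact Or.inr (Or.inr ⟨j, h, hx, hxe⟩))
    by_cases haS' : a' ∈ S
    · refine ⟨f', a', e', haS', hE', heW2.mono_right hWW', hf'E, hf'd, hf'e, ?_, ?_⟩
      · intro j hj
        exact (hf'o j hj).imp id (fun h => h.mono_right hWW')
      · intro j hj hjS
        exact hf'S j hj (mem_union_left _ hjS)
    have haM : a' ∈ M := (mem_union.mp ha').resolve_left haS'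
    have hsub : D.filter (fun j => ¬ Disjoint e (Function.update f' a' e' j)) ⊂ M := by
      refine ⟨?_, ?_⟩
      · intro j hj
        obtain ⟨hjD, hj2⟩ := mem_filter.mp hj
        by_cases hja : j = a'
        · rw [hja]; exact haM
        · rw [Function.update_of_ne hja] at hj2
          rcases hf'o j hjD with h | h
          · rw [h] at hj2
            exact mem_filter.mpr ⟨hjD, hj2⟩
          · exact absurd (h.mono_right heW').symm hj2
      · intro hc
        have h1 := mem_filter.mp (hc haM)
        rw [Function.update_self] at h1
        exact h1.2 (heW2.mono_right heW').symm
    have hupS : ∀ j ∈ D, j ∈ S → Function.update f' a' e' j = f j := by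
      intro j hj hjS
      rw [Function.update_of_ne (fun h : j = a' => haS' (h ▸ hjS))]
      exact hf'S j hj (mem_union_left _ hjS)
    obtain ⟨g, b, e2, hb, hg1, hg2, hg3, hg4, hg5, hg6, hg7⟩ :=
      ihk _ (hk ▸ card_lt_card hsub) (Function.update f' a' e') rfl (by
        intro j hj
        by_cases hja : j = a'
        · subst hja; rw [Function.update_self]; exact hE'
        · rw [Function.update_of_ne hja]; exact hf'E j hj) (by
        intro i hi j hj hij
        by_cases hia : i = a'
        · subst hia
          rw [Function.update_self, Function.update_of_ne hij.symm]
          exact hf'e j hj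
        · rw [Function.update_of_ne hia]
          by_cases hja : j = a'
          · subst hja
            rw [Function.update_self]
            exact (hf'e i hi).symm
          · rw [Function.update_of_ne hja]
            exact hf'd i hi j hj hij) (by
        intro j hj hjS
        rw [hupS j hj hjS]
        exact hfW j hj hjS)
    refine ⟨g, b, e2, hb, hg1, hg2, hg3, hg4, hg5, ?_, ?_⟩
    · intro j hj
      rcases hg6 j hj with h | h
      · rw [h]
        by_cases hja : j = a'
        · subst hja; rw [Function.update_self]; exact Or.inr (heW2.mono_right hWW')
        · rw [Function.update_of_ne hja]
          exact (hf'o j hj).imp id (fun h => h.mono_right hWW')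
      · exact Or.inr h
    · intro j hj hjS
      rw [hg7 j hj hjS, hupS j hj hjS]
  exact inner _ f rfl hfE hfd hfW

/-- The theorem of Haxell on systems of disjoint representatives. -/
lemma haxell {ι V : Type*} [DecidableEq ι] [DecidableEq V] (X : Finset ι)
    (E : ι → Finset V → Prop) (d : ℕ) (hd1 : 1 ≤ d) (hd : ∀ i e, E i e → e.card ≤ d)
    (hE : ∀ S ⊆ X, S.Nonempty → ∀ W : Finset V,
      W.card ≤ (2 * d - 1) * (S.card - 1) → ∃ i ∈ S, ∃ e, E i e ∧ Disjoint e W) :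
    ∃ f : ι → Finset V, (∀ j ∈ X, E j (f j)) ∧
      (∀ i ∈ X, ∀ j ∈ X, i ≠ j → Disjoint (f i) (f j)) := by
  induction X using Finset.induction_on with
  | empty => exact ⟨fun _ => ∅, by simp, by simp⟩
  | insert a D haD ih =>
    obtain ⟨f, hf1, hf2⟩ := ih (fun S hS => hE S (hS.trans (subset_insert _ _)))
    obtain ⟨f', a', e, ha', h1, h2, h3, h4, h5, h6, h7⟩ :=
      haxell_aux D a E d hd1 hd hE _ {a} (by simp) (by simp) rfl ∅ (by simp) f hf1 hf2 (by
        intro j hj hja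
        rw [mem_singleton] at hja
        exact absurd (hja ▸ hj) haD)
    rw [mem_singleton] at ha'
    subst ha'
    refine ⟨Function.update f' a' e, ?_, ?_⟩
    · intro j hj
      by_cases hja : j = a'
      · subst hja; rw [Function.update_self]; exact h1
      · rw [Function.update_of_ne hja]; exact h3 j ((mem_insert.mp hj).resolve_left hja)
    · intro i hi j hj hij
      by_cases hia : i = a'
      · subst hia
        rw [Function.update_self, Function.update_of_ne hij.symm]
        exact h5 j ((mem_insert.mp hj).resolve_left hij.symm)
      · rw [Function.update_of_ne hia]
        by_cases hja : j = a'
        · subst hja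
          rw [Function.update_self]
          exact (h5 i ((mem_insert.mp hi).resolve_left hia)).symm
        · rw [Function.update_of_ne hja]
          exact h4 i ((mem_insert.mp hi).resolve_left hia) j ((mem_insert.mp hj).resolve_left hja) hij


/-- Expectation over a binomial random subset of `Ω`. -/
noncomputable def ex {α : Type*} [DecidableEq α] (Ω : Finset α) (p : ℝ) (f : Finset α → ℝ) : ℝ :=
  ∑ H ∈ Ω.powerset, p ^ H.card * (1 - p) ^ (Ω.card - H.card) * f H

section
variable {α : Type*} [DecidableEq α] {Ω : Finset α} {p : ℝ}

lemma ex_mono (hp0 : 0 ≤ p) (hp1 : p ≤ 1) {f g : Finset α → ℝ} (h : ∀ H ⊆ Ω, f H ≤ g H) :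
    ex Ω p f ≤ ex Ω p g := by
  refine sum_le_sum fun H hH => ?_
  have : 0 ≤ 1 - p := by linarith
  exact mul_le_mul_of_nonneg_left (h H (mem_powerset.mp hH)) (by positivity)

lemma ex_nonneg (hp0 : 0 ≤ p) (hp1 : p ≤ 1) {f : Finset α → ℝ} (h : ∀ H ⊆ Ω, 0 ≤ f H) :
    0 ≤ ex Ω p f := by
  refine sum_nonneg fun H hH => ?_
  have : 0 ≤ 1 - p := by linarith
  have := h H (mem_powerset.mp hH)
  positivity

lemma ex_one : ex Ω p (fun _ => 1) = 1 := by
  unfold ex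
  simp only [mul_one]
  rw [sum_pow_mul_eq_add_pow]
  simp

lemma ex_sub (f g : Finset α → ℝ) : ex Ω p (fun H => f H - g H) = ex Ω p f - ex Ω p g := by
  unfold ex
  rw [← sum_sub_distrib]
  exact sum_congr rfl fun _ _ => by ring

lemma ex_mul (c : ℝ) (f : Finset α → ℝ) : ex Ω p (fun H => c * f H) = c * ex Ω p f := by
  unfold ex
  rw [mul_sum]
  exact sum_congr rfl fun _ _ => by ring

lemma ex_sum {ι : Type*} (I : Finset ι) (f : ι → Finset α → ℝ) :
    ex Ω p (fun H => ∑ i ∈ I, f i H) = ∑ i ∈ I, ex Ω p (f i) := by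
  unfold ex
  rw [sum_comm]
  exact sum_congr rfl fun _ _ => by rw [mul_sum]

lemma ex_congr {f g : Finset α → ℝ} (h : ∀ H ⊆ Ω, f H = g H) : ex Ω p f = ex Ω p g := by
  refine sum_congr rfl fun H hH => ?_
  rw [h H (mem_powerset.mp hH)]

lemma ex_single (e : α) (he : e ∈ Ω) (g : Finset α → ℝ) :
    ex Ω p (fun H => if e ∈ H then g H else 0) = p * ex Ω p (fun H => g (insert e H)) := by
  obtain ⟨Ω', he', rfl⟩ : ∃ Ω', e ∉ Ω' ∧ Ω = insert e Ω' :=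
    ⟨Ω.erase e, notMem_erase _ _, (insert_erase he).symm⟩
  unfold ex
  rw [sum_powerset_insert he', sum_powerset_insert he', ← sum_add_distrib, ← sum_add_distrib, mul_sum]
  refine sum_congr rfl fun H hH => ?_
  have hH' := mem_powerset.mp hH
  have heH : e ∉ H := fun h => he' (hH' h)
  have hc := card_le_card hH'
  rw [card_insert_of_notMem he', card_insert_of_notMem heH]
  have h1 : Ω'.card + 1 - H.card = (Ω'.card - H.card) + 1 := by omega
  have h2 : Ω'.card + 1 - (H.card + 1) = (Ω'.card - H.card) := by omega
  rw [h1, h2]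
  simp only [heH, if_false, mem_insert_self, if_true, insert_idem]
  ring

lemma ex_subset (T : Finset α) (hT : T ⊆ Ω) (g : Finset α → ℝ) :
    ex Ω p (fun H => if T ⊆ H then g H else 0) = p ^ T.card * ex Ω p (fun H => g (H ∪ T)) := by
  induction T using Finset.induction_on generalizing g with
  | empty => simp
  | insert e T he ih =>
    have h1 : ex Ω p (fun H => if insert e T ⊆ H then g H else 0) =
        ex Ω p (fun H => if e ∈ H then (if T ⊆ H then g H else 0) else 0) := by
      refine ex_congr fun H _ => ?_
      by_cases h1 : e ∈ H <;> by_cases h2 : T ⊆ H <;> simp [insert_subset_iff, h1, h2]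
    rw [h1, ex_single e (hT (mem_insert_self _ _))]
    have h2 : ex Ω p (fun H => if T ⊆ insert e H then g (insert e H) else 0) =
        ex Ω p (fun H => if T ⊆ H then g (insert e H) else 0) := by
      refine ex_congr fun H _ => ?_
      simp only [subset_insert_iff_of_notMem he]
    rw [h2, ih ((subset_insert _ _).trans hT), card_insert_of_notMem he]
    have h3 : ex Ω p (fun H => g (insert e (H ∪ T))) = ex Ω p (fun H => g (H ∪ insert e T)) := by
      refine ex_congr fun H _ => ?_
      rw [union_insert]
    rw [h3]
    ring

/-- indicator of `T ⊆ H` -/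
noncomputable def ind (T H : Finset α) : ℝ := if T ⊆ H then 1 else 0

lemma ind_nonneg (T H : Finset α) : 0 ≤ ind T H := by unfold ind; split_ifs <;> norm_num
lemma ind_le_one (T H : Finset α) : ind T H ≤ 1 := by unfold ind; split_ifs <;> norm_num
lemma ind_mul (T T' H : Finset α) : ind T H * ind T' H = ind (T ∪ T') H := by
  unfold ind
  by_cases h1 : T ⊆ H <;> by_cases h2 : T' ⊆ H <;> simp [h1, h2, union_subset_iff]
lemma ind_mono (T : Finset α) {H H' : Finset α} (h : H ⊆ H') : ind T H ≤ ind T H' := by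
  unfold ind
  by_cases h1 : T ⊆ H
  · simp [h1, h1.trans h]
  · simp only [h1, if_false]; split_ifs <;> norm_num

lemma ex_ind (T : Finset α) (hT : T ⊆ Ω) (g : Finset α → ℝ) :
    ex Ω p (fun H => ind T H * g H) = p ^ T.card * ex Ω p (fun H => g (H ∪ T)) := by
  rw [← ex_subset T hT]
  refine ex_congr fun H _ => ?_
  unfold ind; split_ifs <;> simp

/-- sequential step -/
lemma prod_one_sub_ge {ι : Type*} [DecidableEq ι] (I : Finset ι) (x : ι → ℝ) (h0 : ∀ i ∈ I, 0 ≤ x i)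
    (h1 : ∀ i ∈ I, x i ≤ 1) : 1 - ∑ i ∈ I, x i ≤ ∏ i ∈ I, (1 - x i) := by
  induction I using Finset.induction_on with
  | empty => simp
  | insert a I ha ih =>
    rw [sum_insert ha, prod_insert ha]
    have ih' := ih (fun i hi => h0 i (mem_insert_of_mem hi)) (fun i hi => h1 i (mem_insert_of_mem hi))
    have ha0 := h0 a (mem_insert_self _ _)
    have ha1 := h1 a (mem_insert_self _ _)
    have hs : 0 ≤ ∑ i ∈ I, x i := sum_nonneg fun i hi => h0 i (mem_insert_of_mem hi)
    have := mul_le_mul_of_nonneg_left ih' (sub_nonneg.mpr ha1)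
    nlinarith

lemma janson_aux {ι : Type*} (hp0 : 0 ≤ p) (hp1 : p ≤ 1) (q : ℝ) (hq0 : 0 ≤ q) (hq1 : q ≤ 1)
    (E : ι → Finset α) (I : Finset ι) (hE : ∀ i ∈ I, E i ⊆ Ω) :
    ex Ω p (fun H => ∏ i ∈ I, (1 - q * ind (E i) H)) ≤
      Real.exp (∑ i ∈ I, (- q * p ^ (E i).card + q ^ 2 *
        ∑ j ∈ I with ¬ Disjoint (E i) (E j), p ^ (E i ∪ E j).card)) := by
  induction I using Finset.induction_on with
  | empty => simp [ex_one]
  | insert a I ha ih =>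
    have ih' := ih (fun i hi => hE i (mem_insert_of_mem hi))
    have hEa := hE a (mem_insert_self _ _)
    set F : Finset α → ℝ := fun H => ∏ i ∈ I, (1 - q * ind (E i) H) with hF
    have hfac0 : ∀ i H, 0 ≤ 1 - q * ind (E i) H := fun i H => by
      have := ind_nonneg (E i) H
      have := ind_le_one (E i) H
      nlinarith
    have hfac1 : ∀ i H, 1 - q * ind (E i) H ≤ 1 := fun i H => by
      have := ind_nonneg (E i) H
      nlinarith
    have hFnn : ∀ H, 0 ≤ F H := fun H => prod_nonneg fun i _ => hfac0 i H
    have hexF : 0 ≤ ex Ω p F := ex_nonneg hp0 hp1 fun H _ => hFnn H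
    set J := I.filter (fun j => ¬ Disjoint (E a) (E j)) with hJ
    set Z : Finset α → ℝ := fun H => ∏ i ∈ I with Disjoint (E a) (E i), (1 - q * ind (E i) H) with hZ
    have hFZ : ∀ H, F H = Z H * ∏ i ∈ J, (1 - q * ind (E i) H) := fun H => by
      rw [hF, hZ, hJ]
      exact (prod_filter_mul_prod_filter_not I _ _).symm
    have hZnn : ∀ H, 0 ≤ Z H := fun H => prod_nonneg fun i _ => hfac0 i H
    have hZanti : ∀ H H', H ⊆ H' → Z H' ≤ Z H := fun H H' h =>
      prod_le_prod (fun i _ => hfac0 i H') fun i _ => by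
        have := ind_mono (E i) h
        nlinarith
    have hFleZ : ∀ H, F H ≤ Z H := fun H => by
      rw [hFZ]
      exact mul_le_of_le_one_right (hZnn H) (prod_le_one (fun i _ => hfac0 i H) fun i _ => hfac1 i H)
    have hZE : ∀ H, Z (H ∪ E a) = Z H := fun H => by
      refine prod_congr rfl fun i hi => ?_
      have hd := (mem_filter.mp hi).2
      have : (E i ⊆ H ∪ E a) ↔ E i ⊆ H := by
        constructor
        · intro h x hx
          rcases mem_union.mp (h hx) with h' | h'
          · exact h'
          · exact absurd hx (disjoint_left.mp hd h')
        · exact fun h => h.trans subset_union_left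
      simp only [ind, this]
    set Da := ∑ j ∈ J, p ^ (E a ∪ E j).card with hDa
    have hDann : 0 ≤ Da := sum_nonneg fun j _ => by positivity
    have key : (p ^ (E a).card - q * Da) * ex Ω p F ≤ ex Ω p (fun H => ind (E a) H * F H) := by
      by_cases hneg : p ^ (E a).card - q * Da < 0
      · have : 0 ≤ ex Ω p (fun H => ind (E a) H * F H) :=
          ex_nonneg hp0 hp1 fun H _ => mul_nonneg (ind_nonneg _ _) (hFnn H)
        nlinarith
      · push Not at hneg
        have h1 : ex Ω p (fun H => ind (E a) H * Z H - q * ∑ j ∈ J, ind (E a ∪ E j) H * Z H) ≤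
            ex Ω p (fun H => ind (E a) H * F H) := by
          refine ex_mono hp0 hp1 fun H _ => ?_
          have h2 := prod_one_sub_ge J (fun i => q * ind (E i) H)
            (fun i _ => mul_nonneg hq0 (ind_nonneg _ _)) (fun i _ => by
              have := ind_nonneg (E i) H
              have := ind_le_one (E i) H
              nlinarith)
          rw [hFZ]
          have h3 := mul_le_mul_of_nonneg_left h2 (mul_nonneg (ind_nonneg (E a) H) (hZnn H))
          refine le_trans (le_of_eq ?_) (h3.trans (le_of_eq (by ring)))
          rw [mul_sub, mul_one, mul_sum, mul_sum]
          congr 1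
          refine sum_congr rfl fun j _ => ?_
          rw [← ind_mul]; ring
        have h4 : ex Ω p (fun H => ind (E a) H * Z H) = p ^ (E a).card * ex Ω p Z := by
          rw [ex_ind _ hEa]
          congr 1
          exact ex_congr fun H _ => hZE H
        have h5 : ∀ j ∈ J, ex Ω p (fun H => ind (E a ∪ E j) H * Z H) ≤ p ^ (E a ∪ E j).card * ex Ω p Z := by
          intro j hj
          rw [ex_ind _ (union_subset hEa (hE j (mem_insert_of_mem (mem_filter.mp hj).1)))]
          refine mul_le_mul_of_nonneg_left ?_ (by positivity)
          exact ex_mono hp0 hp1 fun H _ => hZanti _ _ subset_union_left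
        rw [ex_sub, ex_mul, ex_sum, h4] at h1
        have h6 := sum_le_sum h5
        rw [← sum_mul, ← hDa] at h6
        have h7 : ex Ω p F ≤ ex Ω p Z := ex_mono hp0 hp1 fun H _ => hFleZ H
        have h8 := mul_le_mul_of_nonneg_left h6 hq0
        have h9 := mul_le_mul_of_nonneg_left h7 hneg
        nlinarith
    have hstep : ex Ω p (fun H => ∏ i ∈ insert a I, (1 - q * ind (E i) H)) =
        ex Ω p F - q * ex Ω p (fun H => ind (E a) H * F H) := by
      rw [← ex_mul, ← ex_sub]
      refine ex_congr fun H _ => ?_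
      rw [prod_insert ha]; ring
    rw [hstep]
    have h10 : ex Ω p F - q * ex Ω p (fun H => ind (E a) H * F H) ≤
        (1 + (- q * p ^ (E a).card + q ^ 2 * Da)) * ex Ω p F := by
      have := mul_le_mul_of_nonneg_left key hq0
      nlinarith
    have h11 : 1 + (- q * p ^ (E a).card + q ^ 2 * Da) ≤
        Real.exp (- q * p ^ (E a).card + q ^ 2 * Da) := by
      have := Real.add_one_le_exp (- q * p ^ (E a).card + q ^ 2 * Da)
      linarith
    refine h10.trans ((mul_le_mul_of_nonneg_right h11 hexF).trans
      ((mul_le_mul_of_nonneg_left ih' (Real.exp_pos _).le).trans ?_))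
    rw [← Real.exp_add, sum_insert ha]
    apply Real.exp_le_exp.mpr
    refine add_le_add ?_ (sum_le_sum fun i _ => ?_)
    · gcongr
      refine sum_le_sum_of_subset_of_nonneg ?_ (fun _ _ _ => by positivity)
      exact filter_subset_filter _ (subset_insert _ _)
    · gcongr
      exact subset_insert _ _

/-- A Janson-type inequality in the form needed. -/
lemma janson {ι : Type*} (hp0 : 0 < p) (hp1 : p ≤ 1)
    (E : ι → Finset α) (I : Finset ι) (hE : ∀ i ∈ I, E i ⊆ Ω) (e : ℕ) (he : ∀ i ∈ I, (E i).card = e)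
    (he0 : 1 ≤ e)
    (T : ℝ) (hT : ∀ i ∈ I, ∑ j ∈ I with ¬ Disjoint (E i) (E j), (p ^ (E i ∩ E j).card)⁻¹ ≤ T) :
    ex Ω p (fun H => if ∀ i ∈ I, ¬ E i ⊆ H then 1 else 0) ≤ Real.exp (- (I.card / (4 * T))) := by
  rcases I.eq_empty_or_nonempty with rfl | ⟨i0, hi0⟩
  · simp [ex_one]
  have hne : ∀ i ∈ I, ¬ Disjoint (E i) (E i) := fun i hi h => by
    rw [disjoint_self_iff_empty] at h
    have := he i hi
    rw [h] at this; simp at this; omega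
  have hpe : 0 < p ^ e := by positivity
  have hT1 : 1 ≤ p ^ e * T := by
    have h1 : (p ^ (E i0 ∩ E i0).card)⁻¹ ≤ T := by
      refine le_trans ?_ (hT i0 hi0)
      exact single_le_sum (f := fun j => (p ^ (E i0 ∩ E j).card)⁻¹) (fun _ _ => by positivity)
        (mem_filter.mpr ⟨hi0, hne i0 hi0⟩)
    rw [inter_self, he i0 hi0] at h1
    have := mul_le_mul_of_nonneg_left h1 hpe.le
    rwa [mul_inv_cancel₀ hpe.ne'] at this
  have hTpos : 0 < T := by
    by_contra h
    push Not at h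
    nlinarith
  set q : ℝ := (2 * (p ^ e * T))⁻¹ with hq
  have hq0 : 0 ≤ q := by positivity
  have hq1 : q ≤ 1 := inv_le_one_of_one_le₀ (by linarith)
  have h1 : ex Ω p (fun H => if ∀ i ∈ I, ¬ E i ⊆ H then 1 else 0) ≤
      ex Ω p (fun H => ∏ i ∈ I, (1 - q * ind (E i) H)) := by
    refine ex_mono hp0.le hp1 fun H _ => ?_
    split_ifs with h
    · rw [prod_congr rfl (g := fun _ => (1 : ℝ))]
      · simp
      · intro i hi
        simp [ind, h i hi]
    · refine prod_nonneg fun i _ => ?_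
      have := ind_nonneg (E i) H
      have := ind_le_one (E i) H
      nlinarith
  refine h1.trans ((janson_aux hp0.le hp1 q hq0 hq1 E I hE).trans (Real.exp_le_exp.mpr ?_))
  have h2 : ∀ i ∈ I, (- q * p ^ (E i).card + q ^ 2 *
        ∑ j ∈ I with ¬ Disjoint (E i) (E j), p ^ (E i ∪ E j).card) ≤ - (1 / (4 * T)) := by
    intro i hi
    have h3 : ∑ j ∈ I with ¬ Disjoint (E i) (E j), p ^ (E i ∪ E j).card ≤ p ^ (2 * e) * T := by
      refine le_trans (le_of_eq ?_) (mul_le_mul_of_nonneg_left (hT i hi) (by positivity))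
      rw [mul_sum]
      refine sum_congr rfl fun j hj => ?_
      have h4 := card_union_add_card_inter (E i) (E j)
      rw [he i hi, he j (mem_filter.mp hj).1] at h4
      rw [eq_mul_inv_iff_mul_eq₀ (by positivity), ← pow_add, h4]
      ring_nf
    rw [he i hi]
    have h5 := mul_le_mul_of_nonneg_left h3 (sq_nonneg q)
    have h6 : - q * p ^ e + q ^ 2 * (p ^ (2 * e) * T) = - (1 / (4 * T)) := by
      rw [hq]
      have : p ^ (2 * e) = p ^ e * p ^ e := by rw [← pow_add]; ring_nf
      rw [this]
      field_simp
      ring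
    linarith
  refine (sum_le_sum h2).trans (le_of_eq ?_)
  rw [sum_const, nsmul_eq_mul]
  field_simp
end


lemma numeric (s : ℕ) (hs : 2 ≤ s) (C : ℝ) (hC : 1 ≤ C) :
    ∀ᶠ n : ℕ in Filter.atTop, ∀ p : ℝ, p = (C * (n : ℝ) ^ (-(2 : ℝ) / (s : ℝ)) *
              (Real.log n) ^ ((2 : ℝ) / ((s : ℝ) * ((s : ℝ) - 1)))) →
      0 < p ∧ p ≤ 1 ∧ (∀ d ≤ s, 1 ≤ (n : ℝ) ^ d * p ^ (d.choose 2)) ∧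
      (∀ d ≤ s, 2 ≤ d → C * (n * Real.log n) ≤ (n : ℝ) ^ d * p ^ (d.choose 2)) := by
  have hs' : (2 : ℝ) ≤ s := by exact_mod_cast hs
  have hs0 : (0 : ℝ) < s := by linarith
  have hcast := tendsto_natCast_atTop_atTop (R := ℝ)
  have hC0 : 0 < C := by linarith
  have h1 := (isLittleO_log_rpow_rpow_atTop ((2 : ℝ) / ((s : ℝ) * ((s : ℝ) - 1)))
    (show (0 : ℝ) < 2 / s by positivity)).bound (show 0 < C⁻¹ by positivity)
  have h2 := (isLittleO_log_rpow_atTop (show (0 : ℝ) < 1 / s by positivity)).bound one_pos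
  have h3 : ∀ᶠ x : ℝ in Filter.atTop, 1 ≤ Real.log x :=
    Real.tendsto_log_atTop.eventually_ge_atTop 1
  filter_upwards [hcast.eventually h1, hcast.eventually h2, hcast.eventually h3,
    Filter.eventually_ge_atTop 1] with n h1 h2 h3 hn p hp
  have hn1 : (1 : ℝ) ≤ n := by exact_mod_cast hn
  have hn0 : (0 : ℝ) < n := by linarith
  set L := Real.log n with hL
  have hL0 : 0 < L := by linarith
  have hp0 : 0 < p := by rw [hp]; positivity
  have hbig : ∀ d ≤ s, 2 ≤ d → C * (n * L) ≤ (n : ℝ) ^ d * p ^ (d.choose 2) := by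
    intro d hd hd2
    have hd2' : (2 : ℝ) ≤ d := by exact_mod_cast hd2
    have hds : (d : ℝ) ≤ s := by exact_mod_cast hd
    have hk : ((d.choose 2 : ℕ) : ℝ) = d * (d - 1) / 2 := Nat.cast_choose_two ℝ d
    have hk1 : 1 ≤ d.choose 2 := Nat.choose_pos hd2
    have e1 : (n : ℝ) ^ d * p ^ (d.choose 2) = C ^ (d.choose 2) *
        ((n : ℝ) ^ (1 + ((d : ℝ) - 1) * (s - d) / s) * L ^ (((d : ℝ) * (d - 1)) / (s * (s - 1)))) := by
      rw [hp, mul_pow, mul_pow, ← Real.rpow_natCast ((n : ℝ) ^ (-(2 : ℝ) / (s : ℝ))),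
        ← Real.rpow_natCast (L ^ _), ← Real.rpow_mul hn0.le, ← Real.rpow_mul hL0.le, hk]
      have a1 : (1 + ((d : ℝ) - 1) * (s - d) / s) = d + (-2 / s) * (d * (d - 1) / 2) := by
        field_simp
        ring
      have a2 : (((d : ℝ) * (d - 1)) / (s * (s - 1))) = (2 / (s * (s - 1))) * (d * (d - 1) / 2) := by
        ring
      rw [a1, a2, Real.rpow_add hn0, Real.rpow_natCast]
      ring
    have e2 : C ≤ C ^ (d.choose 2) := le_self_pow₀ hC (by omega)
    have e3 : n * L ≤ ((n : ℝ) ^ (1 + ((d : ℝ) - 1) * (s - d) / s) * L ^ (((d : ℝ) * (d - 1)) / (s * (s - 1)))) := by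
      rcases hd.eq_or_lt with rfl | hlt
      · have : (d : ℝ) * (d - 1) ≠ 0 := by
          have : (0 : ℝ) < d * (d - 1) := mul_pos (by linarith) (by linarith)
          exact this.ne'
        rw [div_self this]
        simp
      · have hlt' : (d : ℝ) + 1 ≤ s := by exact_mod_cast hlt
        have b1 : (n : ℝ) ^ (1 + 1 / (s : ℝ)) ≤ (n : ℝ) ^ (1 + ((d : ℝ) - 1) * (s - d) / s) := by
          apply Real.rpow_le_rpow_of_exponent_le hn1
          gcongr
          nlinarith
        have b2 : (1 : ℝ) ≤ L ^ (((d : ℝ) * (d - 1)) / (s * (s - 1))) := by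
          apply Real.one_le_rpow h3
          have : (0 : ℝ) ≤ s - 1 := by linarith
          have : (0 : ℝ) ≤ d - 1 := by linarith
          positivity
        have b3 : L ≤ (n : ℝ) ^ (1 / (s : ℝ)) := by
          rw [one_mul, Real.norm_of_nonneg hL0.le, Real.norm_of_nonneg (by positivity)] at h2
          exact h2
        calc n * L ≤ n * (n : ℝ) ^ (1 / (s : ℝ)) := by gcongr
          _ = (n : ℝ) ^ (1 + 1 / (s : ℝ)) := by rw [Real.rpow_add hn0, Real.rpow_one]
          _ ≤ _ := b1
          _ ≤ _ := le_mul_of_one_le_right (by positivity) b2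
    rw [e1]
    gcongr
  refine ⟨hp0, ?_, ?_, hbig⟩
  · rw [Real.norm_of_nonneg (by positivity), Real.norm_of_nonneg (by positivity)] at h1
    rw [hp]
    have : (n : ℝ) ^ (-(2 : ℝ) / (s : ℝ)) = ((n : ℝ) ^ ((2 : ℝ) / (s : ℝ)))⁻¹ := by
      rw [← Real.rpow_neg hn0.le]; congr 1; ring
    rw [this]
    have hpos : 0 < (n : ℝ) ^ ((2 : ℝ) / (s : ℝ)) := by positivity
    calc _ ≤ C * ((n : ℝ) ^ ((2 : ℝ) / (s : ℝ)))⁻¹ * (C⁻¹ * (n : ℝ) ^ ((2 : ℝ) / (s : ℝ))) := by gcongr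
      _ = 1 := by field_simp
  · intro d hd
    rcases Nat.lt_or_ge d 2 with h | h
    · interval_cases d
      · simp
      · simpa using hn1
    · refine le_trans ?_ (hbig d hd h)
      have : 1 ≤ n * L := by nlinarith
      nlinarith

/-- union bound sum -/
lemma union_sum (δ : ℝ) (hδ : 0 < δ) : ∀ᶠ n : ℕ in Filter.atTop,
    ∑ S : Finset (Fin n) with S.Nonempty, ∑ Y : Finset (Fin n),
      ((n : ℝ) ^ 2)⁻¹ ^ S.card * ((n : ℝ) ^ 2)⁻¹ ^ Y.card ≤ δ := by
  have h1 : Filter.Tendsto (fun n : ℕ => (Real.exp ((n : ℝ)⁻¹) - 1) * Real.exp ((n : ℝ)⁻¹)) Filter.atTop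
      (nhds ((Real.exp 0 - 1) * Real.exp 0)) := by
    have h2 : Filter.Tendsto (fun n : ℕ => Real.exp ((n : ℝ)⁻¹)) Filter.atTop (nhds (Real.exp 0)) :=
      (Real.continuous_exp.tendsto 0).comp tendsto_inv_atTop_nhds_zero_nat
    exact (h2.sub_const 1).mul h2
  have h3 := h1.eventually (gt_mem_nhds (show (Real.exp 0 - 1) * Real.exp 0 < δ by simpa using hδ))
  filter_upwards [h3, Filter.eventually_ge_atTop 1] with n h3 hn
  have hn0 : (0 : ℝ) < n := by exact_mod_cast hn
  set a : ℝ := ((n : ℝ) ^ 2)⁻¹ with ha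
  have ha0 : 0 < a := by positivity
  have htot : ∑ Y : Finset (Fin n), a ^ Y.card = (1 + a) ^ n := by
    have := Fintype.sum_pow_mul_eq_add_pow (Fin n) a 1
    simp only [one_pow, mul_one, Fintype.card_fin] at this
    rw [this, add_comm]
  have htot2 : ∑ S : Finset (Fin n) with S.Nonempty, a ^ S.card = (1 + a) ^ n - 1 := by
    rw [← htot, ← sum_filter_add_sum_filter_not univ (fun S : Finset (Fin n) => S.Nonempty)]
    have : (univ.filter (fun S : Finset (Fin n) => ¬ S.Nonempty)) = {∅} := by
      ext S; simp [not_nonempty_iff_eq_empty]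
    rw [this]; simp
  have hle : (1 + a) ^ n ≤ Real.exp ((n : ℝ)⁻¹) := by
    have : 1 + a ≤ Real.exp a := by linarith [Real.add_one_le_exp a]
    calc (1 + a) ^ n ≤ Real.exp a ^ n := by gcongr
      _ = Real.exp ((n : ℝ)⁻¹) := by
        rw [← Real.exp_nat_mul]; congr 1; rw [ha]; field_simp
  have hge : 1 ≤ (1 + a) ^ n := one_le_pow₀ (by linarith)
  simp_rw [← mul_sum, ← sum_mul]
  rw [htot, htot2]
  refine le_trans ?_ h3.le
  have := Real.exp_pos ((n : ℝ)⁻¹)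
  apply mul_le_mul <;> linarith


/-- pairs inside a set -/
def prs {V : Type*} [DecidableEq V] (U : Finset V) : Finset (Sym2 V) := U.offDiag.image Sym2.mk.uncurry

lemma card_prs {V : Type*} [DecidableEq V] (U : Finset V) : (prs U).card = U.card.choose 2 :=
  Sym2.card_image_offDiag U

lemma mem_prs {V : Type*} [DecidableEq V] (U : Finset V) (x y : V) :
    s(x, y) ∈ prs U ↔ x ∈ U ∧ y ∈ U ∧ x ≠ y := by
  unfold prs
  simp only [mem_image, mem_offDiag, Prod.exists, Function.uncurry_apply_pair, Sym2.eq_iff]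
  constructor
  · rintro ⟨a, b, ⟨h1, h2, h3⟩, ⟨rfl, rfl⟩ | ⟨rfl, rfl⟩⟩
    · exact ⟨h1, h2, h3⟩
    · exact ⟨h2, h1, h3.symm⟩
  · rintro ⟨h1, h2, h3⟩
    exact ⟨x, y, ⟨h1, h2, h3⟩, Or.inl ⟨rfl, rfl⟩⟩

/-- the vertices of a family of classes -/
def Vs {V κ : Type*} [DecidableEq V] [Fintype κ] (c : κ → Finset V) : Finset V := univ.biUnion c
/-- the pairs inside the classes -/
def Es {V κ : Type*} [DecidableEq V] [Fintype κ] (c : κ → Finset V) : Finset (Sym2 V) :=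
  univ.biUnion fun a => prs (c a)

lemma card_Es {V κ : Type*} [DecidableEq V] [Fintype κ] (c : κ → Finset V)
    (hc : ∀ a b, a ≠ b → Disjoint (c a) (c b)) :
    (Es c).card = ∑ a, (c a).card.choose 2 := by
  unfold Es
  rw [card_biUnion]
  · simp [card_prs]
  · intro a _ b _ hab
    rw [Function.onFun, disjoint_left]
    intro e
    induction e using Sym2.ind with
    | _ x y =>
    rw [mem_prs, mem_prs]
    intro h1 h2
    exact disjoint_left.mp (hc a b hab) h1.1 h2.1

lemma overlap {V κ : Type*} [DecidableEq V] [Fintype κ] [DecidableEq κ] (c c' : κ → Finset V) (s : ℕ)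
    (hc : ∀ a b, a ≠ b → Disjoint (c a) (c b)) (hc' : ∀ a b, a ≠ b → Disjoint (c' a) (c' b))
    (hcs : ∀ a, (c a).card ≤ s) (n p R : ℝ) (hp0 : 0 < p) (hp1 : p ≤ 1) (hn : 0 < n)
    (h1 : ∀ d ≤ s, 1 ≤ n ^ d * p ^ (d.choose 2))
    (h2 : ∀ d ≤ s, 2 ≤ d → R ≤ n ^ d * p ^ (d.choose 2))
    (hne : ¬ Disjoint (Es c) (Es c')) :
    R ≤ n ^ (Vs c ∩ Vs c').card * p ^ (Es c ∩ Es c').card := by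
  have hV : (Vs c ∩ Vs c').card = ∑ ab : κ × κ, (c ab.1 ∩ c' ab.2).card := by
    have : Vs c ∩ Vs c' = (univ : Finset (κ × κ)).biUnion (fun ab => c ab.1 ∩ c' ab.2) := by
      ext x
      simp [Vs]
    rw [this, card_biUnion]
    intro a _ b _ hab
    by_cases h : a.1 = b.1
    · have h' : a.2 ≠ b.2 := fun h' => hab (Prod.ext h h')
      exact (hc' _ _ h').mono inter_subset_right inter_subset_right
    · exact (hc _ _ h).mono inter_subset_left inter_subset_left
  have hE : (Es c ∩ Es c').card ≤ ∑ ab : κ × κ, (c ab.1 ∩ c' ab.2).card.choose 2 := by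
    have : Es c ∩ Es c' ⊆ (univ : Finset (κ × κ)).biUnion (fun ab => prs (c ab.1 ∩ c' ab.2)) := by
      intro e
      induction e using Sym2.ind with
      | _ x y =>
      simp only [Es, mem_inter, mem_biUnion, mem_prs, mem_univ, true_and, Prod.exists]
      rintro ⟨⟨a, ha⟩, b, hb⟩
      exact ⟨a, b, ⟨ha.1, hb.1⟩, ⟨ha.2.1, hb.2.1⟩, ha.2.2⟩
    refine (card_le_card this).trans (card_biUnion_le.trans (le_of_eq ?_))
    simp [card_prs]
  obtain ⟨ab, hab⟩ : ∃ ab : κ × κ, 2 ≤ (c ab.1 ∩ c' ab.2).card := by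
    rw [not_disjoint_iff] at hne
    obtain ⟨e, he⟩ := hne
    induction e using Sym2.ind with
    | _ x y =>
    simp only [Es, mem_biUnion, mem_prs, mem_univ, true_and] at he
    obtain ⟨⟨a, ha⟩, b, hb⟩ := he
    refine ⟨(a, b), ?_⟩
    have := one_lt_card.mpr ⟨x, mem_inter.mpr ⟨ha.1, hb.1⟩, y, mem_inter.mpr ⟨ha.2.1, hb.2.1⟩, ha.2.2⟩
    exact this
  have hds : ∀ ab : κ × κ, (c ab.1 ∩ c' ab.2).card ≤ s := fun ab =>
    (card_le_card inter_subset_left).trans (hcs _)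
  calc R ≤ n ^ (c ab.1 ∩ c' ab.2).card * p ^ ((c ab.1 ∩ c' ab.2).card.choose 2) := h2 _ (hds _) hab
    _ ≤ ∏ ab : κ × κ, (n ^ (c ab.1 ∩ c' ab.2).card * p ^ ((c ab.1 ∩ c' ab.2).card.choose 2)) := by
      rw [← mul_prod_erase univ _ (mem_univ ab)]
      refine le_mul_of_one_le_right (by positivity) ?_
      rw [← prod_const_one (s := univ.erase ab)]
      exact prod_le_prod (fun _ _ => zero_le_one) fun ab _ => h1 _ (hds _)
    _ = n ^ (Vs c ∩ Vs c').card * p ^ (∑ ab : κ × κ, (c ab.1 ∩ c' ab.2).card.choose 2) := by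
      rw [prod_mul_distrib, prod_pow_eq_pow_sum, prod_pow_eq_pow_sum, hV]
    _ ≤ _ := by
      gcongr ?_ * ?_
      exact pow_le_pow_of_le_one hp0.le hp1 hE

lemma count_sets {n : ℕ} (r d : ℕ) (V0 : Finset (Fin n)) (hV0 : V0.card ≤ r)
    (F : Finset (Finset (Fin n))) (hF : ∀ V ∈ F, V.card = r ∧ (V0 ∩ V).card = d) :
    F.card ≤ 2 ^ r * n ^ (r - d) := by
  have h1 : F.card ≤ (V0.powerset ×ˢ powersetCard (r - d) (univ : Finset (Fin n))).card := by
    refine card_le_card_of_injOn (fun V => (V0 ∩ V, V \ V0)) ?_ ?_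
    · intro V hV
      have := hF V hV
      simp only [coe_product, Set.mem_prod, mem_coe, mem_powerset, mem_powersetCard]
      refine ⟨inter_subset_left, subset_univ _, ?_⟩
      rw [card_sdiff, this.1, this.2]
    · intro V _ V' _ h
      simp only [Prod.mk.injEq] at h
      rw [← sdiff_union_inter V V0, ← sdiff_union_inter V' V0, h.2, inter_comm V, inter_comm V', h.1]
  refine h1.trans ?_
  rw [card_product, card_powerset, card_powersetCard, card_univ, Fintype.card_fin]
  exact Nat.mul_le_mul (Nat.pow_le_pow_right (by norm_num) hV0) (Nat.choose_le_pow _ _)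

lemma count_fib {n : ℕ} {κ : Type*} [Fintype κ] [DecidableEq κ] (r d : ℕ) (V0 : Finset (Fin n)) (hV0 : V0.card ≤ r)
    (I : Finset (Fin n × (κ → Finset (Fin n))))
    (hI : ∀ j ∈ I, j.1 ∈ Vs j.2 ∧ (Vs j.2).card = r ∧ (V0 ∩ Vs j.2).card = d) :
    I.card ≤ (r * (2 ^ r) ^ Fintype.card κ) * (2 ^ r * n ^ (r - d)) := by
  refine (card_le_mul_card_image (f := fun j => Vs j.2) I (r * (2 ^ r) ^ Fintype.card κ) ?_).trans
    (Nat.mul_le_mul_left _ (count_sets r d V0 hV0 _ ?_))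
  · intro V hV
    obtain ⟨j0, hj0, rfl⟩ := mem_image.mp hV
    have : I.filter (fun j => Vs j.2 = Vs j0.2) ⊆
        (Vs j0.2) ×ˢ Fintype.piFinset (fun _ : κ => (Vs j0.2).powerset) := by
      intro j hj
      obtain ⟨hj1, hj2⟩ := mem_filter.mp hj
      rw [mem_product, Fintype.mem_piFinset, ← hj2]
      refine ⟨(hI j hj1).1, fun a => ?_⟩
      rw [mem_powerset]
      exact subset_biUnion_of_mem j.2 (mem_univ a)
    refine (card_le_card this).trans (le_of_eq ?_)
    rw [card_product, Fintype.card_piFinset, prod_const, card_univ, card_powerset, (hI j0 hj0).2.1]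
  · intro V hV
    obtain ⟨j0, hj0, rfl⟩ := mem_image.mp hV
    exact (hI j0 hj0).2

lemma sum_bound {n : ℕ} {κ : Type*} [Fintype κ] [DecidableEq κ] (r : ℕ) (V0 : Finset (Fin n)) (hV0 : V0.card ≤ r)
    (I : Finset (Fin n × (κ → Finset (Fin n))))
    (hI : ∀ j ∈ I, j.1 ∈ Vs j.2 ∧ (Vs j.2).card = r) :
    ∑ j ∈ I, (n : ℝ) ^ (V0 ∩ Vs j.2).card ≤
      (r + 1 : ℝ) * (r * (2 ^ r) ^ Fintype.card κ * 2 ^ r) * (n : ℝ) ^ r := by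
  have hmaps : ∀ j ∈ I, (V0 ∩ Vs j.2).card ∈ range (r + 1) := fun j _ => by
    have := (card_le_card (inter_subset_left : V0 ∩ Vs j.2 ⊆ V0))
    rw [mem_range]; omega
  rw [← sum_fiberwise_of_maps_to hmaps]
  have : ∀ d ∈ range (r + 1), ∑ j ∈ I with (V0 ∩ Vs j.2).card = d, (n : ℝ) ^ (V0 ∩ Vs j.2).card ≤
      (r * (2 ^ r) ^ Fintype.card κ * 2 ^ r) * (n : ℝ) ^ r := by
    intro d hd
    have hd' : d ≤ r := by rw [mem_range] at hd; omega
    have h1 := count_fib r d V0 hV0 (I.filter (fun j => (V0 ∩ Vs j.2).card = d)) (by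
      intro j hj
      have hj' := mem_filter.mp hj
      exact ⟨(hI j hj'.1).1, (hI j hj'.1).2, hj'.2⟩)
    have h2 : ((I.filter (fun j => (V0 ∩ Vs j.2).card = d)).card : ℝ) ≤
      (r * (2 ^ r) ^ Fintype.card κ) * (2 ^ r * n ^ (r - d)) := by exact_mod_cast h1
    calc ∑ j ∈ I with (V0 ∩ Vs j.2).card = d, (n : ℝ) ^ (V0 ∩ Vs j.2).card
        = ∑ j ∈ I with (V0 ∩ Vs j.2).card = d, (n : ℝ) ^ d :=
          sum_congr rfl fun j hj => by rw [(mem_filter.mp hj).2]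
      _ = (I.filter (fun j => (V0 ∩ Vs j.2).card = d)).card * (n : ℝ) ^ d := by
          rw [sum_const, nsmul_eq_mul]
      _ ≤ ((r * (2 ^ r) ^ Fintype.card κ) * (2 ^ r * n ^ (r - d))) * (n : ℝ) ^ d := by gcongr
      _ = _ := by
          have : (n : ℝ) ^ r = (n : ℝ) ^ (r - d) * (n : ℝ) ^ d := by rw [← pow_add]; congr 1; omega
          rw [this]; ring
  refine (sum_le_sum this).trans (le_of_eq ?_)
  rw [sum_const, card_range, nsmul_eq_mul]
  push_cast
  ring


/-- `c` is a copy of `B_{m,s,t}` in `G` with `x` in the last class, avoiding `Z` except possibly at `x`. -/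
def VB {n : ℕ} (G : SimpleGraph (Fin n)) (m s t : ℕ) (Z : Finset (Fin n)) (x : Fin n)
    (c : Option (Fin m) → Finset (Fin n)) : Prop :=
  IsBCopy G m s t (fun i => c (some i)) (c none) ∧ x ∈ c none ∧ ∀ o, Disjoint (c o) (Z.erase x)

section
variable {n : ℕ} {G : SimpleGraph (Fin n)} {m s t : ℕ} {Z : Finset (Fin n)} {x : Fin n}
  {c : Option (Fin m) → Finset (Fin n)}

lemma VB.disj (h : VB G m s t Z x c) : ∀ a b, a ≠ b → Disjoint (c a) (c b) := by
  obtain ⟨⟨h1, h2, h3, h4, h5, h6⟩, -, -⟩ := h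
  intro a b hab
  cases a with
  | none =>
    cases b with
    | none => exact absurd rfl hab
    | some b => exact (h4 b).symm
  | some a =>
    cases b with
    | none => exact h4 a
    | some b => exact h3 (fun h => hab (congrArg some h))

lemma VB.card_le (h : VB G m s t Z x c) (hts : t ≤ s) (a) : (c a).card ≤ s := by
  obtain ⟨⟨h1, h2, h3, h4, h5, h6⟩, -, -⟩ := h
  cases a with
  | none => exact h2.trans_le hts
  | some a => exact (h1 a).le

lemma VB.card_Vs (h : VB G m s t Z x c) : (Vs c).card = m * s + t := by
  unfold Vs
  rw [card_biUnion (fun a _ b _ hab => h.disj a b hab), Fintype.sum_option]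
  obtain ⟨⟨h1, h2, h3, h4, h5, h6⟩, -, -⟩ := h
  simp [h1, h2, add_comm]

lemma VB.card_Es (h : VB G m s t Z x c) : (Es c).card = m * s.choose 2 + t.choose 2 := by
  rw [_root_.card_Es c h.disj, Fintype.sum_option]
  obtain ⟨⟨h1, h2, h3, h4, h5, h6⟩, -, -⟩ := h
  simp [h1, h2, add_comm]

lemma VB.mem_Vs (h : VB G m s t Z x c) : x ∈ Vs c :=
  mem_biUnion.mpr ⟨none, mem_univ _, h.2.1⟩

lemma VB.avoid (h : VB G m s t Z x c) : Disjoint (Vs c) (Z.erase x) := by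
  unfold Vs
  rw [disjoint_biUnion_left]
  exact fun o _ => h.2.2 o

lemma Es_sub (c : Option (Fin m) → Finset (Fin n)) : Es c ⊆ prs univ := by
  intro e
  induction e using Sym2.ind with
  | _ x y =>
  simp only [Es, mem_biUnion, mem_prs, mem_univ, true_and]
  rintro ⟨a, ha⟩
  exact ha.2.2
end

/-- no copy attached to `S` and avoiding `Z` has all its inner pairs in `F` -/
def NoCopy {n : ℕ} (G : SimpleGraph (Fin n)) (m s t : ℕ) (S Z : Finset (Fin n))
    (F : Finset (Sym2 (Fin n))) : Prop :=
  ∀ x ∈ S, ∀ c, VB G m s t Z x c → ¬ Es c ⊆ F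

lemma bad_bound {n : ℕ} (G : SimpleGraph (Fin n)) (m s t : ℕ) (hm : 1 ≤ m) (hs : 2 ≤ s) (hts : t ≤ s)
    (S Z : Finset (Fin n)) (p R ν : ℝ) (hp0 : 0 < p) (hp1 : p ≤ 1) (hn : 0 < n) (hR : 0 < R)
    (h1 : ∀ d ≤ s, 1 ≤ (n : ℝ) ^ d * p ^ (d.choose 2))
    (h2 : ∀ d ≤ s, 2 ≤ d → R ≤ (n : ℝ) ^ d * p ^ (d.choose 2))
    (hcount : ∀ x ∈ S, ν * (n : ℝ) ^ (m * s + t - 1) ≤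
      (Nat.card {q : (Fin m → Finset (Fin n)) × Finset (Fin n) //
                IsBCopy G m s t q.1 q.2 ∧ x ∈ q.2 ∧
                (∀ i, Disjoint (q.1 i) (Z.erase x)) ∧ Disjoint q.2 (Z.erase x)} : ℝ))
    (K : ℝ) (hK : K = ((m * s + t : ℕ) + 1 : ℝ) *
      ((m * s + t : ℕ) * (2 ^ (m * s + t)) ^ (m + 1) * 2 ^ (m * s + t))) (hK0 : 0 < K) :
    ex (prs (univ : Finset (Fin n))) p
      (fun H => if NoCopy G m s t S Z H then 1 else 0) ≤
      Real.exp (- (S.card * (ν * (n : ℝ) ^ (m * s + t - 1)) / (4 * (K * (n : ℝ) ^ (m * s + t) / R)))) := by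
  obtain ⟨I, hI⟩ : ∃ I : Finset (Fin n × (Option (Fin m) → Finset (Fin n))),
      ∀ j, j ∈ I ↔ (j.1 ∈ S ∧ VB G m s t Z j.1 j.2) :=
    ⟨univ.filter (fun j => j.1 ∈ S ∧ VB G m s t Z j.1 j.2), fun j => by simp⟩
  have hmem : ∀ j ∈ I, VB G m s t Z j.1 j.2 := fun j hj => ((hI j).mp hj).2
  have hcardI : S.card * (ν * (n : ℝ) ^ (m * s + t - 1)) ≤ I.card := by
    have hf : I.card = ∑ x ∈ S, (I.filter (fun j => j.1 = x)).card :=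
      card_eq_sum_card_fiberwise (fun j hj => ((hI j).mp hj).1)
    rw [hf]
    push_cast
    rw [← nsmul_eq_mul]
    refine card_nsmul_le_sum _ _ _ fun x hx => (hcount x hx).trans ?_
    rw [Nat.card_eq_fintype_card, Fintype.card_subtype]
    norm_cast
    refine card_le_card_of_injOn (fun q => (x, fun o => o.elim q.2 q.1)) ?_ ?_
    · intro q hq
      simp only [coe_filter, mem_univ, true_and, Set.mem_ofPred_eq] at hq
      simp only [hI, coe_filter, mem_univ, true_and, Set.mem_ofPred_eq, and_true]
      refine ⟨hx, hq.1, hq.2.1, ?_⟩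
      intro o
      cases o with
      | none => exact hq.2.2.2
      | some i => exact hq.2.2.1 i
    · intro q _ q' _ h
      simp only [Prod.mk.injEq, true_and] at h
      refine Prod.ext (funext fun i => ?_) ?_
      · exact congrFun h (some i)
      · exact congrFun h none
  have hn' : (0 : ℝ) < n := by exact_mod_cast hn
  have he0 : 1 ≤ m * s.choose 2 + t.choose 2 := by
    have h3 : 1 ≤ s.choose 2 := Nat.choose_pos hs
    have h4 : 1 * 1 ≤ m * s.choose 2 := Nat.mul_le_mul hm h3
    omega
  have hTb : ∀ i ∈ I, ∑ j ∈ I with ¬ Disjoint (Es i.2) (Es j.2), (p ^ (Es i.2 ∩ Es j.2).card)⁻¹ ≤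
      K * (n : ℝ) ^ (m * s + t) / R := by
    intro i hi
    have hb := sum_bound (m * s + t) (Vs i.2) (hmem i hi).card_Vs.le I
      (fun j hj => ⟨(hmem j hj).mem_Vs, (hmem j hj).card_Vs⟩)
    rw [Fintype.card_option, Fintype.card_fin, ← hK] at hb
    rw [le_div_iff₀ hR]
    refine le_trans ?_ hb
    have hpt : ∀ j ∈ I, ¬ Disjoint (Es i.2) (Es j.2) →
        (p ^ (Es i.2 ∩ Es j.2).card)⁻¹ * R ≤ (n : ℝ) ^ (Vs i.2 ∩ Vs j.2).card := by
      intro j hjI hjd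
      have := overlap i.2 j.2 s (hmem i hi).disj (hmem j hjI).disj ((hmem i hi).card_le hts) n p R
        hp0 hp1 hn' h1 h2 hjd
      rw [inv_mul_le_iff₀ (pow_pos hp0 _), mul_comm]
      exact this
    rw [sum_filter, sum_mul]
    refine sum_le_sum fun j hj => ?_
    by_cases hjd : Disjoint (Es i.2) (Es j.2)
    · rw [if_neg (not_not.mpr hjd), zero_mul]
      exact pow_nonneg hn'.le _
    · rw [if_pos hjd]
      exact hpt j hj hjd
  have hT := janson (Ω := prs (univ : Finset (Fin n)))
    (ι := Fin n × (Option (Fin m) → Finset (Fin n))) hp0 hp1 (fun j => Es j.2) I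
    (fun j _ => Es_sub j.2) (m * s.choose 2 + t.choose 2) (fun j hj => (hmem j hj).card_Es)
    he0 (K * (n : ℝ) ^ (m * s + t) / R) (fun i hi => by
      refine le_trans (le_of_eq ?_) (hTb i hi)
      congr!)
  refine le_trans (ex_mono hp0.le hp1 fun H _ => ?_) (hT.trans (Real.exp_le_exp.mpr (neg_le_neg ?_)))
  · by_cases h : NoCopy G m s t S Z H
    · have h' : ∀ j ∈ I, ¬ Es j.2 ⊆ H := fun j hj =>
        h j.1 ((hI j).mp hj).1 j.2 ((hI j).mp hj).2
      rw [if_pos h, if_pos h']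
    · rw [if_neg h]
      split_ifs <;> norm_num
  · exact div_le_div_of_nonneg_right hcardI (by positivity)

lemma Pr_eq (n : ℕ) (p : ℝ) (P : SimpleGraph (Fin n) → Prop) :
    Pr n p P = ex (prs (univ : Finset (Fin n))) p
      (fun H => if P (SimpleGraph.fromEdgeSet (H : Set (Sym2 (Fin n)))) then 1 else 0) := by
  unfold Pr ex
  have hdiag : ∀ H ⊆ prs (univ : Finset (Fin n)), ∀ e ∈ H, ¬ e.IsDiag := by
    intro H hH e he
    have := hH he
    induction e using Sym2.ind with
    | _ x y =>
    rw [mem_prs] at this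
    simpa using this.2.2
  have hedge : ∀ H ⊆ prs (univ : Finset (Fin n)),
      (SimpleGraph.fromEdgeSet (H : Set (Sym2 (Fin n)))).edgeSet = H := by
    intro H hH
    rw [SimpleGraph.edgeSet_fromEdgeSet]
    ext e
    constructor
    · exact fun h => h.1
    · exact fun h => ⟨h, fun h' => hdiag H hH e h (by simpa using h')⟩
  have hsub : ∀ H : SimpleGraph (Fin n), H.edgeFinset ⊆ prs univ := by
    intro H e he
    induction e using Sym2.ind with
    | _ x y =>
    rw [mem_prs]
    rw [SimpleGraph.mem_edgeFinset, SimpleGraph.mem_edgeSet] at he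
    exact ⟨mem_univ _, mem_univ _, he.ne⟩
  refine sum_bij' (fun H _ => H.edgeFinset) (fun F _ => SimpleGraph.fromEdgeSet (F : Set (Sym2 (Fin n))))
    ?_ ?_ ?_ ?_ ?_
  · intro H _
    exact mem_powerset.mpr (hsub H)
  · intro F _
    exact mem_univ _
  · intro H _
    simp
  · intro F hF
    rw [mem_powerset] at hF
    apply Finset.coe_injective
    rw [SimpleGraph.coe_edgeFinset]
    exact hedge F hF
  · intro H _
    have hc : edgeCount H = H.edgeFinset.card := by
      unfold edgeCount
      rw [Nat.card_eq_fintype_card, SimpleGraph.edgeFinset_card]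
    dsimp only
    rw [SimpleGraph.coe_edgeFinset, SimpleGraph.fromEdgeSet_edgeSet, card_prs, hc, card_univ, Fintype.card_fin]
    split_ifs <;> simp

/-- The deterministic part: if no bad event occurs then the cliques exist. -/
lemma deterministic {n : ℕ} (G : SimpleGraph (Fin n)) (m s t : ℕ) (hm : 1 ≤ m) (hs : 2 ≤ s)
    (X : Finset (Fin n)) (F : Finset (Sym2 (Fin n)))
    (hgood : ∀ S ⊆ X, S.Nonempty → ∀ Y : Finset (Fin n),
      Y.card ≤ (2 * (m * s + t - 1) - 1) * (S.card - 1) →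
      ∃ x ∈ S, ∃ c, VB G m s t (X ∪ Y) x c ∧ Es c ⊆ F) :
    ∃ K : Fin n → Finset (Fin n),
      (∀ x ∈ X, (G ⊔ SimpleGraph.fromEdgeSet (F : Set (Sym2 (Fin n)))).IsNClique (m * s + t) (K x) ∧
        ∃ (A : Fin m → Finset (Fin n)) (B : Finset (Fin n)),
          IsBCopy G m s t A B ∧ x ∈ B ∧ K x = B ∪ Finset.univ.biUnion A) ∧
      (∀ x ∈ X, ∀ y ∈ X, x ≠ y → Disjoint (K x) (K y)) := by
  have hr : 2 ≤ m * s + t := by nlinarith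
  obtain ⟨f, hf1, hf2⟩ := haxell X
    (fun x e => ∃ c, VB G m s t X x c ∧ Es c ⊆ F ∧ e = (Vs c).erase x) (m * s + t - 1) (by omega)
    (by
      rintro x e ⟨c, hc, -, rfl⟩
      rw [card_erase_of_mem hc.mem_Vs, hc.card_Vs])
    (by
      intro S hS hSne Y hY
      obtain ⟨x, hx, c, hc, hcF⟩ := hgood S hS hSne Y hY
      refine ⟨x, hx, (Vs c).erase x, ⟨c, ⟨hc.1, hc.2.1, fun o => ?_⟩, hcF, rfl⟩, ?_⟩
      · exact (hc.2.2 o).mono_right (erase_subset_erase _ subset_union_left)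
      · rw [disjoint_left]
        intro z hz hzY
        rw [mem_erase] at hz
        exact disjoint_left.mp hc.avoid hz.2 (mem_erase.mpr ⟨hz.1, mem_union_right _ hzY⟩))
  choose! c hc1 hc2 hc3 using hf1
  refine ⟨fun x => Vs (c x), ?_, ?_⟩
  · intro x hx
    have hv := hc1 x hx
    refine ⟨⟨?_, hv.card_Vs⟩, fun i => c x (some i), c x none, hv.1, hv.2.1, ?_⟩
    · intro u hu v hv' huv
      obtain ⟨a, -, ha⟩ := mem_biUnion.mp (mem_coe.mp hu)
      obtain ⟨b, -, hb⟩ := mem_biUnion.mp (mem_coe.mp hv')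
      rw [SimpleGraph.sup_adj]
      by_cases hab : a = b
      · subst hab
        right
        rw [SimpleGraph.fromEdgeSet_adj]
        refine ⟨hc2 x hx ?_, huv⟩
        exact mem_biUnion.mpr ⟨a, mem_univ _, (mem_prs _ _ _).mpr ⟨ha, hb, huv⟩⟩
      · left
        obtain ⟨h1, h2, h3, h4, h5, h6⟩ := hv.1
        cases a with
        | none =>
          cases b with
          | none => exact absurd rfl hab
          | some b => exact (h6 b v hb u ha).symm
        | some a =>
          cases b with
          | none => exact h6 a u ha v hb
          | some b => exact h5 a b (fun h => hab (congrArg some h)) u ha v hb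
    · ext z
      simp [Vs, Option.exists]
  · intro x hx y hy hxy
    rw [disjoint_left]
    intro z hzx hzy
    have h1 := disjoint_left.mp (hc1 x hx).avoid hzx
    have h2 := disjoint_left.mp (hc1 y hy).avoid hzy
    rw [mem_erase] at h1 h2
    have hzx' : z ≠ x := by
      rintro rfl
      exact h2 ⟨hxy, hx⟩
    have hzy' : z ≠ y := by
      rintro rfl
      exact h1 ⟨hxy.symm, hy⟩
    have h3 := hf2 x hx y hy hxy
    rw [hc3 x hx, hc3 y hy] at h3
    exact disjoint_left.mp h3 (mem_erase.mpr ⟨hzx', hzx⟩) (mem_erase.mpr ⟨hzy', hzy⟩)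

set_option maxHeartbeats 1000000 in
/-- Lemma 6.1: covering a small vertex set `X` by vertex-disjoint `K_r`-copies,
each built on a `B_{m,s,t}`-copy of the deterministic graph containing the corresponding
vertex of `X` in the class of size `t`. -/
theorem statement8 (m s t : ℕ) (hm : 1 ≤ m) (hs : 2 ≤ s) (ht : 1 ≤ t) (hts : t ≤ s)
    (ε ν : ℝ) (hε0 : 0 < ε) (hε1 : ε < 1 / 2) (hν0 : 0 < ν) (hν1 : ν < 1 / 2) :
    ∃ C : ℝ, 0 < C ∧
      ∀ δ : ℝ, 0 < δ → ∃ n₀ : ℕ, ∀ n : ℕ, n₀ ≤ n →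
        ∀ G : SimpleGraph (Fin n), ∀ X : Finset (Fin n), (X.card : ℝ) ≤ ε * n →
          (∀ x ∈ X, ∀ Y : Finset (Fin n), x ∉ Y →
            (Y.card : ℝ) ≤ 2 * (m * s + t : ℝ) * ε * n →
            ν * (n : ℝ) ^ (m * s + t - 1) ≤
              (Nat.card {q : (Fin m → Finset (Fin n)) × Finset (Fin n) //
                IsBCopy G m s t q.1 q.2 ∧ x ∈ q.2 ∧
                (∀ i, Disjoint (q.1 i) Y) ∧ Disjoint q.2 Y} : ℝ)) →
          1 - δ ≤ Pr n (C * (n : ℝ) ^ (-(2 : ℝ) / (s : ℝ)) *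
              (Real.log n) ^ ((2 : ℝ) / ((s : ℝ) * ((s : ℝ) - 1))))
            (fun H => ∃ K : Fin n → Finset (Fin n),
              (∀ x ∈ X, (G ⊔ H).IsNClique (m * s + t) (K x) ∧
                ∃ (A : Fin m → Finset (Fin n)) (B : Finset (Fin n)),
                  IsBCopy G m s t A B ∧ x ∈ B ∧ K x = B ∪ Finset.univ.biUnion A) ∧
              (∀ x ∈ X, ∀ y ∈ X, x ≠ y → Disjoint (K x) (K y))) := by
  set r := m * s + t with hr
  have hr1 : 1 ≤ r := by nlinarith
  have hr1' : (1 : ℝ) ≤ r := by exact_mod_cast hr1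
  set K : ℝ := ((r : ℕ) + 1 : ℝ) * ((r : ℕ) * (2 ^ r) ^ (m + 1) * 2 ^ r) with hK
  have hK0 : 0 < K := by positivity
  refine ⟨40 * r * K / ν + 1, by positivity, ?_⟩
  set C : ℝ := 40 * r * K / ν + 1 with hC
  have hC1 : 1 ≤ C := by rw [hC]; have : 0 ≤ 40 * r * K / ν := by positivity
                         linarith
  have hCν : 40 * r * K ≤ ν * C := by
    rw [hC, mul_add, mul_div_cancel₀ _ hν0.ne']; linarith
  intro δ hδ
  have hev := (numeric s hs C hC1).and ((union_sum δ hδ).and (Filter.eventually_ge_atTop 3))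
  obtain ⟨n₀, hn₀⟩ := Filter.eventually_atTop.mp hev
  refine ⟨n₀, fun n hn G X hX hG => ?_⟩
  obtain ⟨hnum, hsum, hn3⟩ := hn₀ n hn
  set p := C * (n : ℝ) ^ (-(2 : ℝ) / (s : ℝ)) *
              (Real.log n) ^ ((2 : ℝ) / ((s : ℝ) * ((s : ℝ) - 1))) with hp
  obtain ⟨hp0, hp1, h1, h2⟩ := hnum p rfl
  have hn0 : 0 < n := by omega
  have hn0' : (0 : ℝ) < n := by exact_mod_cast hn0
  have hL0 : 0 < Real.log n := Real.log_pos (by exact_mod_cast (by omega : 1 < n))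
  have hR : 0 < C * (n * Real.log n) := by positivity
  rw [Pr_eq]
  obtain ⟨bad, hbad⟩ : ∃ bad : Finset (Fin n) → Finset (Fin n) → Finset (Sym2 (Fin n)) → ℝ,
      bad = fun S Y F =>
    if S ⊆ X ∧ Y.card ≤ (2 * (r - 1) - 1) * (S.card - 1) then
      (if NoCopy G m s t S (X ∪ Y) F then 1 else 0) else 0 := ⟨_, rfl⟩
  have hbad0 : ∀ S Y F, 0 ≤ bad S Y F := by
    intro S Y F
    rw [hbad]
    dsimp only
    split_ifs <;> norm_num
  have hbound : ∀ S Y, S.Nonempty → ex (prs univ) p (bad S Y) ≤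
      ((n : ℝ) ^ 2)⁻¹ ^ S.card * ((n : ℝ) ^ 2)⁻¹ ^ Y.card := by
    intro S Y hSne
    by_cases hcond : S ⊆ X ∧ Y.card ≤ (2 * (r - 1) - 1) * (S.card - 1)
    · have hSX := card_le_card hcond.1
      have hYk : Y.card ≤ 2 * r * S.card :=
        hcond.2.trans (Nat.mul_le_mul (by omega) (by omega))
      have hYX : Y.card ≤ (2 * r - 1) * X.card :=
        hcond.2.trans (Nat.mul_le_mul (by omega) (by omega))
      have hZ : ∀ x, ((((X ∪ Y).erase x).card : ℕ) : ℝ) ≤ 2 * (m * s + t : ℝ) * ε * n := by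
        intro x
        have a1 : ((X ∪ Y).erase x).card ≤ 2 * r * X.card := by
          have b1 := card_erase_le (s := X ∪ Y) (a := x)
          have b2 := card_union_le X Y
          obtain ⟨u, hu⟩ : ∃ u, 2 * r = u + 1 := ⟨2 * r - 1, by omega⟩
          rw [hu] at hYX ⊢
          simp only [Nat.add_sub_cancel] at hYX
          nlinarith
        have a2 : ((((X ∪ Y).erase x).card : ℕ) : ℝ) ≤ 2 * r * X.card := by exact_mod_cast a1
        have a3 : (r : ℝ) = m * s + t := by rw [hr]; push_cast; ring
        rw [← a3]
        have a4 := mul_le_mul_of_nonneg_left hX (show (0 : ℝ) ≤ 2 * r by positivity)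
        linarith
      have hb := bad_bound G m s t hm hs hts S (X ∪ Y) p (C * (n * Real.log n)) ν hp0 hp1 hn0 hR h1 h2
        (fun x hx => hG x (hcond.1 hx) _ (notMem_erase _ _) (hZ x)) K hK hK0
      have heq : ex (prs univ) p (bad S Y) = ex (prs (univ : Finset (Fin n))) p
          (fun H => if NoCopy G m s t S (X ∪ Y) H then 1 else 0) := by
        refine ex_congr fun F _ => ?_
        rw [hbad]
        dsimp only
        rw [if_pos hcond]
      rw [heq]
      refine hb.trans ?_
      rw [← hr]
      have hinv : ((n : ℝ) ^ 2)⁻¹ = Real.exp (-(2 * Real.log n)) := by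
        rw [Real.exp_neg, two_mul, Real.exp_add, Real.exp_log hn0', sq]
      rw [hinv, ← Real.exp_nat_mul, ← Real.exp_nat_mul, ← Real.exp_add]
      apply Real.exp_le_exp.mpr
      have hpow : (n : ℝ) ^ r = (n : ℝ) ^ (r - 1) * n := by rw [← pow_succ]; congr 1; omega
      have hsimp : S.card * (ν * (n : ℝ) ^ (r - 1)) / (4 * (K * (n : ℝ) ^ r / (C * (n * Real.log n)))) =
          S.card * (ν * C) * Real.log n / (4 * K) := by
        rw [hpow]
        have : (n : ℝ) ^ (r - 1) ≠ 0 := by positivity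
        field_simp
      rw [hsimp]
      have c1 : S.card * (10 * r) * Real.log n ≤ S.card * (ν * C) * Real.log n / (4 * K) := by
        rw [le_div_iff₀ (by positivity)]
        have := mul_le_mul_of_nonneg_left hCν (show (0 : ℝ) ≤ S.card * Real.log n by positivity)
        nlinarith
      have c2 : (Y.card : ℝ) ≤ 2 * r * S.card := by exact_mod_cast hYk
      have c3 : 2 * ((S.card : ℝ) + Y.card) ≤ S.card * (10 * r) := by
        have : (0 : ℝ) ≤ S.card := by positivity
        nlinarith
      have c4 := mul_le_mul_of_nonneg_right c3 hL0.le
      linarith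
    · have heq : ex (prs univ) p (bad S Y) = ex (prs (univ : Finset (Fin n))) p (fun _ => 0 * 1) := by
        refine ex_congr fun F _ => ?_
        rw [hbad]
        dsimp only
        rw [if_neg hcond]; simp
      rw [heq, ex_mul, zero_mul]
      positivity
  have hmain : ex (prs (univ : Finset (Fin n))) p (fun F => 1 -
      ∑ S : Finset (Fin n) with S.Nonempty, ∑ Y : Finset (Fin n), bad S Y F) ≥ 1 - δ := by
    rw [ex_sub, ex_one, ex_sum]
    simp_rw [ex_sum]
    have : ∑ S : Finset (Fin n) with S.Nonempty, ∑ Y : Finset (Fin n), ex (prs univ) p (bad S Y) ≤ δ := by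
      refine le_trans (sum_le_sum fun S hS => sum_le_sum fun Y _ => ?_) hsum
      exact hbound S Y (mem_filter.mp hS).2
    linarith
  refine le_trans hmain (ex_mono hp0.le hp1 fun F _ => ?_)
  split_ifs with hP
  · have : 0 ≤ ∑ S : Finset (Fin n) with S.Nonempty, ∑ Y : Finset (Fin n), bad S Y F :=
      sum_nonneg fun S _ => sum_nonneg fun Y _ => hbad0 S Y F
    linarith
  · refine le_of_not_gt fun hc => ?_
    apply hP
    apply deterministic G m s t hm hs X F
    intro S hS hSne Y hY
    by_contra hno
    have hb1 : bad S Y F = 1 := by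
      rw [hbad]
      dsimp only
      rw [if_pos ⟨hS, hY⟩, if_pos]
      intro x hx c hv hF
      exact hno ⟨x, hx, c, hv, hF⟩
    have e1 : bad S Y F ≤ ∑ Y : Finset (Fin n), bad S Y F :=
      single_le_sum (f := fun Y => bad S Y F) (fun Y _ => hbad0 S Y F) (mem_univ Y)
    have e2 : ∑ Y : Finset (Fin n), bad S Y F ≤
        ∑ S : Finset (Fin n) with S.Nonempty, ∑ Y : Finset (Fin n), bad S Y F :=
      single_le_sum (f := fun S => ∑ Y : Finset (Fin n), bad S Y F)
        (fun S _ => sum_nonneg fun Y _ => hbad0 S Y F) (mem_filter.mpr ⟨mem_univ S, hSne⟩)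
    linarith
end

section
/- Let 1 ≤ t ≤ s be integers and r = s + t. There is a constant C = C(s,t) such that for every sufficiently small δ > 0 and all sufficiently large n the following holds with γ = 10srδ: if G is an n-vertex graph with minimum degree δ(G) ≥ (1 − s/r − δ)·n, then either (i) G contains a collection of pairwise vertex-disjoint subgraphs, each isomorphic to K₂ or to Q_{s,t}, that together cover all but at most C vertices of G, or (ii) G has an independent set of size at least (s/r − γ)·n. -/
open Finset
open scoped Classical

/-- The graph `Q_{s,t}` on `L ⊕ M ⊕ N` where `|L| = s - t`, `|M| = |N| = t`: a complete
bipartite graph between `L` and `M` together with a perfect matching between `M` and `N`. -/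
def Qgraph (s t : ℕ) : SimpleGraph (Fin (s - t) ⊕ Fin t ⊕ Fin t) :=
  SimpleGraph.fromRel (fun x y =>
    (∃ a b, x = Sum.inl a ∧ y = Sum.inr (Sum.inl b)) ∨
    (∃ b, x = Sum.inr (Sum.inl b) ∧ y = Sum.inr (Sum.inr b)))


/-- Optimality of a family of pieces: no local replacement covers more vertices. -/
def Opt {n : ℕ} (Pc : Finset (Fin n) → Prop) (𝒞 : Finset (Finset (Fin n)))
    (U : Finset (Fin n)) : Prop :=
  ∀ 𝒟 ⊆ 𝒞, ∀ ℱ : Finset (Finset (Fin n)), ((ℱ : Set (Finset (Fin n))).PairwiseDisjoint id) →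
    (∀ c ∈ ℱ, Pc c) → ℱ.biUnion id ⊆ 𝒟.biUnion id ∪ U →
    (ℱ.biUnion id).card ≤ (𝒟.biUnion id).card

lemma exists_opt {n : ℕ} (Pc : Finset (Fin n) → Prop) :
    ∃ 𝒞 : Finset (Finset (Fin n)), ((𝒞 : Set (Finset (Fin n))).PairwiseDisjoint id) ∧
      (∀ c ∈ 𝒞, Pc c) ∧ Opt Pc 𝒞 (Finset.univ \ 𝒞.biUnion id) := by
  let F : Finset (Finset (Finset (Fin n))) := Finset.univ.filter (fun 𝒞 =>
    ((𝒞 : Set (Finset (Fin n))).PairwiseDisjoint id) ∧ (∀ c ∈ 𝒞, Pc c))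
  have hF : F.Nonempty := ⟨∅, by simp [F]⟩
  obtain ⟨𝒞, h𝒞, hmax⟩ := Finset.exists_max_image F (fun 𝒞 => (𝒞.biUnion id).card) hF
  simp only [F, Finset.mem_filter, Finset.mem_univ, true_and] at h𝒞 hmax
  refine ⟨𝒞, h𝒞.1, h𝒞.2, ?_⟩
  intro 𝒟 hD ℱ hFd hFp hFs
  have hdis : ∀ a ∈ 𝒞 \ 𝒟, ∀ b ∈ ℱ, Disjoint a b := by
    intro a ha b hb
    rw [Finset.disjoint_left]
    intro x hxa hxb
    have hx : x ∈ 𝒟.biUnion id ∪ (Finset.univ \ 𝒞.biUnion id) :=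
      hFs (Finset.mem_biUnion.2 ⟨b, hb, hxb⟩)
    simp only [Finset.mem_sdiff] at ha
    rcases Finset.mem_union.1 hx with h | h
    · obtain ⟨d, hd, hxd⟩ := Finset.mem_biUnion.1 h
      have hne : a ≠ d := by rintro rfl; exact ha.2 hd
      exact Finset.disjoint_left.1 (h𝒞.1 ha.1 (hD hd) hne) hxa hxd
    · exact (Finset.mem_sdiff.1 h).2 (Finset.mem_biUnion.2 ⟨a, ha.1, hxa⟩)
  have h1 := hmax ((𝒞 \ 𝒟) ∪ ℱ) ⟨by
    intro a ha b hb hab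
    simp only [Finset.coe_union, Set.mem_union, Finset.mem_coe] at ha hb
    rcases ha with ha | ha <;> rcases hb with hb | hb
    · exact h𝒞.1 (Finset.mem_sdiff.1 ha).1 (Finset.mem_sdiff.1 hb).1 hab
    · exact hdis a ha b hb
    · exact (hdis b hb a ha).symm
    · exact hFd ha hb hab, by
    intro c hc
    rcases Finset.mem_union.1 hc with h | h
    · exact h𝒞.2 c (Finset.mem_sdiff.1 h).1
    · exact hFp c h⟩
  have h2 : ((𝒞 \ 𝒟) ∪ ℱ).biUnion id = (𝒞 \ 𝒟).biUnion id ∪ ℱ.biUnion id := by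
    ext x; simp only [Finset.mem_biUnion, Finset.mem_union, id]; grind
  have h3 : 𝒞.biUnion id = (𝒞 \ 𝒟).biUnion id ∪ 𝒟.biUnion id := by
    ext x; simp only [Finset.mem_biUnion, Finset.mem_union, id, Finset.mem_sdiff]
    constructor
    · rintro ⟨a, ha, hx⟩
      by_cases h : a ∈ 𝒟
      · exact Or.inr ⟨a, h, hx⟩
      · exact Or.inl ⟨a, ⟨ha, h⟩, hx⟩
    · rintro (⟨a, ha, hx⟩ | ⟨a, ha, hx⟩)
      · exact ⟨a, ha.1, hx⟩
      · exact ⟨a, hD ha, hx⟩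
  have h4 : Disjoint ((𝒞 \ 𝒟).biUnion id) (ℱ.biUnion id) := by
    rw [Finset.disjoint_biUnion_left]
    intro a ha
    rw [Finset.disjoint_biUnion_right]
    intro b hb
    exact hdis a ha b hb
  rw [h2, Finset.card_union_of_disjoint h4, h3] at h1
  have := Finset.card_union_le ((𝒞 \ 𝒟).biUnion id) (𝒟.biUnion id)
  omega

section Moves

variable {n : ℕ} {G : SimpleGraph (Fin n)} {s t : ℕ} {P : Finset (Fin n) → Prop}
  {𝒞 : Finset (Finset (Fin n))} {U : Finset (Fin n)}

/-- `A` is a `t`-set of vertices joined completely to the set `S`. -/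
def CJoin (G : SimpleGraph (Fin n)) (A S : Finset (Fin n)) : Prop :=
  ∀ a ∈ A, ∀ u ∈ S, G.Adj a u

lemma clique_pair {x y : Fin n} (h : G.Adj x y) : G.IsNClique 2 {x, y} := by
  rw [SimpleGraph.isNClique_iff]
  exact ⟨by simp [SimpleGraph.isClique_iff, h], Finset.card_pair h.ne⟩

lemma move_U (hopt : Opt (fun c => G.IsNClique 2 c ∨ P c) 𝒞 U) {x y : Fin n}
    (hx : x ∈ U) (hy : y ∈ U) : ¬ G.Adj x y := by
  intro h
  have := hopt ∅ (by simp) {{x, y}} (by simp) (by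
    intro c hc
    rw [Finset.mem_singleton] at hc
    subst hc
    exact Or.inl (clique_pair h)) (by
    intro z; simp; rintro (rfl | rfl) <;> assumption)
  simp at this

/-- One piece `c` may be traded for `A ∪ S` and an edge. -/
lemma move_one (hP : ∀ c, P c → c.card = s + t)
    (hK : ∀ A S : Finset (Fin n), A.card = t → S.card = s → Disjoint A S → CJoin G A S →
      P (A ∪ S))
    (hopt : Opt (fun c => G.IsNClique 2 c ∨ P c) 𝒞 U)
    (hCU : ∀ c ∈ 𝒞, Disjoint c U)
    {c A S : Finset (Fin n)} (hc : c ∈ 𝒞) (hPc : P c) (hA : A ⊆ c) (hAt : A.card = t)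
    (hS : S ⊆ U) (hSs : S.card = s) (hAS : CJoin G A S) {x y : Fin n}
    (hx : x ∈ c \ A) (hy : y ∈ (c \ A) ∪ (U \ S)) : ¬ G.Adj x y := by
  intro h
  have hd := hCU c hc
  rw [Finset.disjoint_left] at hd
  have hdAS : Disjoint A S := by
    rw [Finset.disjoint_left]; intro z hz hz'; exact hd (hA hz) (hS hz')
  have hne : x ≠ y := h.ne
  have hd2 : Disjoint (A ∪ S) {x, y} := by
    rw [Finset.disjoint_left]
    intro z hz
    simp only [Finset.mem_union, Finset.mem_sdiff, Finset.mem_insert, Finset.mem_singleton]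
      at hz hx hy ⊢
    rintro (rfl | rfl) <;> grind
  have hbi : ({A ∪ S, {x, y}} : Finset (Finset (Fin n))).biUnion id = (A ∪ S) ∪ {x, y} := by
    simp
  have := hopt {c} (by simpa using hc) {A ∪ S, {x, y}} (by
    intro a ha b hb hab
    simp only [Finset.coe_insert, Finset.coe_singleton, Set.mem_insert_iff,
      Set.mem_singleton_iff] at ha hb
    rcases ha with rfl | rfl <;> rcases hb with rfl | rfl
    · exact absurd rfl hab
    · exact hd2
    · exact hd2.symm
    · exact absurd rfl hab) (by
    intro d hd
    rw [Finset.mem_insert, Finset.mem_singleton] at hd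
    rcases hd with rfl | rfl
    · exact Or.inr (hK A S hAt hSs hdAS hAS)
    · exact Or.inl (clique_pair h)) (by
    rw [hbi]
    intro z
    simp only [Finset.mem_union, Finset.mem_sdiff, Finset.mem_insert, Finset.mem_singleton,
      Finset.singleton_biUnion, id] at hx hy ⊢
    grind)
  rw [hbi, Finset.card_union_of_disjoint hd2, Finset.card_union_of_disjoint hdAS,
    Finset.card_pair hne, Finset.singleton_biUnion, id, hP c hPc] at this
  omega

/-- Two pieces may be traded for two pieces and an edge. -/
lemma move_two (hP : ∀ c, P c → c.card = s + t)
    (hK : ∀ A S : Finset (Fin n), A.card = t → S.card = s → Disjoint A S → CJoin G A S →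
      P (A ∪ S))
    (hpd : (𝒞 : Set (Finset (Fin n))).PairwiseDisjoint id)
    (hopt : Opt (fun c => G.IsNClique 2 c ∨ P c) 𝒞 U)
    (hCU : ∀ c ∈ 𝒞, Disjoint c U)
    {c A S c' A' S' : Finset (Fin n)} (hc : c ∈ 𝒞) (hPc : P c) (hA : A ⊆ c) (hAt : A.card = t)
    (hS : S ⊆ U) (hSs : S.card = s) (hAS : CJoin G A S)
    (hc' : c' ∈ 𝒞) (hPc' : P c') (hA' : A' ⊆ c') (hAt' : A'.card = t)
    (hS' : S' ⊆ U) (hSs' : S'.card = s) (hAS' : CJoin G A' S')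
    (hSS : Disjoint S S') (hcc : c ≠ c')
    {x y : Fin n}
    (hx : x ∈ c \ A) (hy : y ∈ c' \ A') : ¬ G.Adj x y := by
  intro h
  have hd := hCU c hc
  have hd' := hCU c' hc'
  have hdc : Disjoint c c' := hpd hc hc' hcc
  have hdc0 := hdc
  rw [Finset.disjoint_left] at hd hd' hdc hSS
  have hdAS : Disjoint A S := by
    rw [Finset.disjoint_left]; intro z hz hz'; exact hd (hA hz) (hS hz')
  have hdAS' : Disjoint A' S' := by
    rw [Finset.disjoint_left]; intro z hz hz'; exact hd' (hA' hz) (hS' hz')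
  have hne : x ≠ y := h.ne
  rw [Finset.mem_sdiff] at hx hy
  have e1 : Disjoint (A ∪ S) {x, y} := by
    rw [Finset.disjoint_left]
    intro z hz
    simp only [Finset.mem_union, Finset.mem_insert, Finset.mem_singleton] at hz ⊢
    rintro (rfl | rfl) <;> grind
  have e2 : Disjoint (A' ∪ S') {x, y} := by
    rw [Finset.disjoint_left]
    intro z hz
    simp only [Finset.mem_union, Finset.mem_insert, Finset.mem_singleton] at hz ⊢
    rintro (rfl | rfl) <;> grind
  have e3 : Disjoint (A ∪ S) (A' ∪ S') := by
    rw [Finset.disjoint_left]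
    intro z hz
    simp only [Finset.mem_union] at hz ⊢
    grind
  have hbi : ({A ∪ S, A' ∪ S', {x, y}} : Finset (Finset (Fin n))).biUnion id
      = ((A ∪ S) ∪ (A' ∪ S')) ∪ {x, y} := by
    simp
  have hbi2 : ({c, c'} : Finset (Finset (Fin n))).biUnion id = c ∪ c' := by simp
  have := hopt {c, c'} (by
      intro d hd; rw [Finset.mem_insert, Finset.mem_singleton] at hd
      rcases hd with rfl | rfl <;> assumption) {A ∪ S, A' ∪ S', {x, y}} (by
    intro a ha b hb hab
    simp only [Finset.coe_insert, Finset.coe_singleton, Set.mem_insert_iff,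
      Set.mem_singleton_iff] at ha hb
    rcases ha with rfl | rfl | rfl <;> rcases hb with rfl | rfl | rfl <;>
      first
      | exact absurd rfl hab
      | exact e1
      | exact e2
      | exact e3
      | exact e1.symm
      | exact e2.symm
      | exact e3.symm) (by
    intro d hd
    rw [Finset.mem_insert, Finset.mem_insert, Finset.mem_singleton] at hd
    rcases hd with rfl | rfl | rfl
    · exact Or.inr (hK A S hAt hSs hdAS hAS)
    · exact Or.inr (hK A' S' hAt' hSs' hdAS' hAS')
    · exact Or.inl (clique_pair h)) (by
    rw [hbi, hbi2]
    intro z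
    simp only [Finset.mem_union, Finset.mem_insert, Finset.mem_singleton]
    grind)
  rw [hbi, hbi2, Finset.card_union_of_disjoint (Finset.disjoint_union_left.2 ⟨e1, e2⟩),
    Finset.card_union_of_disjoint e3, Finset.card_union_of_disjoint hdAS,
    Finset.card_union_of_disjoint hdAS', Finset.card_union_of_disjoint hdc0,
    Finset.card_pair hne, hP c hPc, hP c' hPc'] at this
  omega

/-- If `t < s`, fewer than `t` edges of the family have vertices joined to a common `s`-set. -/
lemma move_edges (hts : t < s)
    (hK : ∀ A S : Finset (Fin n), A.card = t → S.card = s → Disjoint A S → CJoin G A S →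
      P (A ∪ S))
    (hpd : (𝒞 : Set (Finset (Fin n))).PairwiseDisjoint id)
    (hopt : Opt (fun c => G.IsNClique 2 c ∨ P c) 𝒞 U)
    (hCU : ∀ c ∈ 𝒞, Disjoint c U)
    {𝒟 : Finset (Finset (Fin n))} (hD : 𝒟 ⊆ 𝒞) (hD2 : ∀ c ∈ 𝒟, c.card = 2)
    (x : Finset (Fin n) → Fin n) (hx : ∀ c ∈ 𝒟, x c ∈ c) {S : Finset (Fin n)}
    (hS : S ⊆ U) (hSs : s ≤ S.card) (hj : ∀ c ∈ 𝒟, ∀ u ∈ S, G.Adj (x c) u) :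
    𝒟.card < t := by
  by_contra hlt
  push Not at hlt
  obtain ⟨ℰ, hE, hEt⟩ := Finset.exists_subset_card_eq hlt
  obtain ⟨T, hT, hTs⟩ := Finset.exists_subset_card_eq hSs
  have hinj : Set.InjOn x (ℰ : Set (Finset (Fin n))) := by
    intro a ha b hb hab
    by_contra hne
    have h1 := hpd (hD (hE ha)) (hD (hE hb)) hne
    have h2 := hx b (hE hb)
    rw [← hab] at h2
    exact Finset.disjoint_left.1 h1 (hx a (hE ha)) h2
  have hAt : (ℰ.image x).card = t := by rw [Finset.card_image_of_injOn hinj, hEt]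
  have hdis : Disjoint (ℰ.image x) T := by
    rw [Finset.disjoint_left]
    intro z hz hzT
    obtain ⟨c, hc, rfl⟩ := Finset.mem_image.1 hz
    exact Finset.disjoint_left.1 (hCU c (hD (hE hc))) (hx c (hE hc)) (hS (hT hzT))
  have := hopt ℰ (hE.trans hD) {ℰ.image x ∪ T} (by simp) (by
    intro d hd
    rw [Finset.mem_singleton] at hd
    subst hd
    refine Or.inr (hK _ _ hAt hTs hdis ?_)
    intro a ha u hu
    obtain ⟨c, hc, rfl⟩ := Finset.mem_image.1 ha
    exact hj c (hE hc) u (hT hu)) (by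
    rw [Finset.singleton_biUnion, id]
    apply Finset.union_subset_union
    · intro z hz
      obtain ⟨c, hc, rfl⟩ := Finset.mem_image.1 hz
      exact Finset.mem_biUnion.2 ⟨c, hc, hx c (hE hc)⟩
    · exact hT.trans hS)
  rw [Finset.singleton_biUnion, id, Finset.card_union_of_disjoint hdis, hAt, hTs] at this
  have h2 : (ℰ.biUnion id).card ≤ ℰ.card * 2 :=
    Finset.card_biUnion_le_card_mul _ _ _ (fun c hc => (hD2 c (hE hc)).le)
  omega

end Moves

section Count

variable {n : ℕ} (G : SimpleGraph (Fin n))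

/-- The number of neighbours of `v` in `U`. -/
noncomputable def dIn (U : Finset (Fin n)) (v : Fin n) : ℕ := (U.filter (fun u => G.Adj v u)).card

lemma sum_dIn (U c : Finset (Fin n)) :
    ∑ v ∈ c, dIn G U v = ∑ u ∈ U, (c.filter (fun v => G.Adj v u)).card :=
  Finset.sum_card_bipartiteAbove_eq_sum_card_bipartiteBelow (fun v u => G.Adj v u)

lemma sum_dIn_univ (U : Finset (Fin n)) :
    ∑ v, dIn G U v = ∑ u ∈ U, degR G u := by
  rw [sum_dIn]
  refine Finset.sum_congr rfl fun u _ => ?_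
  rw [degR, Nat.card_eq_fintype_card, ← Set.toFinset_card]
  congr 1
  ext v
  simp [SimpleGraph.adj_comm]

lemma bad_count {U c : Finset (Fin n)} {r t h : ℕ} (hc : c.card = r)
    (hbad : ∀ A ⊆ c, A.card = t → (U.filter (fun u => ∀ a ∈ A, G.Adj a u)).card ≤ h) :
    ∑ v ∈ c, dIn G U v ≤ (t - 1) * U.card + r * (h * 2 ^ r) := by
  rw [sum_dIn]
  set f : Fin n → ℕ := fun u => (c.filter (fun v => G.Adj v u)).card with hf
  have h1 : ∀ u ∈ U, f u ≤ (t - 1) + (if t ≤ f u then r else 0) := by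
    intro u _
    split_ifs with hh
    · have : f u ≤ c.card := Finset.card_filter_le _ _
      omega
    · omega
  have h2 : (U.filter (fun u => t ≤ f u)).card ≤ h * 2 ^ r := by
    have hsub : U.filter (fun u => t ≤ f u) ⊆
        (Finset.powersetCard t c).biUnion (fun A => U.filter (fun u => ∀ a ∈ A, G.Adj a u)) := by
      intro u hu
      rw [Finset.mem_filter] at hu
      obtain ⟨A, hA, hAt⟩ := Finset.exists_subset_card_eq hu.2
      refine Finset.mem_biUnion.2 ⟨A, Finset.mem_powersetCard.2
        ⟨hA.trans (Finset.filter_subset _ _), hAt⟩, Finset.mem_filter.2 ⟨hu.1, ?_⟩⟩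
      intro a ha
      exact (Finset.mem_filter.1 (hA ha)).2
    refine (Finset.card_le_card hsub).trans ?_
    refine (Finset.card_biUnion_le_card_mul _ _ h ?_).trans ?_
    · intro A hA
      rw [Finset.mem_powersetCard] at hA
      exact hbad A hA.1 hA.2
    · rw [mul_comm]
      refine Nat.mul_le_mul_left _ ?_
      rw [Finset.card_powersetCard, hc]
      exact Nat.choose_le_two_pow _ _
  calc ∑ u ∈ U, f u ≤ ∑ u ∈ U, ((t - 1) + (if t ≤ f u then r else 0)) := Finset.sum_le_sum h1
    _ = (t - 1) * U.card + r * (U.filter (fun u => t ≤ f u)).card := by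
        rw [Finset.sum_add_distrib, ← Finset.sum_filter, Finset.sum_const, Finset.sum_const,
          smul_eq_mul, smul_eq_mul]
        ring
    _ ≤ _ := by gcongr

end Count

/-- The leftover constant. -/
def Cst (s t : ℕ) : ℕ := 2 * (s + t) * ((2 * s + 1) * 2 ^ (s + t))

theorem core {n : ℕ} (G : SimpleGraph (Fin n)) (s t : ℕ) (ht : 1 ≤ t) (hts : t ≤ s)
    (P : Finset (Fin n) → Prop) (hP : ∀ c, P c → c.card = s + t)
    (hK : ∀ A S : Finset (Fin n), A.card = t → S.card = s → Disjoint A S → CJoin G A S →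
      P (A ∪ S))
    (hc : t < s ∨ ∀ c, G.IsNClique 2 c → P c)
    (δ : ℝ) (hn : (t : ℝ) * 2 ^ (Cst s t) ≤ δ * n)
    (hdeg : ∀ v, (1 - (s : ℝ) / ((s : ℝ) + (t : ℝ)) - δ) * n ≤ (degR G v : ℝ)) :
    (∃ 𝒞 : Finset (Finset (Fin n)),
      ((𝒞 : Set (Finset (Fin n))).PairwiseDisjoint id) ∧
      (∀ c ∈ 𝒞, G.IsNClique 2 c ∨ P c) ∧
      ((Finset.univ \ 𝒞.biUnion id).card ≤ Cst s t)) ∨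
    (∃ I : Finset (Fin n),
      ((s : ℝ) / ((s : ℝ) + (t : ℝ)) - 10 * (s : ℝ) * ((s : ℝ) + (t : ℝ)) * δ) * n
        ≤ (I.card : ℝ) ∧
      ∀ x ∈ I, ∀ y ∈ I, ¬ G.Adj x y) := by
  obtain ⟨𝒞, hpd, hpc, hopt⟩ := exists_opt (fun c => G.IsNClique 2 c ∨ P c)
  set U := Finset.univ \ 𝒞.biUnion id with hU
  by_cases hUC : U.card ≤ Cst s t
  · exact Or.inl ⟨𝒞, hpd, hpc, hUC⟩
  right
  push Not at hUC
  obtain ⟨U', hU'U, hU'c⟩ := Finset.exists_subset_card_eq hUC.le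
  have hCU : ∀ c ∈ 𝒞, Disjoint c U := by
    intro c hc
    rw [Finset.disjoint_left]
    intro x hx hxU
    exact (Finset.mem_sdiff.1 hxU).2 (Finset.mem_biUnion.2 ⟨c, hc, hx⟩)
  set C := Cst s t with hC
  -- good pieces
  let good : Finset (Fin n) → Prop := fun c => P c ∧ ∃ A ⊆ c, A.card = t ∧
    2 * s + 1 ≤ (U'.filter (fun u => ∀ a ∈ A, G.Adj a u)).card
  have hchoose : ∀ c, ∃ A : Finset (Fin n), good c → A ⊆ c ∧ A.card = t ∧
      2 * s + 1 ≤ (U'.filter (fun u => ∀ a ∈ A, G.Adj a u)).card := by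
    intro c
    by_cases h : good c
    · obtain ⟨_, A, h1, h2⟩ := h
      exact ⟨A, fun _ => ⟨h1, h2⟩⟩
    · exact ⟨∅, fun h' => absurd h' h⟩
  choose A hA using hchoose
  -- exceptional edges
  let exc : Finset (Fin n) → Prop := fun c => ¬ P c ∧ ∃ x ∈ c, s ≤ dIn G U' x
  have hpick : ∀ c, good c → ∀ F : Finset (Fin n), F.card ≤ s + 1 → ∃ S ⊆ U', S.card = s ∧
      CJoin G (A c) S ∧ Disjoint F S := by
    intro c hg F hF
    have h1 := (hA c hg).2.2
    have h2 : s ≤ ((U'.filter (fun u => ∀ a ∈ A c, G.Adj a u)) \ F).card := by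
      have := Finset.le_card_sdiff F (U'.filter (fun u => ∀ a ∈ A c, G.Adj a u))
      omega
    obtain ⟨S, hS, hSs⟩ := Finset.exists_subset_card_eq h2
    refine ⟨S, ?_, hSs, ?_, ?_⟩
    · exact fun z hz => (Finset.mem_filter.1 (Finset.mem_sdiff.1 (hS hz)).1).1
    · intro a ha u hu
      exact (Finset.mem_filter.1 (Finset.mem_sdiff.1 (hS hu)).1).2 a ha
    · rw [Finset.disjoint_right]
      exact fun z hz => (Finset.mem_sdiff.1 (hS hz)).2
  have hone : ∀ c ∈ 𝒞, good c → ∀ x ∈ c \ A c, ∀ y ∈ (c \ A c) ∪ U, ¬ G.Adj x y := by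
    intro c hc hg x hx y hy
    obtain ⟨S, hS, hSs, hj, hF⟩ := hpick c hg {y} (by simp)
    refine move_one hP hK hopt hCU hc hg.1 (hA c hg).1 (hA c hg).2.1 (hS.trans hU'U) hSs hj hx ?_
    rw [Finset.disjoint_singleton_left] at hF
    rw [Finset.mem_union] at hy ⊢
    rcases hy with h | h
    · exact Or.inl h
    · exact Or.inr (Finset.mem_sdiff.2 ⟨h, hF⟩)
  have htwo : ∀ c ∈ 𝒞, good c → ∀ c' ∈ 𝒞, good c' → c ≠ c' → ∀ x ∈ c \ A c, ∀ y ∈ c' \ A c',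
      ¬ G.Adj x y := by
    intro c hc hg c' hc' hg' hne x hx y hy
    obtain ⟨S, hS, hSs, hj, _⟩ := hpick c hg ∅ (by simp)
    obtain ⟨S', hS', hSs', hj', hF⟩ := hpick c' hg' S (by omega)
    exact move_two hP hK hpd hopt hCU hc hg.1 (hA c hg).1 (hA c hg).2.1 (hS.trans hU'U) hSs hj
      hc' hg'.1 (hA c' hg').1 (hA c' hg').2.1 (hS'.trans hU'U) hSs' hj' hF hne hx hy
  -- contributions
  have hCpos : 2 * (s + t) * s ≤ C := by
    rw [hC, Cst]
    refine Nat.mul_le_mul_left _ ?_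
    have : 1 ≤ 2 ^ (s + t) := Nat.one_le_two_pow
    nlinarith
  have hdle : ∀ v, dIn G U' v ≤ C := fun v => by
    rw [← hU'c]; exact Finset.card_filter_le _ _
  have hcontr : ∀ c ∈ 𝒞, 2 * (s + t) * ∑ v ∈ c, dIn G U' v ≤ (2 * t - 1) * C * c.card +
      (if good c then C * (s + t) else 0) + (if exc c then 4 * (s + t) * C else 0) := by
    intro c hc
    by_cases hPc : P c
    · have hcr := hP c hPc
      by_cases hg : good c
      · rw [if_pos hg, hcr]
        have h0 : ∑ v ∈ c, dIn G U' v ≤ t * C := by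
          have hs : ∑ v ∈ c, dIn G U' v = ∑ v ∈ A c, dIn G U' v := by
            symm
            refine Finset.sum_subset (hA c hg).1 ?_
            intro x hx hxA
            rw [dIn, Finset.card_eq_zero, Finset.filter_eq_empty_iff]
            intro u hu
            exact hone c hc hg x (Finset.mem_sdiff.2 ⟨hx, hxA⟩) u
              (Finset.mem_union_right _ (hU'U hu))
          rw [hs, ← (hA c hg).2.1, ← smul_eq_mul]
          exact Finset.sum_le_card_nsmul _ _ _ (fun v _ => hdle v)
        obtain ⟨k, rfl⟩ : ∃ k, t = k + 1 := ⟨t - 1, by omega⟩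
        have e : 2 * (k + 1) - 1 = 2 * k + 1 := by omega
        rw [e]
        have h3 := Nat.mul_le_mul_left (2 * (s + (k + 1))) h0
        have h4 : 2 * (s + (k + 1)) * ((k + 1) * C) = (2 * k + 1) * C * (s + (k + 1)) +
          C * (s + (k + 1)) := by ring
        omega
      · have hb := bad_count G (U := U') (c := c) (t := t) (h := 2 * s) hcr (by
          intro B hB hBt
          by_contra hlt
          push Not at hlt
          exact hg ⟨hPc, B, hB, hBt, hlt⟩)
        rw [hU'c] at hb
        have h5 : 2 * ((s + t) * (2 * s * 2 ^ (s + t))) ≤ C := by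
          rw [hC, Cst, mul_assoc 2 (s + t)]
          refine Nat.mul_le_mul_left _ (Nat.mul_le_mul_left _ (Nat.mul_le_mul_right _ ?_))
          omega
        rw [hcr]
        obtain ⟨k, rfl⟩ : ∃ k, t = k + 1 := ⟨t - 1, by omega⟩
        have e : 2 * (k + 1) - 1 = 2 * k + 1 := by omega
        have e' : k + 1 - 1 = k := by omega
        rw [e]
        rw [e'] at hb
        have h6 : 2 * ∑ v ∈ c, dIn G U' v ≤ (2 * k + 1) * C := by
          have : (2 * k + 1) * C = 2 * (k * C) + C := by ring
          omega
        have h7 := Nat.mul_le_mul_left (s + (k + 1)) h6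
        have h8 : 2 * (s + (k + 1)) * ∑ v ∈ c, dIn G U' v =
          (s + (k + 1)) * (2 * ∑ v ∈ c, dIn G U' v) := by ring
        have h9 : (2 * k + 1) * C * (s + (k + 1)) = (s + (k + 1)) * ((2 * k + 1) * C) := by ring
        omega
    · have h2 : c.card = 2 := ((hpc c hc).resolve_right hPc).card_eq
      by_cases he : exc c
      · rw [if_pos he]
        have : ∑ v ∈ c, dIn G U' v ≤ 2 * C := by
          rw [← h2, ← smul_eq_mul]
          exact Finset.sum_le_card_nsmul _ _ _ (fun v _ => hdle v)
        have h3 := Nat.mul_le_mul_left (2 * (s + t)) this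
        have h4 : 2 * (s + t) * (2 * C) = 4 * (s + t) * C := by ring
        omega
      · have : ∑ v ∈ c, dIn G U' v ≤ 2 * s := by
          rw [← h2, ← smul_eq_mul]
          refine Finset.sum_le_card_nsmul _ _ _ (fun v hv => ?_)
          by_contra hlt
          push Not at hlt
          exact he ⟨hPc, v, hv, hlt.le⟩
        have h3 := Nat.mul_le_mul_left (2 * (s + t)) this
        have h4 : 2 * (s + t) * (2 * s) = 2 * (2 * (s + t) * s) := by ring
        have h5 : 1 * C * 2 ≤ (2 * t - 1) * C * 2 := by
          gcongr
          omega
        rw [h2]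
        omega
  -- number of exceptional edges
  have hexc : (𝒞.filter exc).card ≤ t * 2 ^ C := by
    rcases hc with hlt | hall
    · have hx : ∀ c, ∃ x, exc c → x ∈ c ∧ s ≤ dIn G U' x := by
        intro c
        by_cases h : exc c
        · obtain ⟨_, x, h1, h2⟩ := h
          exact ⟨x, fun _ => ⟨h1, h2⟩⟩
        · have : 0 < n := by
            by_contra h0
            have h0 : n = 0 := by omega
            subst h0
            have : U.card = 0 := by rw [Finset.card_eq_zero]; exact Finset.eq_empty_of_isEmpty _
            omega
          exact ⟨⟨0, this⟩, fun h' => absurd h' h⟩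
      choose x hx using hx
      by_contra hgt
      push Not at hgt
      have hmaps : ∀ c ∈ 𝒞.filter exc, U'.filter (fun u => G.Adj (x c) u) ∈ U'.powerset :=
        fun c _ => Finset.mem_powerset.2 (Finset.filter_subset _ _)
      obtain ⟨S, hS, hSt⟩ := Finset.exists_lt_card_fiber_of_mul_lt_card_of_maps_to
        (n := t) hmaps (by rw [Finset.card_powerset, hU'c, mul_comm]; exact hgt)
      have hmem : ∀ c ∈ (𝒞.filter exc).filter (fun c => U'.filter (fun u => G.Adj (x c) u) = S),
          c ∈ 𝒞 ∧ exc c ∧ U'.filter (fun u => G.Adj (x c) u) = S := by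
        intro c hc
        simp only [Finset.mem_filter] at hc
        exact ⟨hc.1.1, hc.1.2, hc.2⟩
      have hSs : s ≤ S.card := by
        obtain ⟨c, hc⟩ := Finset.card_pos.1 (lt_of_le_of_lt (Nat.zero_le _) hSt)
        obtain ⟨_, h2, h3⟩ := hmem c hc
        rw [← h3]
        exact (hx c h2).2
      have := move_edges hlt hK hpd hopt hCU (fun c hc => (hmem c hc).1)
        (fun c hc => ((hpc c (hmem c hc).1).resolve_right (hmem c hc).2.1.1).card_eq) x
        (fun c hc => (hx c (hmem c hc).2.1).1)
        ((Finset.mem_powerset.1 hS).trans hU'U) hSs (by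
          intro c hc u hu
          rw [← (hmem c hc).2.2] at hu
          exact (Finset.mem_filter.1 hu).2)
      omega
    · have : 𝒞.filter exc = ∅ := by
        rw [Finset.filter_eq_empty_iff]
        intro c hc he
        rcases hpc c hc with h | h
        · exact he.1 (hall c h)
        · exact he.1 h
      simp [this]
  -- summing up
  have hpart : (Finset.univ : Finset (Fin n)) = 𝒞.biUnion id ∪ U := by
    rw [hU]; simp
  have hdisj : Disjoint (𝒞.biUnion id) U := by
    rw [hU]; exact Finset.disjoint_sdiff
  have hUz : ∑ v ∈ U, dIn G U' v = 0 := by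
    refine Finset.sum_eq_zero fun v hv => ?_
    rw [dIn, Finset.card_eq_zero, Finset.filter_eq_empty_iff]
    intro u hu
    exact move_U hopt hv (hU'U hu)
  have hsum : ∑ u ∈ U', degR G u = ∑ c ∈ 𝒞, ∑ v ∈ c, dIn G U' v := by
    rw [← sum_dIn_univ, hpart, Finset.sum_union hdisj, hUz, add_zero, Finset.sum_biUnion hpd]
    rfl
  have hcards : ∑ c ∈ 𝒞, c.card ≤ n := by
    have h1 : (𝒞.biUnion id).card = ∑ c ∈ 𝒞, c.card := Finset.card_biUnion hpd
    rw [← h1]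
    simpa using Finset.card_le_univ (𝒞.biUnion id)
  set g := (𝒞.filter good).card with hg
  have htot : 2 * (s + t) * ∑ u ∈ U', degR G u ≤ (2 * t - 1) * C * n + C * (s + t) * g
      + 4 * (s + t) * C * (t * 2 ^ C) := by
    rw [hsum, Finset.mul_sum]
    refine (Finset.sum_le_sum hcontr).trans ?_
    rw [Finset.sum_add_distrib, Finset.sum_add_distrib, ← Finset.sum_filter, ← Finset.sum_filter,
      Finset.sum_const, Finset.sum_const, smul_eq_mul, smul_eq_mul, ← Finset.mul_sum,
      mul_comm (𝒞.filter good).card, mul_comm (𝒞.filter exc).card]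
    gcongr
  refine ⟨(𝒞.filter good).biUnion (fun c => c \ A c), ?_, ?_⟩
  · have hI : ((𝒞.filter good).biUnion (fun c => c \ A c)).card = g * s := by
      rw [Finset.card_biUnion]
      · refine Finset.sum_const_nat fun c hc => ?_
        have hgc := (Finset.mem_filter.1 hc).2
        rw [Finset.card_sdiff_of_subset (hA c hgc).1, hP c hgc.1, (hA c hgc).2.1]
        omega
      · intro c hc c' hc' hne
        exact Finset.disjoint_of_subset_left Finset.sdiff_subset
          (Finset.disjoint_of_subset_right Finset.sdiff_subset
            (hpd (Finset.mem_filter.1 hc).1 (Finset.mem_filter.1 hc').1 hne))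
    rw [hI]
    have hlow : (C : ℝ) * ((1 - (s : ℝ) / ((s : ℝ) + (t : ℝ)) - δ) * n) ≤
        ((∑ u ∈ U', degR G u : ℕ) : ℝ) := by
      rw [← hU'c, ← nsmul_eq_mul, Nat.cast_sum]
      exact Finset.card_nsmul_le_sum _ _ _ (fun u _ => hdeg u)
    have htR : ((2 * (s + t) * ∑ u ∈ U', degR G u : ℕ) : ℝ) ≤
        (((2 * t - 1) * C * n + C * (s + t) * g + 4 * (s + t) * C * (t * 2 ^ C) : ℕ) : ℝ) :=
      Nat.cast_le.2 htot
    have hsub : ((2 * t - 1 : ℕ) : ℝ) = 2 * (t : ℝ) - 1 := by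
      rw [Nat.cast_sub (by omega)]; push_cast; ring
    rw [Nat.cast_mul, Nat.cast_add, Nat.cast_add, Nat.cast_mul, Nat.cast_mul _ n,
      Nat.cast_mul (2 * t - 1) C, hsub] at htR
    push_cast at htR hlow ⊢
    have hs0 : (1 : ℝ) ≤ s := by exact_mod_cast ht.trans hts
    have ht0 : (1 : ℝ) ≤ t := by exact_mod_cast ht
    have hC0 : (0 : ℝ) < C := by
      have : 0 < C := lt_of_lt_of_le
        (Nat.mul_pos (by omega) (by omega)) hCpos
      exact_mod_cast this
    set K : ℝ := (t : ℝ) * 2 ^ C with hKd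
    have hr0 : (0 : ℝ) < (s : ℝ) + t := by linarith
    set q : ℝ := (s : ℝ) / ((s : ℝ) + t) with hq
    have hqr : q * ((s : ℝ) + t) = s := by rw [hq]; field_simp
    have hK0 : 0 ≤ K := by positivity
    have h1 : (2 * ((s : ℝ) + t)) * (C * ((1 - q - δ) * n)) ≤
        (2 * (t : ℝ) - 1) * C * n + C * (s + t) * g + 4 * (s + t) * C * K :=
      (mul_le_mul_of_nonneg_left hlow (by positivity)).trans htR
    have h2 : (2 * ((s : ℝ) + t)) * (C * ((1 - q - δ) * n)) =
        C * (2 * t * n - 2 * (s + t) * (δ * n)) := by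
      have : (2 * ((s : ℝ) + t)) * (C * ((1 - q - δ) * n)) =
        C * (2 * ((s + t) - q * (s + t)) * n - 2 * (s + t) * (δ * n)) := by ring
      rw [this, hqr]; ring
    have h3 : (2 * t * n - 2 * (s + t) * (δ * n) : ℝ) ≤
        (2 * t - 1) * n + (s + t) * g + 4 * (s + t) * K := by
      refine le_of_mul_le_mul_left ?_ hC0
      rw [← h2]
      refine h1.trans (le_of_eq ?_)
      ring
    have h4 : (n : ℝ) ≤ (s + t) * (g + 4 * K + 2 * (δ * n)) := by linarith
    have h5 : q * n ≤ s * (g + 4 * K + 2 * (δ * n)) := by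
      have hq0 : 0 ≤ q := by positivity
      calc q * n ≤ q * ((s + t) * (g + 4 * K + 2 * (δ * n))) := by gcongr
        _ = _ := by rw [← mul_assoc, hqr]
    have h6 : (s : ℝ) * (6 * (δ * n)) ≤ 10 * s * (s + t) * (δ * n) := by
      have hdn : 0 ≤ δ * n := hK0.trans hn
      have : (s : ℝ) * (6 * (δ * n)) = (6 * s) * (δ * n) := by ring
      rw [this]
      refine mul_le_mul_of_nonneg_right ?_ hdn
      nlinarith
    have h7 : (s : ℝ) * (4 * K) ≤ s * (4 * (δ * n)) := by gcongr
    have : (q - 10 * s * (s + t) * δ) * n = q * n - 10 * s * (s + t) * (δ * n) := by ring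
    rw [this]
    linarith
  · intro x hx y hy
    obtain ⟨c, hc, hxc⟩ := Finset.mem_biUnion.1 hx
    obtain ⟨c', hc', hyc⟩ := Finset.mem_biUnion.1 hy
    rw [Finset.mem_filter] at hc hc'
    by_cases hne : c = c'
    · subst hne
      exact hone c hc.1 hc.2 x hxc y (Finset.mem_union_left _ hyc)
    · exact htwo c hc.1 hc.2 c' hc'.1 hc'.2 hne x hxc y hyc

/-- A `t`-set completely joined to an `s`-set spans a copy of `Q_{s,t}`. -/
lemma Q_of_join {n : ℕ} (G : SimpleGraph (Fin n)) (s t : ℕ) (hts : t ≤ s)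
    (A S : Finset (Fin n)) (hA : A.card = t) (hS : S.card = s) (hd : Disjoint A S)
    (hj : CJoin G A S) :
    ∃ f : Qgraph s t →g G, Function.Injective f ∧ Set.range f = ((A ∪ S : Finset (Fin n)) : Set (Fin n)) := by
  let eA : Fin t ≃ A := (A.equivFinOfCardEq hA).symm
  let eS : Fin (s - t) ⊕ Fin t ≃ S :=
    (finSumFinEquiv.trans (finCongr (by omega))).trans (S.equivFinOfCardEq hS).symm
  let F : Fin (s - t) ⊕ Fin t ⊕ Fin t → Fin n :=
    Sum.elim (fun a => (eS (Sum.inl a) : Fin n))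
      (Sum.elim (fun b => (eA b : Fin n)) (fun b => (eS (Sum.inr b) : Fin n)))
  have hne : ∀ a b, (eA a : Fin n) ≠ (eS b : Fin n) := by
    intro a b h
    have h1 := (eA a).2
    rw [h] at h1
    exact Finset.disjoint_left.1 hd h1 (eS b).2
  have hadj : ∀ a b, G.Adj (eA a) (eS b) := fun a b => hj _ (eA a).2 _ (eS b).2
  refine ⟨⟨F, ?_⟩, ?_, ?_⟩
  · intro x y hxy
    rw [Qgraph, SimpleGraph.fromRel_adj] at hxy
    obtain ⟨_, (⟨a, b, rfl, rfl⟩ | ⟨b, rfl, rfl⟩) | (⟨a, b, rfl, rfl⟩ | ⟨b, rfl, rfl⟩)⟩ := hxy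
    · exact (hadj _ _).symm
    · exact hadj _ _
    · exact hadj _ _
    · exact (hadj _ _).symm
  · intro x y hxy
    change F x = F y at hxy
    rcases x with a | b | b <;> rcases y with a' | b' | b' <;>
      simp only [F, Sum.elim_inl, Sum.elim_inr] at hxy <;>
      first
      | exact absurd hxy (hne _ _)
      | exact absurd hxy.symm (hne _ _)
      | (have h := eS.injective (Subtype.ext hxy); simp at h; try rw [h])
      | (have h := eA.injective (Subtype.ext hxy); rw [h])
  · ext z
    change z ∈ Set.range F ↔ _
    simp only [Finset.coe_union, Set.mem_union, Finset.mem_coe, Set.mem_range]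
    constructor
    · rintro ⟨a | b | b, rfl⟩
      · exact Or.inr (eS _).2
      · exact Or.inl (eA _).2
      · exact Or.inr (eS _).2
    · rintro (h | h)
      · exact ⟨Sum.inr (Sum.inl (eA.symm ⟨z, h⟩)), by simp [F]⟩
      · rcases hw : eS.symm ⟨z, h⟩ with a | b
        · exact ⟨Sum.inl a, by simp [F, ← hw]⟩
        · exact ⟨Sum.inr (Sum.inr b), by simp [F, ← hw]⟩

/-- Lemma 7.1: either `G` can be covered, up to at most `C` leftover
vertices, by vertex-disjoint copies of `K₂` and `Q_{s,t}`, or `G` contains an independent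
set of size at least `(s/r - γ) n` where `γ = 10srδ` and `r = s + t`. -/
theorem statement11 (s t : ℕ) (ht : 1 ≤ t) (hts : t ≤ s) :
    ∃ C : ℕ, ∃ δ₀ : ℝ, 0 < δ₀ ∧ ∀ δ : ℝ, 0 < δ → δ ≤ δ₀ →
      ∃ n₀ : ℕ, ∀ n : ℕ, n₀ ≤ n →
        ∀ G : SimpleGraph (Fin n),
          (∀ v, (1 - (s : ℝ) / ((s : ℝ) + (t : ℝ)) - δ) * n ≤ (degR G v : ℝ)) →
          (∃ 𝒞 : Finset (Finset (Fin n)),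
            ((𝒞 : Set (Finset (Fin n))).PairwiseDisjoint id) ∧
            (∀ c ∈ 𝒞, G.IsNClique 2 c ∨
              ∃ f : Qgraph s t →g G, Function.Injective f ∧ Set.range f = (c : Set (Fin n))) ∧
            ((Finset.univ \ 𝒞.biUnion id).card ≤ C)) ∨
          (∃ I : Finset (Fin n),
            ((s : ℝ) / ((s : ℝ) + (t : ℝ)) - 10 * (s : ℝ) * ((s : ℝ) + (t : ℝ)) * δ) * n
              ≤ (I.card : ℝ) ∧
            ∀ x ∈ I, ∀ y ∈ I, ¬ G.Adj x y) := by
  by_cases hlt : t < s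
  · refine ⟨Cst s t, 1, one_pos, ?_⟩
    intro δ hδ _
    refine ⟨⌈(t : ℝ) * 2 ^ (Cst s t) / δ⌉₊, ?_⟩
    intro n hn G hdeg
    have hn' : (t : ℝ) * 2 ^ (Cst s t) ≤ δ * n := by
      have := Nat.ceil_le.1 hn
      rw [div_le_iff₀ hδ] at this
      linarith
    refine core G s t ht hts (fun c => ∃ f : Qgraph s t →g G, Function.Injective f ∧
      Set.range f = (c : Set (Fin n))) ?_ ?_ (Or.inl hlt) δ hn' hdeg
    · rintro c ⟨f, hf, hr⟩
      have h1 : (c : Set (Fin n)).ncard = c.card := Set.ncard_coe_finset c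
      rw [← h1, ← hr, ← Set.image_univ, Set.ncard_image_of_injective _ hf, Set.ncard_univ]
      simp
      omega
    · intro A S hA hS hd hj
      exact Q_of_join G s t hts A S hA hS hd hj
  · have hst : s = t := by omega
    subst hst
    have hs0 : (1 : ℝ) ≤ s := by exact_mod_cast ht
    have hhalf : (s : ℝ) / ((s : ℝ) + s) = 1 / 2 := by field_simp; norm_num
    refine ⟨Cst 1 1, 1, one_pos, ?_⟩
    intro δ hδ _
    refine ⟨⌈((1 : ℕ) : ℝ) * 2 ^ (Cst 1 1) / δ⌉₊, ?_⟩
    intro n hn G hdeg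
    have hn' : ((1 : ℕ) : ℝ) * 2 ^ (Cst 1 1) ≤ δ * n := by
      have := Nat.ceil_le.1 hn
      rw [div_le_iff₀ hδ] at this
      linarith
    have h := core G 1 1 le_rfl le_rfl (fun c => G.IsNClique 2 c) (fun c hc => hc.card_eq) (by
      intro A S hA hS hd hj
      obtain ⟨a, rfl⟩ := Finset.card_eq_one.1 hA
      obtain ⟨b, rfl⟩ := Finset.card_eq_one.1 hS
      exact clique_pair (hj a (by simp) b (by simp))) (Or.inr fun c hc => hc) δ hn' (by
      intro v
      refine le_trans (le_of_eq ?_) (hdeg v)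
      rw [hhalf]; norm_num)
    rcases h with ⟨𝒞, h1, h2, h3⟩ | ⟨I, h1, h2⟩
    · exact Or.inl ⟨𝒞, h1, fun c hc => Or.inl ((h2 c hc).elim id id), h3⟩
    · refine Or.inr ⟨I, le_trans ?_ h1, h2⟩
      rw [hhalf]
      have e : ((1 : ℕ) : ℝ) / (((1 : ℕ) : ℝ) + ((1 : ℕ) : ℝ)) = 1 / 2 := by norm_num
      rw [e]
      gcongr
end

section
/- Let s, r be integers with r/2 ≤ s < r (or s = r/2), and set t = r − s. There is a constant C such that for every sufficiently small γ > 0 there is δ₀ > 0 such that for every δ ∈ (0, δ₀] and all sufficiently large n the following holds. If G is an n-vertex graph with minimum degree δ(G) ≥ (1 − s/r − δ)·n, then one of the following holds: (i) there is a subset X ⊆ V(G) with |X| ≥ (s/r − γ)·n containing at most δn² edges of G; or (ii) if s > r/2, there is a collection 𝒞 of pairwise vertex-disjoint copies of K₂ and of Q_{s,t} in G covering all but at most C vertices of G, such that 𝒞 contains a (δ/2, 2)-absorber; or (iii) if s = r/2, there is a collection 𝒞 of pairwise vertex-disjoint copies of K₃ and K₂ in G covering all but at most C vertices of G, such that 𝒞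 contains a (δ/2, 3)-absorber. -/
open Finset
open scoped Classical

/-- `𝒜` is a `(δ, g)`-absorber in the `n`-vertex graph `G`. -/
def IsAbsorber {n : ℕ} (G : SimpleGraph (Fin n)) (δ : ℝ) (g : ℕ)
    (𝒜 : Finset (Finset (Fin n))) : Prop :=
  (∀ c ∈ 𝒜, G.IsNClique g c) ∧
  (((𝒜.biUnion id).card : ℝ) ≤ δ * n) ∧
  (∀ x : Fin n, δ ^ 2 / (24 * (g : ℝ) ^ 2) * n ≤
    (((𝒜.filter fun c => ∃ y ∈ c, G.Adj x y).card : ℝ)))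

/-- Potential-function selection of many disjoint cliques hitting all neighbourhoods. -/
lemma pot_aux {V : Type*} [Fintype V] [DecidableEq V] (G : SimpleGraph V) (g : ℕ) (c : ℝ)
    (hc1 : c ≤ 1) (W₀ : Finset V) (m : ℕ)
    (hcl : ∀ W : Finset V, W.card ≤ W₀.card + g * m → ∀ y, y ∉ W →
      ∃ T : Finset V, G.IsNClique g T ∧ y ∈ T ∧ Disjoint T W)
    (hdeg : ∀ W : Finset V, W.card ≤ W₀.card + g * m → ∀ x,
      c * (Fintype.card V : ℝ) ≤ (((univ \ W).filter fun y => G.Adj x y).card : ℝ))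
    (hV : 0 < c * (Fintype.card V : ℝ)) :
    ∃ (D : Finset V) (τ : V → Finset V), D.card = m ∧
      (∀ y ∈ D, G.IsNClique g (τ y) ∧ y ∈ τ y ∧ Disjoint (τ y) W₀) ∧
      (∀ y ∈ D, ∀ z ∈ D, y ≠ z → Disjoint (τ y) (τ z)) ∧
      ∑ x : V, (1 / 2 : ℝ) ^ (D.filter fun y => G.Adj x y).card ≤
        (Fintype.card V : ℝ) * (1 - c / 2) ^ m := by
  induction m with
  | zero =>
    refine ⟨∅, fun _ => ∅, by simp, by simp, by simp, by simp⟩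
  | succ m ih =>
    obtain ⟨D, τ, hD, h1, h2, h3⟩ := ih
      (fun W hW => hcl W (hW.trans (by gcongr; omega)))
      (fun W hW => hdeg W (hW.trans (by gcongr; omega)))
    set W := W₀ ∪ D.biUnion τ with hWdef
    have hWc : W.card ≤ W₀.card + g * (m + 1) := by
      have e1 : (D.biUnion τ).card ≤ D.card * g :=
        card_biUnion_le_card_mul _ _ _ (fun y hy => (h1 y hy).1.card_eq.le)
      have e2 : W.card ≤ _ := card_union_le W₀ (D.biUnion τ)
      rw [hD] at e1
      have : g * (m + 1) = m * g + g := by ring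
      omega
    set w : V → ℝ := fun x => (1 / 2 : ℝ) ^ (D.filter fun y => G.Adj x y).card with hw
    have hw0 : ∀ x, 0 ≤ w x := fun x => by positivity
    have key : ∃ y ∈ univ \ W, c * ∑ x, w x ≤ ∑ x ∈ univ.filter (fun x => G.Adj x y), w x := by
      by_contra hcon
      push Not at hcon
      have hswap : ∑ y ∈ univ \ W, ∑ x ∈ univ.filter (fun x => G.Adj x y), w x =
          ∑ x, w x * (((univ \ W).filter fun y => G.Adj x y).card : ℝ) := by
        simp_rw [sum_filter]
        rw [sum_comm]
        refine sum_congr rfl fun x _ => ?_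
        rw [← sum_filter, sum_const, nsmul_eq_mul, mul_comm]
      have hlow : ∑ x, w x * (c * (Fintype.card V : ℝ)) ≤
          ∑ x, w x * (((univ \ W).filter fun y => G.Adj x y).card : ℝ) :=
        sum_le_sum fun x _ => mul_le_mul_of_nonneg_left (hdeg W hWc x) (hw0 x)
      have hne : Nonempty V := by
        by_contra h
        rw [not_nonempty_iff] at h
        simp at hV
      obtain ⟨x0⟩ := hne
      have hWne : (univ \ W).Nonempty := by
        have := lt_of_lt_of_le hV (hdeg W hWc x0)
        have h4 : 0 < ((univ \ W).filter fun y => G.Adj x0 y).card := by exact_mod_cast this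
        obtain ⟨y, hy⟩ := card_pos.1 h4
        exact ⟨y, (mem_filter.1 hy).1⟩
      have hup : ∑ y ∈ univ \ W, ∑ x ∈ univ.filter (fun x => G.Adj x y), w x <
          ∑ y ∈ univ \ W, c * ∑ x, w x := sum_lt_sum_of_nonempty hWne hcon
      rw [sum_const, nsmul_eq_mul] at hup
      rw [← sum_mul] at hlow
      have hcard : ((univ \ W).card : ℝ) ≤ Fintype.card V := by
        exact_mod_cast card_le_univ _
      have hS : 0 ≤ ∑ x, w x := sum_nonneg fun x _ => hw0 x
      have hcpos : 0 < c := by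
        by_contra h
        have : (0:ℝ) ≤ Fintype.card V := by positivity
        nlinarith
      have : ((univ \ W).card : ℝ) * (c * ∑ x, w x) ≤ Fintype.card V * (c * ∑ x, w x) :=
        mul_le_mul_of_nonneg_right hcard (by positivity)
      rw [hswap] at hup
      nlinarith
    obtain ⟨y, hyW, hy⟩ := key
    have hyW' : y ∉ W := (mem_sdiff.1 hyW).2
    obtain ⟨T, hT1, hT2, hT3⟩ := hcl W hWc y hyW'
    have hyD : y ∉ D := fun h => hyW' (mem_union_right _ (mem_biUnion.2 ⟨y, h, (h1 y h).2.1⟩))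
    have hτ : ∀ z ∈ D, Function.update τ y T z = τ z := fun z hz =>
      Function.update_of_ne (fun h : z = y => hyD (h ▸ hz)) _ _
    have hdis : ∀ z ∈ D, Disjoint T (τ z) := fun z hz =>
      hT3.mono_right (subset_union_right.trans' (subset_biUnion_of_mem τ hz))
    refine ⟨insert y D, Function.update τ y T, by rw [card_insert_of_notMem hyD, hD], ?_, ?_, ?_⟩
    · intro z hz
      rcases mem_insert.1 hz with rfl | hz
      · simp only [Function.update_self]
        exact ⟨hT1, hT2, hT3.mono_right subset_union_left⟩
      · rw [hτ z hz]; exact h1 z hz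
    · intro a ha b hb hab
      rcases mem_insert.1 ha with ha' | ha' <;> rcases mem_insert.1 hb with hb' | hb'
      · exact absurd (ha'.trans hb'.symm) hab
      · rw [hτ b hb', ha', Function.update_self]; exact hdis b hb'
      · rw [hτ a ha', hb', Function.update_self]; exact (hdis a ha').symm
      · rw [hτ a ha', hτ b hb']; exact h2 a ha' b hb' hab
    · have hstep : ∀ x, (1 / 2 : ℝ) ^ ((insert y D).filter fun y => G.Adj x y).card =
          w x - (1 / 2) * (if G.Adj x y then w x else 0) := by
        intro x
        rw [filter_insert]
        split_ifs with h
        · rw [card_insert_of_notMem (fun h => hyD (mem_filter.1 h).1), pow_succ]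
          simp only [hw]; ring
        · simp [hw]
      simp_rw [hstep]
      rw [sum_sub_distrib, ← mul_sum, ← sum_filter, pow_succ]
      have : (1 - c/2) * ∑ x, w x ≤ (1 - c/2) * ((Fintype.card V : ℝ) * (1 - c / 2) ^ m) :=
        mul_le_mul_of_nonneg_left h3 (by linarith)
      nlinarith

lemma pot_main {V : Type*} [Fintype V] [DecidableEq V] (G : SimpleGraph V) (g : ℕ) (c : ℝ)
    (hc1 : c ≤ 1) (W₀ : Finset V) (m : ℕ)
    (hcl : ∀ W : Finset V, W.card ≤ W₀.card + g * m → ∀ y, y ∉ W →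
      ∃ T : Finset V, G.IsNClique g T ∧ y ∈ T ∧ Disjoint T W)
    (hdeg : ∀ W : Finset V, W.card ≤ W₀.card + g * m → ∀ x,
      c * (Fintype.card V : ℝ) ≤ (((univ \ W).filter fun y => G.Adj x y).card : ℝ))
    (hV : 0 < c * (Fintype.card V : ℝ))
    (hbig : (Fintype.card V : ℝ) * Real.exp (-(c * m / 4)) < 1) :
    ∃ (D : Finset V) (τ : V → Finset V), D.card = m ∧
      (∀ y ∈ D, G.IsNClique g (τ y) ∧ y ∈ τ y ∧ Disjoint (τ y) W₀) ∧
      (∀ y ∈ D, ∀ z ∈ D, y ≠ z → Disjoint (τ y) (τ z)) ∧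
      ∀ x, c / 4 * m ≤ ((D.filter fun y => G.Adj x y).card : ℝ) := by
  obtain ⟨D, τ, hD, h1, h2, h3⟩ := pot_aux G g c hc1 W₀ m hcl hdeg hV
  refine ⟨D, τ, hD, h1, h2, fun x => ?_⟩
  by_contra hlt
  push Not at hlt
  set k := (D.filter fun y => G.Adj x y).card
  have e1 : (1 / 2 : ℝ) ^ k ≤ (Fintype.card V : ℝ) * (1 - c / 2) ^ m :=
    (single_le_sum (f := fun x => (1 / 2 : ℝ) ^ (D.filter fun y => G.Adj x y).card)
      (fun _ _ => by positivity) (mem_univ x)).trans h3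
  have e2 : (1 - c / 2) ^ m ≤ Real.exp (-(c * m / 2)) := by
    have : (1 - c / 2) ≤ Real.exp (-(c/2)) := by
      have := Real.add_one_le_exp (-(c/2)); linarith
    calc (1 - c / 2) ^ m ≤ (Real.exp (-(c/2))) ^ m := pow_le_pow_left₀ (by linarith) this m
      _ = _ := by rw [← Real.exp_nat_mul]; ring_nf
  have e3 : Real.exp (-(c * m / 4)) ≤ (1 / 2 : ℝ) ^ k := by
    have h2e : Real.exp (-1) ≤ 1 / 2 := by
      rw [Real.exp_neg, one_div]
      have := Real.add_one_le_exp (1:ℝ)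
      exact inv_anti₀ (by norm_num) (by linarith)
    calc Real.exp (-(c * m / 4)) ≤ Real.exp (k * (-1)) := Real.exp_le_exp.2 (by linarith)
      _ = (Real.exp (-1)) ^ k := Real.exp_nat_mul _ _
      _ ≤ _ := pow_le_pow_left₀ (Real.exp_pos _).le h2e k
  have e4 : Real.exp (-(c * m / 2)) = Real.exp (-(c * m / 4)) * Real.exp (-(c * m / 4)) := by
    rw [← Real.exp_add]; ring_nf
  have e5 : Real.exp (-(c * m / 4)) ≤
      ((Fintype.card V : ℝ) * Real.exp (-(c * m / 4))) * Real.exp (-(c * m / 4)) := by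
    rw [mul_assoc, ← e4]
    exact e3.trans (e1.trans (mul_le_mul_of_nonneg_left e2 (by positivity)))
  have := Real.exp_pos (-(c * m / 4))
  nlinarith

/-- Pigeonhole: find `k` vertices of `U` with `t` common neighbours in `A`. -/
lemma find_bip {V : Type*} [Fintype V] [DecidableEq V] (G : SimpleGraph V) (A U : Finset V)
    (k t N : ℕ) (h : ℝ) (hN : 0 < N) (hU : N ≤ U.card)
    (ht : 0 < t)
    (hh : (A.card : ℝ) * k / N + t * 2 ^ N ≤ h)
    (hdeg : ∀ u ∈ U, h ≤ ((A.filter fun a => G.Adj u a).card : ℝ)) :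
    ∃ X ⊆ U, ∃ T ⊆ A, X.card = k ∧ T.card = t ∧ ∀ x ∈ X, ∀ a ∈ T, G.Adj x a := by
  obtain ⟨U', hU'U, hU'⟩ := exists_subset_card_eq hU
  set A' := A.filter fun a => k ≤ (U'.filter fun u => G.Adj u a).card with hA'
  have hcount : ∑ u ∈ U', ((A.filter fun a => G.Adj u a).card : ℝ) =
      ∑ a ∈ A, ((U'.filter fun u => G.Adj u a).card : ℝ) := by
    simp_rw [card_filter]
    push_cast
    rw [sum_comm]
  have h1 : (N : ℝ) * h ≤ ∑ u ∈ U', ((A.filter fun a => G.Adj u a).card : ℝ) := by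
    rw [← hU', ← nsmul_eq_mul]
    exact card_nsmul_le_sum _ _ _ fun u hu => hdeg u (hU'U hu)
  have h2 : ∑ a ∈ A, ((U'.filter fun u => G.Adj u a).card : ℝ) ≤
      ∑ a ∈ A, ((k : ℝ) + if k ≤ (U'.filter fun u => G.Adj u a).card then (N : ℝ) else 0) := by
    refine sum_le_sum fun a _ => ?_
    split_ifs with hk
    · have : ((U'.filter fun u => G.Adj u a).card : ℝ) ≤ N := by
        rw [← hU']; exact_mod_cast card_filter_le _ _
      have : (0:ℝ) ≤ k := by positivity
      linarith
    · push Not at hk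
      have : ((U'.filter fun u => G.Adj u a).card : ℝ) ≤ k := by exact_mod_cast hk.le
      linarith
  rw [sum_add_distrib, sum_const, nsmul_eq_mul, ← sum_filter, sum_const, nsmul_eq_mul] at h2
  have hNr : (0:ℝ) < N := by exact_mod_cast hN
  have h3 : (t : ℝ) * 2 ^ N ≤ A'.card := by
    have h4 : (N : ℝ) * h ≤ A.card * k + A'.card * N := h1.trans (hcount.le.trans h2)
    have h5 : (A.card : ℝ) * k / N * N = A.card * k := by field_simp
    have h6 : ((t : ℝ) * 2 ^ N) * N ≤ A'.card * N := by nlinarith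
    exact le_of_mul_le_mul_right h6 hNr
  have h3' : t * 2 ^ N ≤ A'.card := by exact_mod_cast h3
  have hex : ∀ a, ∃ X, a ∈ A' → X ⊆ U'.filter (fun u => G.Adj u a) ∧ X.card = k := by
    intro a
    by_cases ha : a ∈ A'
    · obtain ⟨X, hX⟩ := exists_subset_card_eq (mem_filter.1 ha).2
      exact ⟨X, fun _ => hX⟩
    · exact ⟨∅, fun h => absurd h ha⟩
  choose F hF using hex
  obtain ⟨X, hX, hXt⟩ := exists_le_card_fiber_of_mul_le_card_of_maps_to (s := A')
    (t := U'.powerset) (f := F) (n := t)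
    (fun a ha => mem_powerset.2 ((hF a ha).1.trans (filter_subset _ _)))
    ⟨∅, by simp⟩ (by rw [card_powerset, hU', mul_comm]; exact h3')
  obtain ⟨T, hT, hTc⟩ := exists_subset_card_eq hXt
  obtain ⟨a, ha⟩ : T.Nonempty := card_pos.1 (by omega)
  have haX : ∀ b ∈ T, X ⊆ U'.filter (fun u => G.Adj u b) ∧ X.card = k := by
    intro b hb
    obtain ⟨hb1, hb2⟩ := mem_filter.1 (hT hb)
    rw [← hb2]; exact hF b hb1
  refine ⟨X, (haX a ha).1.trans ((filter_subset _ _).trans hU'U), T, ?_, (haX a ha).2, hTc, ?_⟩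
  · exact fun b hb => (mem_filter.1 ((mem_filter.1 (hT hb)).1)).1
  · exact fun x hx b hb => (mem_filter.1 ((haX b hb).1 hx)).2

/-- A tile: a copy of `K₂` or of `Q_{s,t}`. -/
def IsTile {V : Type*} (G : SimpleGraph V) (s t : ℕ) (c : Finset V) : Prop :=
  G.IsNClique 2 c ∨ ∃ f : Qgraph s t →g G, Function.Injective f ∧ Set.range f = (c : Set V)

lemma isNClique_pair {V : Type*} [DecidableEq V] {G : SimpleGraph V} {a b : V}
    (h : G.Adj a b) : G.IsNClique 2 ({a, b} : Finset V) := by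
  rw [SimpleGraph.isNClique_iff]
  refine ⟨?_, card_pair h.ne⟩
  rw [coe_pair, SimpleGraph.isClique_pair]
  exact fun _ => h

lemma tile_of_bip {V : Type*} [DecidableEq V] (G : SimpleGraph V) (s t : ℕ)
    (X T : Finset V) (p : V → V) (hX : X.card = s - t) (hT : T.card = t)
    (hadj : ∀ x ∈ X, ∀ a ∈ T, G.Adj x a) (hp : ∀ a ∈ T, G.Adj a (p a))
    (hinj : Set.InjOn p T) (hd1 : Disjoint X (T.image p)) (hd2 : Disjoint T (T.image p)) :
    IsTile G s t (X ∪ T ∪ T.image p) := by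
  right
  have hXT : Disjoint X T := by
    rw [disjoint_left]
    exact fun x hx hx' => (hadj x hx x hx').ne rfl
  let eX : Fin (s - t) ≃ X := (finCongr hX.symm).trans X.equivFin.symm
  let eT : Fin t ≃ T := (finCongr hT.symm).trans T.equivFin.symm
  let f : Fin (s - t) ⊕ Fin t ⊕ Fin t → V :=
    Sum.elim (fun i => eX i) (Sum.elim (fun i => eT i) (fun i => p (eT i)))
  have hpm : ∀ i, p (eT i) ∈ T.image p := fun i => mem_image_of_mem _ (eT i).2
  refine ⟨⟨f, ?_⟩, ?_, ?_⟩
  · intro x y hxy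
    rw [Qgraph, SimpleGraph.fromRel_adj] at hxy
    obtain ⟨_, (⟨a, b, rfl, rfl⟩ | ⟨b, rfl, rfl⟩) | (⟨a, b, rfl, rfl⟩ | ⟨b, rfl, rfl⟩)⟩ := hxy
    · exact hadj _ (eX a).2 _ (eT b).2
    · exact hp _ (eT b).2
    · exact (hadj _ (eX a).2 _ (eT b).2).symm
    · exact (hp _ (eT b).2).symm
  · show Function.Injective f
    rintro (x | x | x) (y | y | y) hxy
    · have h : (eX x : V) = eX y := hxy
      rw [eX.injective (Subtype.ext h)]
    · have h : (eX x : V) = eT y := hxy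
      exact absurd (h ▸ (eT y).2) (disjoint_left.1 hXT (eX x).2)
    · have h : (eX x : V) = p (eT y) := hxy
      exact absurd (h ▸ hpm y) (disjoint_left.1 hd1 (eX x).2)
    · have h : (eT x : V) = eX y := hxy
      exact absurd (h ▸ (eT x).2) (disjoint_left.1 hXT (eX y).2)
    · have h : (eT x : V) = eT y := hxy
      rw [eT.injective (Subtype.ext h)]
    · have h : (eT x : V) = p (eT y) := hxy
      exact absurd (h ▸ hpm y) (disjoint_left.1 hd2 (eT x).2)
    · have h : p (eT x) = eX y := hxy
      exact absurd (h ▸ hpm x) (disjoint_left.1 hd1 (eX y).2)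
    · have h : p (eT x) = eT y := hxy
      exact absurd (h ▸ hpm x) (disjoint_left.1 hd2 (eT y).2)
    · have h : p (eT x) = p (eT y) := hxy
      rw [eT.injective (Subtype.ext (hinj (eT x).2 (eT y).2 h))]
  · show Set.range f = _
    ext v
    simp only [Set.mem_range, coe_union, coe_image, Set.mem_union, Set.mem_image, mem_coe]
    constructor
    · rintro ⟨x | x | x, rfl⟩
      · exact Or.inl (Or.inl (eX x).2)
      · exact Or.inl (Or.inr (eT x).2)
      · exact Or.inr ⟨_, (eT x).2, rfl⟩
    · rintro ((h | h) | ⟨a, h, rfl⟩)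
      · exact ⟨Sum.inl (eX.symm ⟨v, h⟩), by simp [f]⟩
      · exact ⟨Sum.inr (Sum.inl (eT.symm ⟨v, h⟩)), by simp [f]⟩
      · exact ⟨Sum.inr (Sum.inr (eT.symm ⟨a, h⟩)), by simp [f]⟩

lemma greedy_tile {V : Type*} [Fintype V] [DecidableEq V] (G : SimpleGraph V) (s t N : ℕ)
    (ht : 0 < t) (hk : 0 < s - t) (hN : 0 < N) (h : ℝ) (j : ℕ) :
    ∀ (F : Finset (Finset V)) (A U : Finset V) (p : V → V), U.card ≤ j →
    (∀ c ∈ F, IsTile G s t c) → ((F : Set (Finset V)).PairwiseDisjoint id) →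
    Disjoint U (F.biUnion id) → (∀ a ∈ A, ({a, p a} : Finset V) ∈ F) →
    (∀ a ∈ A, G.Adj a (p a)) → (∀ a ∈ A, p a ∉ A) →
    ((A.card : ℝ) * ((s - t : ℕ) : ℝ) / N + t * 2 ^ N ≤ h) →
    (∀ u ∈ U, h + t * (U.card : ℝ) / ((s - t : ℕ) : ℝ) ≤
      ((A.filter fun a => G.Adj u a).card : ℝ)) →
    ∃ F' : Finset (Finset V), (∀ c ∈ F', IsTile G s t c) ∧
      ((F' : Set (Finset V)).PairwiseDisjoint id) ∧
      (F.biUnion id ⊆ F'.biUnion id) ∧ (F'.biUnion id ⊆ F.biUnion id ∪ U) ∧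
      (U \ F'.biUnion id).card < N ∧ (∀ c ∈ F, Disjoint c A → c ∈ F') := by
  induction j using Nat.strong_induction_on with
  | _ j ih =>
  intro F A U p hUj hF hFd hUF hA hadj hpA hh hdeg
  by_cases hUN : U.card < N
  · exact ⟨F, hF, hFd, subset_rfl, subset_union_left,
      (card_le_card sdiff_subset).trans_lt hUN, fun c hc _ => hc⟩
  push Not at hUN
  obtain ⟨X, hXU, T, hTA, hXc, hTc, hXT⟩ := find_bip G A U (s - t) t N h hN hUN ht hh
    (fun u hu => le_trans (le_add_of_nonneg_right (by positivity)) (hdeg u hu))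
  have hsame : ∀ c ∈ F, ∀ d ∈ F, ∀ x, x ∈ c → x ∈ d → c = d := by
    intro c hc d hd x hxc hxd
    by_contra hne
    exact disjoint_left.1 (hFd hc hd hne) hxc hxd
  have hinj : Set.InjOn p A := by
    intro a ha b hb hab
    have he := hsame _ (hA a ha) _ (hA b hb) (p a) (by simp) (by simp [hab])
    have : a ∈ ({b, p b} : Finset V) := he ▸ (by simp)
    rcases mem_insert.1 this with h1 | h1
    · exact h1
    · exact absurd (mem_singleton.1 h1 ▸ ha) (hpA b hb)
  have hmemF : ∀ a ∈ A, a ∈ F.biUnion id ∧ p a ∈ F.biUnion id := fun a ha =>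
    ⟨mem_biUnion.2 ⟨_, hA a ha, by simp⟩, mem_biUnion.2 ⟨_, hA a ha, by simp⟩⟩
  have hXF : Disjoint X (F.biUnion id) := hUF.mono_left hXU
  have hZ : IsTile G s t (X ∪ T ∪ T.image p) := by
    refine tile_of_bip G s t X T p hXc hTc hXT (fun a ha => hadj a (hTA ha))
      (hinj.mono (by exact_mod_cast hTA)) ?_ ?_
    · refine hXF.mono_right fun x hx => ?_
      obtain ⟨a, ha, rfl⟩ := mem_image.1 hx
      exact (hmemF a (hTA ha)).2
    · rw [disjoint_left]
      intro x hx hx'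
      obtain ⟨a, ha, rfl⟩ := mem_image.1 hx'
      exact hpA a (hTA ha) (hTA hx)
  set Z := X ∪ T ∪ T.image p with hZdef
  set R : Finset (Finset V) := T.image (fun a => ({a, p a} : Finset V)) with hR
  set F₁ := insert Z (F \ R) with hF₁
  have hZmem : ∀ x ∈ Z, x ∈ X ∨ ∃ c ∈ R, c ∈ F ∧ x ∈ c := by
    intro x hx
    rcases mem_union.1 hx with hx | hx
    · rcases mem_union.1 hx with hx | hx
      · exact Or.inl hx
      · exact Or.inr ⟨{x, p x}, mem_image_of_mem _ hx, hA x (hTA hx), by simp⟩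
    · obtain ⟨a, ha, rfl⟩ := mem_image.1 hx
      exact Or.inr ⟨{a, p a}, mem_image.2 ⟨a, ha, rfl⟩, hA a (hTA ha), by simp⟩
  have hRZ : ∀ c ∈ R, c ⊆ Z := by
    intro c hc x hx
    obtain ⟨a, ha, rfl⟩ := mem_image.1 hc
    rcases mem_insert.1 hx with rfl | hx
    · exact mem_union_left _ (mem_union_right _ ha)
    · rw [mem_singleton.1 hx]
      exact mem_union_right _ (mem_image_of_mem _ ha)
  have hun : F₁.biUnion id = F.biUnion id ∪ X := by
    ext x
    simp only [hF₁, biUnion_insert, id, mem_union, mem_biUnion, mem_sdiff]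
    constructor
    · rintro (hx | ⟨c, ⟨hc, _⟩, hx⟩)
      · rcases hZmem x hx with hx | ⟨c, _, hc, hx⟩
        · exact Or.inr hx
        · exact Or.inl ⟨c, hc, hx⟩
      · exact Or.inl ⟨c, hc, hx⟩
    · rintro (⟨c, hc, hx⟩ | hx)
      · by_cases hcR : c ∈ R
        · exact Or.inl (hRZ c hcR hx)
        · exact Or.inr ⟨c, ⟨hc, hcR⟩, hx⟩
      · exact Or.inl (mem_union_left _ (mem_union_left _ hx))
  have hZd : ∀ c ∈ F \ R, Disjoint Z c := by
    intro c hc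
    obtain ⟨hc, hcR⟩ := mem_sdiff.1 hc
    rw [disjoint_left]
    intro x hx hxc
    rcases hZmem x hx with hx | ⟨d, hdR, hd, hxd⟩
    · exact disjoint_left.1 hXF hx (mem_biUnion.2 ⟨c, hc, hxc⟩)
    · exact hcR (hsame c hc d hd x hxc hxd ▸ hdR)
  have hcU : (U \ X).card = U.card - (s - t) := by rw [card_sdiff_of_subset hXU, hXc]
  have hle : s - t ≤ U.card := hXc ▸ card_le_card hXU
  have o1 : ∀ c ∈ F₁, IsTile G s t c := by
    intro c hc
    rcases mem_insert.1 hc with rfl | hc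
    · exact hZ
    · exact hF c (mem_sdiff.1 hc).1
  have o2 : (F₁ : Set (Finset V)).PairwiseDisjoint id := by
    intro c hc d hd hcd
    rcases mem_insert.1 (mem_coe.1 hc) with hc' | hc' <;>
      rcases mem_insert.1 (mem_coe.1 hd) with hd' | hd'
    · exact absurd (hc'.trans hd'.symm) hcd
    · rw [hc']; exact hZd d hd'
    · rw [hd']; exact (hZd c hc').symm
    · exact hFd (mem_sdiff.1 hc').1 (mem_sdiff.1 hd').1 hcd
  have o3 : Disjoint (U \ X) (F₁.biUnion id) := by
    rw [hun, disjoint_union_right]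
    exact ⟨hUF.mono_left sdiff_subset, sdiff_disjoint⟩
  have o4 : ∀ a ∈ A \ T, ({a, p a} : Finset V) ∈ F₁ := by
    intro a ha
    obtain ⟨ha, haT⟩ := mem_sdiff.1 ha
    refine mem_insert_of_mem (mem_sdiff.2 ⟨hA a ha, fun hR' => ?_⟩)
    obtain ⟨b, hb, he⟩ := mem_image.1 hR'
    have : a ∈ ({b, p b} : Finset V) := he.symm ▸ (by simp)
    rcases mem_insert.1 this with h1 | h1
    · exact haT (h1 ▸ hb)
    · exact hpA b (hTA hb) (mem_singleton.1 h1 ▸ ha)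
  have o5 : ∀ a ∈ A \ T, G.Adj a (p a) := by
    exact fun a ha => hadj a (mem_sdiff.1 ha).1
  have o6 : ∀ a ∈ A \ T, p a ∉ A \ T := by
    exact fun a ha h' => hpA a (mem_sdiff.1 ha).1 (mem_sdiff.1 h').1
  have o7 : ((A \ T).card : ℝ) * ((s - t : ℕ) : ℝ) / N + t * 2 ^ N ≤ h := by
    refine le_trans ?_ hh
    gcongr
    exact sdiff_subset
  have o8 : ∀ u ∈ U \ X, h + t * ((U \ X).card : ℝ) / ((s - t : ℕ) : ℝ) ≤
      (((A \ T).filter fun a => G.Adj u a).card : ℝ) := by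
    intro u hu
    have h1 := hdeg u (mem_sdiff.1 hu).1
    have h2 : (A.filter fun a => G.Adj u a).card ≤
        ((A \ T).filter fun a => G.Adj u a).card + t := by
      rw [← hTc]
      refine (card_le_card ?_).trans (card_union_le _ _)
      intro x hx
      obtain ⟨hx1, hx2⟩ := mem_filter.1 hx
      by_cases hxT : x ∈ T
      · exact mem_union_right _ hxT
      · exact mem_union_left _ (mem_filter.2 ⟨mem_sdiff.2 ⟨hx1, hxT⟩, hx2⟩)
    have h2' : ((A.filter fun a => G.Adj u a).card : ℝ) ≤
        ((A \ T).filter fun a => G.Adj u a).card + t := by exact_mod_cast h2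
    rw [hcU, Nat.cast_sub hle]
    have hk' : (0:ℝ) < ((s - t : ℕ) : ℝ) := by exact_mod_cast hk
    have h3 : t * ((U.card : ℝ) - ((s - t : ℕ) : ℝ)) / ((s - t : ℕ) : ℝ) =
      t * (U.card : ℝ) / ((s - t : ℕ) : ℝ) - t := by field_simp
    rw [h3]; linarith
  obtain ⟨F', g1, g2, g3, g4, g5, g6⟩ := ih (U.card - (s - t)) (by omega) F₁ (A \ T) (U \ X) p
    hcU.le o1 o2 o3 o4 o5 o6 o7 o8
  refine ⟨F', g1, g2, ?_, ?_, ?_, ?_⟩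
  · rw [hun] at g3; exact subset_union_left.trans g3
  · rw [hun] at g4
    refine g4.trans ?_
    intro x hx
    simp only [mem_union, mem_sdiff] at hx ⊢
    rcases hx with (hx | hx) | hx
    · exact Or.inl hx
    · exact Or.inr (hXU hx)
    · exact Or.inr hx.1
  · refine lt_of_le_of_lt (card_le_card ?_) g5
    intro x hx
    obtain ⟨hx1, hx2⟩ := mem_sdiff.1 hx
    refine mem_sdiff.2 ⟨mem_sdiff.2 ⟨hx1, fun hxX => hx2 (g3 ?_)⟩, hx2⟩
    rw [hun]; exact mem_union_right _ hxX
  · intro c hc hcA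
    refine g6 c (mem_insert_of_mem (mem_sdiff.2 ⟨hc, fun hcR => ?_⟩)) (hcA.mono_right sdiff_subset)
    obtain ⟨a, ha, rfl⟩ := mem_image.1 hcR
    exact disjoint_left.1 hcA (mem_insert_self _ _) (hTA ha)

/-- Structure of the vertices missed by a maximum matching of `G - W`. -/
lemma matching_struct {V : Type*} [Fintype V] [DecidableEq V] (G : SimpleGraph V) (W : Finset V) :
    ∃ (M : Finset (Finset V)) (A : Finset V) (p : V → V),
      (∀ c ∈ M, G.IsNClique 2 c) ∧ ((M : Set (Finset V)).PairwiseDisjoint id) ∧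
      Disjoint W (M.biUnion id) ∧
      (∀ a ∈ A, ({a, p a} : Finset V) ∈ M) ∧ (∀ a ∈ A, G.Adj a (p a)) ∧
      (∀ a ∈ A, p a ∉ A) ∧ Set.InjOn p A ∧
      (∀ x ∈ A.image p ∪ (univ \ (W ∪ M.biUnion id)),
        ∀ y ∈ A.image p ∪ (univ \ (W ∪ M.biUnion id)), ¬ G.Adj x y) ∧
      (∀ x, x ∈ M.biUnion id → x ∉ A → ∀ u ∈ univ \ (W ∪ M.biUnion id),
        ∀ v ∈ univ \ (W ∪ M.biUnion id), G.Adj u x → G.Adj v x → u = v) := by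
  let P : Finset (Finset V) → Prop := fun M =>
    (∀ c ∈ M, G.IsNClique 2 c) ∧ ((M : Set (Finset V)).PairwiseDisjoint id) ∧
      Disjoint W (M.biUnion id)
  obtain ⟨M, hM, hmax⟩ := exists_max_image (univ.filter P) card
    ⟨∅, by simp [P]⟩
  obtain ⟨hM1, hM2, hM3⟩ := (mem_filter.1 hM).2
  set U := univ \ (W ∪ M.biUnion id) with hU
  have hUmem : ∀ u, u ∈ U ↔ u ∉ W ∧ ∀ c ∈ M, u ∉ c := by
    intro u; simp [hU]
  have hsame : ∀ c ∈ M, ∀ d ∈ M, ∀ x, x ∈ c → x ∈ d → c = d := by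
    intro c hc d hd x hxc hxd
    by_contra hne
    exact disjoint_left.1 (hM2 hc hd hne) hxc hxd
  -- the exchange principle
  have hexch : ∀ R ⊆ M, ∀ S : Finset (Finset V), (∀ c ∈ S, G.IsNClique 2 c) →
      ((S : Set (Finset V)).PairwiseDisjoint id) → S.biUnion id ⊆ R.biUnion id ∪ U →
      S.card ≤ R.card := by
    intro R hR S hS1 hS2 hS3
    have hdis : ∀ c ∈ S, ∀ d ∈ M \ R, Disjoint c d := by
      intro c hc d hd
      obtain ⟨hd, hdR⟩ := mem_sdiff.1 hd
      rw [disjoint_left]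
      intro x hx hxd
      rcases mem_union.1 (hS3 (mem_biUnion.2 ⟨c, hc, hx⟩)) with h1 | h1
      · obtain ⟨e, he, hxe⟩ := mem_biUnion.1 h1
        exact hdR (hsame d hd e (hR he) x hxd hxe ▸ he)
      · exact ((hUmem x).1 h1).2 d hd hxd
    have hP : P (M \ R ∪ S) := by
      refine ⟨?_, ?_, ?_⟩
      · intro c hc
        rcases mem_union.1 hc with hc | hc
        · exact hM1 c (mem_sdiff.1 hc).1
        · exact hS1 c hc
      · intro c hc d hd hcd
        rcases mem_union.1 (mem_coe.1 hc) with hc | hc <;>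
          rcases mem_union.1 (mem_coe.1 hd) with hd | hd
        · exact hM2 (mem_sdiff.1 hc).1 (mem_sdiff.1 hd).1 hcd
        · exact (hdis d hd c hc).symm
        · exact hdis c hc d hd
        · exact hS2 hc hd hcd
      · rw [disjoint_left]
        intro x hxW hx
        obtain ⟨c, hc, hxc⟩ := mem_biUnion.1 hx
        rcases mem_union.1 hc with hc | hc
        · exact disjoint_left.1 hM3 hxW (mem_biUnion.2 ⟨c, (mem_sdiff.1 hc).1, hxc⟩)
        · rcases mem_union.1 (hS3 (mem_biUnion.2 ⟨c, hc, hxc⟩)) with h1 | h1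
          · obtain ⟨e, he, hxe⟩ := mem_biUnion.1 h1
            exact disjoint_left.1 hM3 hxW (mem_biUnion.2 ⟨e, hR he, hxe⟩)
          · exact ((hUmem x).1 h1).1 hxW
    have hdj : Disjoint (M \ R) S := by
      rw [disjoint_left]
      intro c hc hcS
      have h1 := hdis c hcS c hc
      have h2 := (hS1 c hcS).card_eq
      rw [disjoint_self_iff_empty] at h1
      simp [h1] at h2
    have h1 := hmax _ (mem_filter.2 ⟨mem_univ _, hP⟩)
    rw [card_union_of_disjoint hdj, card_sdiff_of_subset hR] at h1
    have := card_le_card hR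
    omega
  have hedge : ∀ x, ∃ y, x ∈ M.biUnion id → G.Adj x y ∧ ({x, y} : Finset V) ∈ M := by
    intro x
    by_cases hx : x ∈ M.biUnion id
    · obtain ⟨c, hc, hxc⟩ := mem_biUnion.1 hx
      obtain ⟨a, b, hab, rfl⟩ := card_eq_two.1 (hM1 c hc).card_eq
      have hadj : G.Adj a b := (hM1 _ hc).isClique (by simp) (by simp) hab
      rcases mem_insert.1 hxc with h | h
      · subst h; exact ⟨b, fun _ => ⟨hadj, hc⟩⟩
      · rw [mem_singleton] at h; subst h
        exact ⟨a, fun _ => ⟨hadj.symm, by rwa [pair_comm]⟩⟩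
    · exact ⟨x, fun h => absurd h hx⟩
  choose p hp using hedge
  have hUU : ∀ u ∈ U, ∀ v ∈ U, ¬ G.Adj u v := by
    intro u hu v hv huv
    have := hexch ∅ (by simp) {{u, v}} (by simpa using isNClique_pair huv) (by simp)
      (by intro x; simp; rintro (rfl | rfl) <;> assumption)
    simp at this
  have hne : ∀ u ∈ U, ∀ c ∈ M, ∀ x ∈ c, u ≠ x := by
    rintro u hu c hc x hx rfl
    exact ((hUmem u).1 hu).2 c hc hx
  have haug1 : ∀ a b, ({a, b} : Finset V) ∈ M → a ≠ b → ∀ u ∈ U, ∀ v ∈ U, u ≠ v → G.Adj u a →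
      G.Adj v b → False := by
    intro a b hab hab' u hu v hv huv hua hvb
    have n1 := hne u hu _ hab a (by simp)
    have n2 := hne u hu _ hab b (by simp)
    have n3 := hne v hv _ hab a (by simp)
    have n4 := hne v hv _ hab b (by simp)
    have hd : Disjoint ({u, a} : Finset V) {v, b} := by
      simp [huv.symm, n2.symm, hab'.symm, n3]
    have hnee : ({u, a} : Finset V) ≠ {v, b} := by
      intro h; rw [h] at hd; simp at hd
    have := hexch {{a, b}} (by simpa using hab) {{u, a}, {v, b}}
      (by intro c hc; simp at hc; rcases hc with rfl | rfl <;> apply isNClique_pair <;> assumption)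
      (by
        intro c hc d hd' hcd
        simp only [coe_insert, coe_singleton, Set.mem_insert_iff, Set.mem_singleton_iff] at hc hd'
        rcases hc with rfl | rfl <;> rcases hd' with rfl | rfl <;>
          first
            | exact absurd rfl hcd
            | exact hd
            | exact hd.symm)
      (by intro x; simp; rintro (rfl | rfl | rfl | rfl) <;> simp [hu, hv])
    rw [card_pair hnee] at this
    simp at this
  set A := (M.biUnion id).filter fun a => ∃ u ∈ U, ∃ v ∈ U, u ≠ v ∧ G.Adj u a ∧ G.Adj v a with hA
  have hAm : ∀ a ∈ A, a ∈ M.biUnion id := fun a ha => (mem_filter.1 ha).1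
  have hApick : ∀ a ∈ A, ∀ u, ∃ v ∈ U, v ≠ u ∧ G.Adj v a := by
    intro a ha u
    obtain ⟨v, hv, w, hw, hvw, h1, h2⟩ := (mem_filter.1 ha).2
    by_cases h : v = u
    · exact ⟨w, hw, fun h' => hvw (h.trans h'.symm), h2⟩
    · exact ⟨v, hv, h, h1⟩
  have hBU : ∀ a ∈ A, ∀ u ∈ U, ¬ G.Adj u (p a) := by
    intro a ha u hu hadj
    obtain ⟨v, hv, hvu, hva⟩ := hApick a ha u
    have := hp a (hAm a ha)
    exact haug1 a (p a) this.2 this.1.ne v hv u hu hvu hva hadj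
  have hpA : ∀ a ∈ A, p a ∉ A := by
    intro a ha hpa
    obtain ⟨v, hv, _, hva⟩ := hApick _ hpa a
    exact hBU a ha v hv hva
  have hinj : Set.InjOn p A := by
    intro a ha b hb hab
    have he := hsame _ (hp a (hAm a ha)).2 _ (hp b (hAm b hb)).2 (p a) (by simp) (by simp [hab])
    have : a ∈ ({b, p b} : Finset V) := he ▸ (by simp)
    rcases mem_insert.1 this with h1 | h1
    · exact h1
    · exact absurd (mem_singleton.1 h1 ▸ ha) (hpA b hb)
  have hBB : ∀ a ∈ A, ∀ b ∈ A, ¬ G.Adj (p a) (p b) := by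
    intro a ha b hb hadj
    obtain ⟨u, hu, _, hua⟩ := hApick a ha a
    obtain ⟨v, hv, hvu, hvb⟩ := hApick b hb u
    have ea := hp a (hAm a ha)
    have eb := hp b (hAm b hb)
    have hab : a ≠ b := by
      rintro rfl; exact hadj.ne rfl
    have n1 := hne u hu _ ea.2 a (by simp)
    have n2 := hne u hu _ ea.2 (p a) (by simp)
    have n3 := hne u hu _ eb.2 b (by simp)
    have n4 := hne u hu _ eb.2 (p b) (by simp)
    have m1 := hne v hv _ ea.2 a (by simp)
    have m2 := hne v hv _ ea.2 (p a) (by simp)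
    have m3 := hne v hv _ eb.2 b (by simp)
    have m4 := hne v hv _ eb.2 (p b) (by simp)
    have q1 : a ≠ p b := fun h => hpA b hb (h ▸ ha)
    have q2 : b ≠ p a := fun h => hpA a ha (h ▸ hb)
    have q3 := hadj.ne
    have q4 := ea.1.ne
    have q5 := eb.1.ne
    have hd1 : Disjoint ({u, a} : Finset V) {v, b} := by
      simp [hvu, n3.symm, hab.symm, m1]
    have hd2 : Disjoint ({u, a} : Finset V) {p a, p b} := by
      simp [q1.symm, q4.symm, n2.symm, n4.symm]
    have hd3 : Disjoint ({v, b} : Finset V) {p a, p b} := by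
      simp [q2.symm, q5.symm, m2.symm, m4.symm]
    have hnee : ∀ {c d : Finset V}, Disjoint c d → c.Nonempty → c ≠ d := by
      rintro c d h hc rfl
      rw [disjoint_self_iff_empty] at h
      simp [h] at hc
    have hdR : ({a, p a} : Finset V) ≠ {b, p b} := by
      intro h
      have : a ∈ ({b, p b} : Finset V) := h ▸ (by simp)
      simp [hab, q1] at this
    have := hexch {{a, p a}, {b, p b}}
      (by intro c hc; simp at hc; rcases hc with rfl | rfl; exacts [ea.2, eb.2])
      {{u, a}, {v, b}, {p a, p b}}
      (by intro c hc; simp at hc; rcases hc with rfl | rfl | rfl <;> apply isNClique_pair <;> assumption)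
      (by
        intro c hc d hd hcd
        simp only [coe_insert, coe_singleton, Set.mem_insert_iff, Set.mem_singleton_iff] at hc hd
        rcases hc with rfl | rfl | rfl <;> rcases hd with rfl | rfl | rfl <;>
          first
            | exact absurd rfl hcd
            | exact hd1
            | exact hd2
            | exact hd3
            | exact hd1.symm
            | exact hd2.symm
            | exact hd3.symm)
      (by intro x; simp; rintro (rfl | rfl | rfl | rfl | rfl | rfl) <;> simp [hu, hv])
    rw [card_pair hdR, card_insert_of_notMem, card_pair (hnee hd3 (by simp))] at this
    · omega
    · simp only [mem_insert, mem_singleton, not_or]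
      exact ⟨hnee hd1 (by simp), hnee hd2 (by simp)⟩
  refine ⟨M, A, p, hM1, hM2, hM3, fun a ha => (hp a (hAm a ha)).2,
    fun a ha => (hp a (hAm a ha)).1, hpA, hinj, ?_, ?_⟩
  · intro x hx y hy hxy
    rcases mem_union.1 hx with hx | hx <;> rcases mem_union.1 hy with hy | hy
    · obtain ⟨a, ha, rfl⟩ := mem_image.1 hx
      obtain ⟨b, hb, rfl⟩ := mem_image.1 hy
      exact hBB a ha b hb hxy
    · obtain ⟨a, ha, rfl⟩ := mem_image.1 hx
      exact hBU a ha y hy hxy.symm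
    · obtain ⟨b, hb, rfl⟩ := mem_image.1 hy
      exact hBU b hb x hx hxy
    · exact hUU x hx y hy hxy
  · intro x hx hxA u hu v hv hux hvx
    by_contra huv
    exact hxA (mem_filter.2 ⟨hx, u, hu, v, hv, huv, hux, hvx⟩)

lemma degR_eq {n : ℕ} (G : SimpleGraph (Fin n)) (v : Fin n) :
    degR G v = (univ.filter fun y => G.Adj v y).card := by
  rw [degR, Nat.card_eq_fintype_card, Fintype.card_subtype]
  congr 1

lemma edgesIn_indep {n : ℕ} (G : SimpleGraph (Fin n)) (X : Finset (Fin n))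
    (h : ∀ x ∈ X, ∀ y ∈ X, ¬ G.Adj x y) : edgesIn G (X : Set (Fin n)) = 0 := by
  rw [edgesIn, Nat.card_eq_zero]
  left
  constructor
  rintro ⟨e, he, hX⟩
  induction e using Sym2.ind with
  | _ x y => exact h x (hX x (by simp)) y (hX y (by simp)) he

lemma edgesIn_le {n : ℕ} (G : SimpleGraph (Fin n)) (X W : Finset (Fin n))
    (h : ∀ x ∈ X, ∀ y ∈ X, G.Adj x y → x ∈ W ∨ y ∈ W) :
    edgesIn G (X : Set (Fin n)) ≤ W.card * n := by
  have h1 : edgesIn G (X : Set (Fin n)) ≤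
      ((W ×ˢ (univ : Finset (Fin n))).image fun q => s(q.1, q.2)).card := by
    rw [edgesIn, Nat.card_eq_fintype_card, Fintype.card_subtype]
    refine card_le_card fun e he => ?_
    obtain ⟨he, hX⟩ := (mem_filter.1 he).2
    induction e using Sym2.ind with
    | _ x y =>
      rcases h x (hX x (by simp)) y (hX y (by simp)) he with hw | hw
      · exact mem_image.2 ⟨(x, y), by simp [hw], rfl⟩
      · exact mem_image.2 ⟨(y, x), by simp [hw], Sym2.eq_swap⟩
  refine h1.trans (card_image_le.trans ?_)
  simp [card_product]

lemma matching_struct2 {n : ℕ} (G : SimpleGraph (Fin n)) (W : Finset (Fin n)) :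
    ∃ (M : Finset (Finset (Fin n))) (A : Finset (Fin n)) (p : Fin n → Fin n) (e : Fin n → ℕ),
      (∀ c ∈ M, G.IsNClique 2 c) ∧ ((M : Set (Finset (Fin n))).PairwiseDisjoint id) ∧
      Disjoint W (M.biUnion id) ∧
      (∀ a ∈ A, ({a, p a} : Finset (Fin n)) ∈ M) ∧ (∀ a ∈ A, G.Adj a (p a)) ∧
      (∀ a ∈ A, p a ∉ A) ∧ 
      (∃ I : Finset (Fin n), I.card = A.card + (univ \ (W ∪ M.biUnion id)).card ∧
        ∀ x ∈ I, ∀ y ∈ I, ¬ G.Adj x y) ∧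
      (∀ u ∈ univ \ (W ∪ M.biUnion id),
        degR G u ≤ W.card + (A.filter fun a => G.Adj u a).card + e u) ∧
      (∀ S ⊆ univ \ (W ∪ M.biUnion id), ∑ u ∈ S, e u + 2 * A.card ≤ n) := by
  obtain ⟨M, A, p, h1, h2, h3, h4, h5, h6, h7, h8, h9⟩ := matching_struct G W
  have hAM : A ⊆ M.biUnion id := fun a ha => mem_biUnion.2 ⟨_, h4 a ha, by simp⟩
  have hBM : A.image p ⊆ M.biUnion id := fun b hb => by
    obtain ⟨a, ha, rfl⟩ := mem_image.1 hb
    exact mem_biUnion.2 ⟨_, h4 a ha, by simp⟩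
  have hcB : (A.image p).card = A.card := card_image_of_injOn h7
  have hdAB : Disjoint A (A.image p) := by
    rw [disjoint_left]
    intro x hx hx'
    obtain ⟨a, ha, rfl⟩ := mem_image.1 hx'
    exact h6 a ha hx
  set U := univ \ (W ∪ M.biUnion id) with hU
  have hdBU : Disjoint (A.image p) U := by
    rw [disjoint_left]
    intro x hx hx'
    exact (mem_sdiff.1 hx').2 (mem_union_right _ (hBM hx))
  set E : Fin n → Finset (Fin n) := fun u =>
    (M.biUnion id \ (A ∪ A.image p)).filter fun x => G.Adj u x with hE
  refine ⟨M, A, p, fun u => (E u).card, h1, h2, h3, h4, h5, h6,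
    ⟨A.image p ∪ U, by rw [card_union_of_disjoint hdBU, hcB], h8⟩, ?_, ?_⟩
  · intro u hu
    rw [degR_eq]
    refine le_trans (card_le_card (t := W ∪ A.filter (fun a => G.Adj u a) ∪ E u) ?_)
      ((card_union_le _ _).trans (Nat.add_le_add_right (card_union_le _ _) _))
    intro x hx
    have hux := (mem_filter.1 hx).2
    by_cases hxW : x ∈ W
    · exact mem_union_left _ (mem_union_left _ hxW)
    by_cases hxA : x ∈ A
    · exact mem_union_left _ (mem_union_right _ (mem_filter.2 ⟨hxA, hux⟩))
    by_cases hxM : x ∈ M.biUnion id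
    · refine mem_union_right _ (mem_filter.2 ⟨mem_sdiff.2 ⟨hxM, ?_⟩, hux⟩)
      intro h
      rcases mem_union.1 h with h | h
      · exact hxA h
      · exact h8 u (mem_union_right _ hu) x (mem_union_left _ h) hux
    · exact absurd hux (h8 u (mem_union_right _ hu) x (mem_union_right _
        (mem_sdiff.2 ⟨mem_univ _, fun h => (mem_union.1 h).elim hxW hxM⟩)))
  · intro S hS
    have hd : (S : Set (Fin n)).PairwiseDisjoint E := by
      intro u hu v hv huv
      show Disjoint (E u) (E v)
      rw [disjoint_left]
      intro x hx hx'
      obtain ⟨hx1, hx2⟩ := mem_filter.1 hx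
      obtain ⟨hx3, hx4⟩ := mem_sdiff.1 hx1
      exact huv (h9 x hx3 (fun h => hx4 (mem_union_left _ h)) u (hS hu) v (hS hv) hx2
        (mem_filter.1 hx').2)
    rw [← card_biUnion hd]
    have hdis : Disjoint (S.biUnion E) (A ∪ A.image p) := by
      rw [disjoint_left]
      intro x hx
      obtain ⟨u, _, hx⟩ := mem_biUnion.1 hx
      exact (mem_sdiff.1 (mem_filter.1 hx).1).2
    have : 2 * A.card = (A ∪ A.image p).card := by
      rw [card_union_of_disjoint hdAB, hcB]; ring
    rw [this, ← card_union_of_disjoint hdis]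
    exact (card_le_univ _).trans (by simp)

/-- Absorber-type families of disjoint cliques avoiding `W₀`. -/
lemma absorber_exists {n : ℕ} (G : SimpleGraph (Fin n)) (g m : ℕ) (c δ : ℝ)
    (hc0 : 0 < c) (hc1 : c ≤ 1) (hn : 0 < n) (W₀ : Finset (Fin n))
    (hcl : ∀ W : Finset (Fin n), W.card ≤ W₀.card + g * m → ∀ y, y ∉ W →
      ∃ T : Finset (Fin n), G.IsNClique g T ∧ y ∈ T ∧ Disjoint T W)
    (hWd : ((W₀.card + g * m : ℕ) : ℝ) ≤ δ * n)
    (hdeg : ∀ v, (c + δ) * n ≤ (degR G v : ℝ))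
    (hbig : (n : ℝ) * Real.exp (-(c * m / 4)) < 1) :
    ∃ (D : Finset (Fin n)) (τ : Fin n → Finset (Fin n)), D.card = m ∧
      (∀ y ∈ D, G.IsNClique g (τ y) ∧ y ∈ τ y ∧ Disjoint (τ y) W₀) ∧
      (∀ y ∈ D, ∀ z ∈ D, y ≠ z → Disjoint (τ y) (τ z)) ∧
      (∀ x, c / 4 * m ≤ ((D.filter fun y => G.Adj x y).card : ℝ)) ∧
      (((D.image τ : Finset (Finset (Fin n))) : Set (Finset (Fin n))).PairwiseDisjoint id) ∧
      ((D.image τ).biUnion id).card ≤ g * m ∧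
      (∀ x, c / 4 * m ≤ (((D.image τ).filter fun c => ∃ y ∈ c, G.Adj x y).card : ℝ)) := by
  have hnr : (0:ℝ) < n := by exact_mod_cast hn
  obtain ⟨D, τ, h1, h2, h3, h4⟩ := pot_main G g c hc1 W₀ m hcl (by
    intro W hW x
    have hd := hdeg x
    rw [degR_eq] at hd
    have h5 : (univ.filter fun y => G.Adj x y).card ≤
        ((univ \ W).filter fun y => G.Adj x y).card + W.card := by
      refine (card_le_card ?_).trans (card_union_le _ _)
      intro y hy
      by_cases hyW : y ∈ W
      · exact mem_union_right _ hyW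
      · exact mem_union_left _ (mem_filter.2 ⟨mem_sdiff.2 ⟨mem_univ _, hyW⟩, (mem_filter.1 hy).2⟩)
    have h5' : ((univ.filter fun y => G.Adj x y).card : ℝ) ≤
        ((univ \ W).filter fun y => G.Adj x y).card + W.card := by exact_mod_cast h5
    have h6 : (W.card : ℝ) ≤ ((W₀.card + g * m : ℕ) : ℝ) := by exact_mod_cast hW
    rw [Fintype.card_fin]
    linarith) (by rw [Fintype.card_fin]; positivity) (by rwa [Fintype.card_fin])
  have hinj : Set.InjOn τ D := by
    intro a ha b hb hab
    by_contra hne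
    have := h3 a ha b hb hne
    exact disjoint_left.1 this (h2 a ha).2.1 (hab ▸ (h2 a ha).2.1)
  refine ⟨D, τ, h1, h2, h3, h4, ?_, ?_, ?_⟩
  · intro a ha b hb hab
    obtain ⟨x, hx, rfl⟩ := mem_image.1 (mem_coe.1 ha)
    obtain ⟨y, hy, rfl⟩ := mem_image.1 (mem_coe.1 hb)
    exact h3 x hx y hy (fun h => hab (by rw [h]))
  · rw [mul_comm, ← h1, ← card_image_of_injOn hinj]
    refine card_biUnion_le_card_mul _ _ _ fun a ha => ?_
    obtain ⟨x, hx, rfl⟩ := mem_image.1 ha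
    exact (h2 x hx).1.card_eq.le
  · intro x
    refine (h4 x).trans ?_
    have : (D.filter fun y => G.Adj x y).card =
        ((D.filter fun y => G.Adj x y).image τ).card :=
      (card_image_of_injOn (hinj.mono (by exact_mod_cast filter_subset _ _))).symm
    rw [this]
    have hsub : (D.filter fun y => G.Adj x y).image τ ⊆
        (D.image τ).filter fun c => ∃ y ∈ c, G.Adj x y := by
      intro a ha
      obtain ⟨y, hy, rfl⟩ := mem_image.1 ha
      obtain ⟨hy1, hy2⟩ := mem_filter.1 hy
      exact mem_filter.2 ⟨mem_image_of_mem _ hy1, y, (h2 y hy1).2.1, hy2⟩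
    exact_mod_cast card_le_card hsub

/-- The singular case `s = r / 2`. -/
lemma sing_case {n : ℕ} (G : SimpleGraph (Fin n)) (γ δ : ℝ) (m : ℕ) (hδ : 0 < δ)
    (hδ1 : δ ≤ 1 / 16) (hδγ : 5 * δ ≤ γ) (hn : 0 < n)
    (hdeg : ∀ v, (1 / 2 - δ) * n ≤ (degR G v : ℝ))
    (hno : ∀ X : Finset (Fin n), (1 / 2 - γ) * n ≤ (X.card : ℝ) →
      δ * (n : ℝ) ^ 2 < (edgesIn G (X : Set (Fin n)) : ℝ))
    (hm1 : 3 * (m : ℝ) ≤ δ / 2 * n) (hm2 : δ * n / 12 ≤ (m : ℝ))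
    (hbig : (n : ℝ) * Real.exp (-(1 / 4 * m / 4)) < 1) :
    ∃ 𝒞 : Finset (Finset (Fin n)),
      ((𝒞 : Set (Finset (Fin n))).PairwiseDisjoint id) ∧
      (∀ c ∈ 𝒞, G.IsNClique 2 c ∨ G.IsNClique 3 c) ∧
      ((Finset.univ \ 𝒞.biUnion id).card ≤ 2) ∧
      (∃ 𝒜 ⊆ 𝒞, IsAbsorber G (δ / 2) 3 𝒜) := by
  have hnr : (0:ℝ) < n := by exact_mod_cast hn
  obtain ⟨D, τ, h1, h2, h3, h4, h5, h6, h7⟩ := absorber_exists G 3 m (1 / 4) (δ / 2)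
    (by norm_num) (by norm_num) hn ∅ (by
      intro W hW y hy
      by_contra hcon
      push Not at hcon
      have hX := hno (univ.filter fun z => G.Adj y z) (by
        rw [← degR_eq]
        refine le_trans ?_ (hdeg y)
        exact mul_le_mul_of_nonneg_right (by linarith) hnr.le)
      have hle := edgesIn_le G (univ.filter fun z => G.Adj y z) W (by
        intro a ha b hb hab
        by_contra hW'
        push Not at hW'
        have ha' := (mem_filter.1 ha).2
        have hb' := (mem_filter.1 hb).2
        refine hcon {y, a, b} (SimpleGraph.is3Clique_triple_iff.2 ⟨ha', hb', hab⟩) (by simp) ?_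
        rw [disjoint_left]
        intro x hx
        simp only [mem_insert, mem_singleton] at hx
        rcases hx with rfl | rfl | rfl
        exacts [hy, hW'.1, hW'.2])
      have hle' : (edgesIn G ((univ.filter fun z => G.Adj y z : Finset (Fin n)) : Set (Fin n)) : ℝ)
        ≤ W.card * n := by exact_mod_cast hle
      have hWc : (W.card : ℝ) ≤ 3 * m := by
        have : W.card ≤ 3 * m := by simpa using hW
        exact_mod_cast this
      nlinarith [mul_le_mul_of_nonneg_right (hWc.trans hm1) hnr.le, mul_pos hδ (mul_pos hnr hnr)])
    (by push_cast; simp; linarith)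
    (fun v => le_trans (mul_le_mul_of_nonneg_right (by linarith) hnr.le) (hdeg v)) hbig
  set 𝒜 := D.image τ with h𝒜
  set W := 𝒜.biUnion id with hW
  have hWc : (W.card : ℝ) ≤ δ / 2 * n := by
    refine le_trans ?_ hm1
    exact_mod_cast h6
  have hcl : ∀ c ∈ 𝒜, G.IsNClique 3 c := by
    intro c hc
    obtain ⟨y, hy, rfl⟩ := mem_image.1 hc
    exact (h2 y hy).1
  obtain ⟨M, A, p, e, g1, g2, g3, g4, g5, g6, ⟨I, gI, gI'⟩, g8, g9⟩ := matching_struct2 G W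
  refine ⟨𝒜 ∪ M, ?_, ?_, ?_, 𝒜, subset_union_left, hcl, hWc, ?_⟩
  · have hdis : ∀ c ∈ 𝒜, ∀ d ∈ M, Disjoint c d := fun c hc d hd =>
      (g3.mono_left (subset_biUnion_of_mem id hc)).mono_right (subset_biUnion_of_mem id hd)
    intro c hc d hd hcd
    rcases mem_union.1 (mem_coe.1 hc) with hc | hc <;>
      rcases mem_union.1 (mem_coe.1 hd) with hd | hd
    · exact h5 hc hd hcd
    · exact hdis c hc d hd
    · exact (hdis d hd c hc).symm
    · exact g2 hc hd hcd
  · intro c hc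
    rcases mem_union.1 hc with hc | hc
    · exact Or.inr (hcl c hc)
    · exact Or.inl (g1 c hc)
  · rw [union_biUnion, ← hW]
    by_contra hU
    push Not at hU
    obtain ⟨S, hS, hSc⟩ := exists_subset_card_eq (show 3 ≤ _ from hU)
    have i1 := g9 S hS
    have i2 : ∀ u ∈ S, (1 / 2 - δ) * n - δ / 2 * n - A.card ≤ (e u : ℝ) := by
      intro u hu
      have j1 := hdeg u
      have j2 : (degR G u : ℝ) ≤ W.card + (A.filter fun a => G.Adj u a).card + e u := by
        exact_mod_cast g8 u (hS hu)
      have j3 : ((A.filter fun a => G.Adj u a).card : ℝ) ≤ A.card := by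
        exact_mod_cast card_filter_le _ _
      linarith
    have i3 := card_nsmul_le_sum S (fun u => (e u : ℝ)) _ i2
    rw [hSc, nsmul_eq_mul] at i3
    have i1' : ∑ u ∈ S, (e u : ℝ) + 2 * A.card ≤ n := by exact_mod_cast i1
    push_cast at i3
    have hIA : (A.card : ℝ) ≤ I.card := by rw [gI]; push_cast; linarith [Nat.cast_nonneg (α := ℝ) (univ \ (W ∪ M.biUnion id)).card]
    have hI := hno I (by nlinarith)
    rw [edgesIn_indep G I gI'] at hI
    have : 0 < δ * (n:ℝ)^2 := by positivity
    simp at hI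
    linarith
  · intro x
    refine le_trans ?_ (h7 x)
    push_cast
    nlinarith [mul_pos hδ hnr, mul_le_mul_of_nonneg_right hδ1 (mul_pos hδ hnr).le]

/-- Purely numerical estimate used in the non-singular case. -/
lemma num_phase1 (s t r k K n γ δ u a : ℝ) (hk1 : 1 ≤ k) (ht : 0 < t) (hs : 0 < s) (hr : 1 ≤ r)
    (hkst : k = s - t) (hrst : r = s + t) (ht1 : 1 ≤ t) (hK : 0 ≤ K) (hn : 0 < n) (hγ : 0 < γ)
    (hδγ : δ ≤ γ / (16 * r)) (hL2 : K + t * K ≤ γ / (4 * r) * n)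
    (j1 : (t / r - 2 * δ) * n - K ≤ a) (j5 : a + u ≤ (s / r - γ) * n) :
    γ / (4 * r) * n + t * u / k ≤ (t / r - 2 * δ) * n - K := by
  have hkr : 0 < k := by linarith
  have hr0 : 0 < r := by linarith
  obtain ⟨κ, hκ⟩ : ∃ κ, κ = γ / (4 * r) := ⟨_, rfl⟩
  rw [← hκ] at hL2 ⊢
  have hγκ : γ = 4 * r * κ := by rw [hκ]; field_simp
  have hδκ : δ ≤ κ / 4 := by
    refine hδγ.trans (le_of_eq ?_)
    rw [hκ]; field_simp; norm_num
  have hκ0 : 0 < κ := by rw [hκ]; positivity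
  have j4 : u ≤ (k / r - γ + 2 * δ) * n + K := by
    have : k / r = s / r - t / r := by rw [hkst]; ring
    rw [this]; linarith
  obtain ⟨q, hq⟩ : ∃ q, q = t / k := ⟨_, rfl⟩
  have hq0 : 0 < q := by rw [hq]; positivity
  have hqt : q ≤ t := by rw [hq]; exact div_le_self ht.le hk1
  have hqr : 1 ≤ q * r := by
    rw [hq, div_mul_eq_mul_div, one_le_div hkr, hkst, hrst]
    nlinarith
  have hqk : q * (k / r) = t / r := by
    rw [hq]; field_simp
  have e1 : t * u / k = q * u := by rw [hq]; ring
  rw [e1]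
  have e2 : q * u ≤ q * ((k / r - γ + 2 * δ) * n + K) :=
    mul_le_mul_of_nonneg_left j4 hq0.le
  have e3 : q * ((k / r - γ + 2 * δ) * n + K) =
      t / r * n - q * (γ - 2 * δ) * n + q * K := by
    rw [← hqk]; ring
  have e4 : 7 / 2 * κ ≤ q * (γ - 2 * δ) := by
    have : 7 / 2 * r * κ ≤ γ - 2 * δ := by
      have : κ ≤ r * κ := by nlinarith
      rw [hγκ]; linarith
    calc 7 / 2 * κ ≤ (q * r) * (7 / 2 * κ) := by
          exact le_mul_of_one_le_left (by positivity) hqr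
      _ = q * (7 / 2 * r * κ) := by ring
      _ ≤ _ := mul_le_mul_of_nonneg_left this hq0.le
  have e5 : 7 / 2 * κ * n ≤ q * (γ - 2 * δ) * n := mul_le_mul_of_nonneg_right e4 hn.le
  have e6 : q * K ≤ t * K := mul_le_mul_of_nonneg_right hqt hK
  have e7 : δ * n ≤ κ / 4 * n := mul_le_mul_of_nonneg_right hδκ hn.le
  have e8 : 0 < κ * n := by positivity
  have e9 : (t / r - 2 * δ) * n = t / r * n - 2 * (δ * n) := by ring
  rw [e9]
  linarith

set_option maxHeartbeats 4000000 in
/-- The non-singular case `s > r / 2`. -/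
lemma nonsing_case {n : ℕ} (G : SimpleGraph (Fin n)) (s t r : ℕ) (hr : r = s + t) (ht : 0 < t)
    (hk : 0 < s - t) (γ δ c : ℝ) (hc : c = t / (2 * r)) (m m' K N₁ N₂ : ℕ)
    (hδ : 0 < δ) (hγ : 0 < γ) (hδc : δ ≤ c / 2) (hδγ : δ ≤ γ / (16 * r)) (hn : 0 < n)
    (hdeg : ∀ v, ((t : ℝ) / r - δ) * n ≤ (degR G v : ℝ))
    (hno : ∀ X : Finset (Fin n), ((s : ℝ) / r - γ) * n ≤ (X.card : ℝ) →
      δ * (n : ℝ) ^ 2 < (edgesIn G (X : Set (Fin n)) : ℝ))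
    (hm1 : 2 * (m : ℝ) ≤ δ / 2 * n) (hm2 : δ * n / 8 ≤ (m : ℝ))
    (hm1' : 2 * (m' : ℝ) ≤ δ / 4 * n) (hm2' : δ * n / 16 ≤ (m' : ℝ))
    (hbig : (n : ℝ) * Real.exp (-(c * m / 4)) < 1)
    (hbig' : (n : ℝ) * Real.exp (-(c * m' / 4)) < 1)
    (hN₁ : 2 * ((s - t : ℕ) : ℝ) ≤ γ / (4 * r) * N₁) (hN₁0 : 0 < N₁)
    (hN₂ : 16 * ((s - t : ℕ) : ℝ) ≤ c * N₂) (hN₂0 : 0 < N₂)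
    (hK : 256 * (t : ℝ) ≤ c * δ * K) (hK0 : 0 < K)
    (hL1 : (t : ℝ) * 2 ^ N₁ ≤ γ / (4 * r) * n / 2)
    (hL2 : (K : ℝ) * (1 + t) ≤ γ / (4 * r) * n)
    (hL3 : (t : ℝ) * 2 ^ N₂ ≤ c / 16 * m')
    (hL4 : (t : ℝ) * N₁ ≤ c / 16 * m') :
    ∃ 𝒞 : Finset (Finset (Fin n)),
      ((𝒞 : Set (Finset (Fin n))).PairwiseDisjoint id) ∧
      (∀ c ∈ 𝒞, IsTile G s t c) ∧
      ((Finset.univ \ 𝒞.biUnion id).card ≤ N₂) ∧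
      (∃ 𝒜 ⊆ 𝒞, IsAbsorber G (δ / 2) 2 𝒜) := by
  have hnr : (0:ℝ) < n := by exact_mod_cast hn
  have htr : (0:ℝ) < t := by exact_mod_cast ht
  have ht1 : (1:ℝ) ≤ t := by exact_mod_cast ht
  have hrr : (0:ℝ) < r := by rw [hr]; push_cast; positivity
  have hkr : (0:ℝ) < ((s - t : ℕ) : ℝ) := by exact_mod_cast hk
  have hk1 : (1:ℝ) ≤ ((s - t : ℕ) : ℝ) := by exact_mod_cast hk
  have hkst : ((s - t : ℕ) : ℝ) = s - t := Nat.cast_sub (by omega)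
  have hrst : (r : ℝ) = s + t := by rw [hr]; push_cast; ring
  have hc0 : 0 < c := by rw [hc]; positivity
  have hc2 : (t : ℝ) / r = 2 * c := by rw [hc]; field_simp
  have hc1 : c ≤ 1 := by
    rw [hc, div_le_one (by positivity), hrst]
    have : (0:ℝ) ≤ s := by positivity
    linarith
  have hdeg' : ∀ v, (c + δ) * n ≤ (degR G v : ℝ) := fun v =>
    le_trans (mul_le_mul_of_nonneg_right (by linarith) hnr.le) (hdeg v)
  have hcl : ∀ W : Finset (Fin n), (W.card : ℝ) ≤ δ * n → ∀ y, y ∉ W →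
      ∃ T : Finset (Fin n), G.IsNClique 2 T ∧ y ∈ T ∧ Disjoint T W := by
    intro W hW y hy
    have hex : ∃ z, G.Adj y z ∧ z ∉ W := by
      by_contra hcon
      push Not at hcon
      have h1 : degR G y ≤ W.card := by
        rw [degR_eq]
        exact card_le_card fun z hz => hcon z (mem_filter.1 hz).2
      have h2 : (degR G y : ℝ) ≤ W.card := by exact_mod_cast h1
      have h3 := hdeg' y
      nlinarith [mul_pos hc0 hnr]
    obtain ⟨z, hz, hzW⟩ := hex
    refine ⟨{y, z}, isNClique_pair hz, by simp, ?_⟩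
    rw [disjoint_left]
    intro x hx
    simp only [mem_insert, mem_singleton] at hx
    rcases hx with rfl | rfl
    exacts [hy, hzW]
  have hδn : 0 < δ * n := by positivity
  -- the absorber
  have hWd : (((∅ : Finset (Fin n)).card + 2 * m : ℕ) : ℝ) ≤ δ * n := by
    push_cast; simp; linarith
  obtain ⟨D, τ, h1, h2, h3, h4, h5, h6, h7⟩ := absorber_exists G 2 m c δ
    hc0 hc1 hn ∅ (fun W hW => hcl W (le_trans (by exact_mod_cast hW) hWd)) hWd hdeg' hbig
  set 𝒜 := D.image τ with h𝒜
  set W := 𝒜.biUnion id with hW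
  have hWc : (W.card : ℝ) ≤ δ / 2 * n := by
    refine le_trans ?_ hm1
    exact_mod_cast h6
  have h𝒜cl : ∀ c ∈ 𝒜, G.IsNClique 2 c := by
    intro c hc
    obtain ⟨y, hy, rfl⟩ := mem_image.1 hc
    exact (h2 y hy).1
  -- the reserve
  have hWd' : ((W.card + 2 * m' : ℕ) : ℝ) ≤ δ * n := by
    push_cast; linarith
  obtain ⟨D', τ', k1, k2, k3, k4, k5, k6, _⟩ := absorber_exists G 2 m' c δ
    hc0 hc1 hn W (fun W hW => hcl W (le_trans (by exact_mod_cast hW) hWd')) hWd' hdeg' hbig'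
  set ℛ := D'.image τ' with hℛ
  have hℛcl : ∀ c ∈ ℛ, G.IsNClique 2 c ∧ Disjoint c W := by
    intro c hc
    obtain ⟨y, hy, rfl⟩ := mem_image.1 hc
    exact ⟨(k2 y hy).1, (k2 y hy).2.2⟩
  set W' := W ∪ ℛ.biUnion id with hW'
  have hWc' : (W'.card : ℝ) ≤ δ * n := by
    have : W'.card ≤ W.card + 2 * m' := (card_union_le _ _).trans (by omega)
    exact le_trans (by exact_mod_cast this) hWd'
  have hpart : ∀ y, ∃ z, y ∈ D' → G.Adj y z ∧ τ' y = {y, z} := by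
    intro y
    by_cases hy : y ∈ D'
    · obtain ⟨hy1, hy2, _⟩ := k2 y hy
      obtain ⟨a, b, hab, he⟩ := card_eq_two.1 hy1.card_eq
      rw [he] at hy1 hy2
      have hadj : G.Adj a b := hy1.isClique (by simp) (by simp) hab
      rcases mem_insert.1 hy2 with h | h
      · subst h; exact ⟨b, fun _ => ⟨hadj, he⟩⟩
      · rw [mem_singleton] at h; subst h
        exact ⟨a, fun _ => ⟨hadj.symm, by rw [he, pair_comm]⟩⟩
    · exact ⟨y, fun h => absurd h hy⟩
  choose p₂ hp₂ using hpart
  obtain ⟨M, A, p, e, g1, g2, g3, g4, g5, g6, ⟨I, gI, gI'⟩, g8, g9⟩ := matching_struct2 G W'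
  set U := univ \ (W' ∪ M.biUnion id) with hU
  set F := 𝒜 ∪ ℛ ∪ M with hF
  have hFun : F.biUnion id = W' ∪ M.biUnion id := by
    rw [hF, union_biUnion, union_biUnion]
  have hFd : (F : Set (Finset (Fin n))).PairwiseDisjoint id := by
    have d1 : ∀ c ∈ 𝒜, ∀ d ∈ M, Disjoint c d := fun c hc d hd =>
      (g3.mono_left ((subset_biUnion_of_mem id hc).trans subset_union_left)).mono_right
        (subset_biUnion_of_mem id hd)
    have d2 : ∀ c ∈ ℛ, ∀ d ∈ M, Disjoint c d := fun c hc d hd =>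
      (g3.mono_left ((subset_biUnion_of_mem id hc).trans subset_union_right)).mono_right
        (subset_biUnion_of_mem id hd)
    have d3 : ∀ c ∈ 𝒜, ∀ d ∈ ℛ, Disjoint c d := fun c hc d hd =>
      ((hℛcl d hd).2.mono_right (subset_biUnion_of_mem id hc)).symm
    intro c hc d hd hcd
    have hc' := mem_coe.1 hc
    have hd' := mem_coe.1 hd
    simp only [hF, mem_union] at hc' hd'
    rcases hc' with (hc' | hc') | hc' <;> rcases hd' with (hd' | hd') | hd'
    · exact h5 hc' hd' hcd
    · exact d3 c hc' d hd'
    · exact d1 c hc' d hd'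
    · exact (d3 d hd' c hc').symm
    · exact k5 hc' hd' hcd
    · exact d2 c hc' d hd'
    · exact (d1 d hd' c hc').symm
    · exact (d2 d hd' c hc').symm
    · exact g2 hc' hd' hcd
  have hFt : ∀ c ∈ F, IsTile G s t c := by
    intro c hc
    simp only [hF, mem_union] at hc
    rcases hc with (hc | hc) | hc
    · exact Or.inl (h𝒜cl c hc)
    · exact Or.inl (hℛcl c hc).1
    · exact Or.inl (g1 c hc)
  have hAM : A ⊆ M.biUnion id := fun a ha => mem_biUnion.2 ⟨_, g4 a ha, by simp⟩
  have hAn : (A.card : ℝ) ≤ n := by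
    have := card_le_univ A
    rw [Fintype.card_fin] at this
    exact_mod_cast this
  -- good and bad uncovered vertices
  set Ug := U.filter fun u => e u ≤ K with hUg
  set Ub := U.filter fun u => ¬ e u ≤ K with hUb
  have hUbc : (Ub.card : ℝ) * K ≤ n := by
    have i1 := g9 Ub (filter_subset _ _)
    have i2 : Ub.card * K ≤ ∑ u ∈ Ub, e u := by
      rw [← smul_eq_mul]
      exact card_nsmul_le_sum _ _ _ fun u hu => (not_le.1 (mem_filter.1 hu).2).le
    exact_mod_cast (by omega : Ub.card * K ≤ n)
  have hIsmall : (A.card : ℝ) + U.card < ((s : ℝ) / r - γ) * n := by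
    by_contra hcon
    push Not at hcon
    have hI := hno I (by rw [gI]; push_cast; exact hcon)
    rw [edgesIn_indep G I gI'] at hI
    have : 0 < δ * (n:ℝ)^2 := by positivity
    simp at hI
    linarith
  have hgood : ∀ u ∈ Ug, ((t : ℝ) / r - 2 * δ) * n - K ≤
      ((A.filter fun a => G.Adj u a).card : ℝ) := by
    intro u hu
    obtain ⟨hu1, hu2⟩ := mem_filter.1 hu
    have j1 := hdeg u
    have j2 : (degR G u : ℝ) ≤ W'.card + (A.filter fun a => G.Adj u a).card + e u := by
      exact_mod_cast g8 u hu1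
    have j3 : (e u : ℝ) ≤ K := by exact_mod_cast hu2
    linarith
  have hph1 : ∀ u ∈ Ug, γ / (4 * r) * n + t * (Ug.card : ℝ) / ((s - t : ℕ) : ℝ) ≤
      ((A.filter fun a => G.Adj u a).card : ℝ) := by
    intro u hu
    have j1 := hgood u hu
    refine le_trans ?_ j1
    have j2 : ((A.filter fun a => G.Adj u a).card : ℝ) ≤ A.card := by
      exact_mod_cast card_filter_le _ _
    have j3 : (Ug.card : ℝ) ≤ U.card := by exact_mod_cast card_filter_le _ _
    have hr1 : (1:ℝ) ≤ r := by
      have : 1 ≤ r := by omega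
      exact_mod_cast this
    have hs0 : (0:ℝ) < s := by
      have : 0 < s := by omega
      exact_mod_cast this
    exact num_phase1 s t r _ K n γ δ _ A.card hk1 htr hs0 hr1 hkst hrst ht1 (Nat.cast_nonneg K) hnr
      hγ hδγ (by linarith only [hL2]) (j1.trans j2) (by linarith only [hIsmall, j3])
  have hNr : (0:ℝ) < N₁ := by exact_mod_cast hN₁0
  have hNr2 : (0:ℝ) < N₂ := by exact_mod_cast hN₂0
  obtain ⟨F', a1, a2, a3, a4, a5, a6⟩ := greedy_tile G s t N₁ ht hk hN₁0 (γ / (4 * r) * n) Ug.card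
    F A Ug p le_rfl hFt hFd
    (by
      rw [hFun]
      exact sdiff_disjoint.mono_left (filter_subset _ _))
    (fun a ha => mem_union_right _ (g4 a ha)) g5 g6
    (by
      have : (A.card : ℝ) * ((s - t : ℕ) : ℝ) / N₁ ≤ γ / (4 * r) * n / 2 := by
        rw [div_le_iff₀ hNr]
        calc (A.card : ℝ) * ((s - t : ℕ) : ℝ) ≤ n * ((s - t : ℕ) : ℝ) :=
              mul_le_mul_of_nonneg_right hAn hkr.le
          _ ≤ n * (γ / (4 * r) * N₁ / 2) := mul_le_mul_of_nonneg_left (by linarith) hnr.le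
          _ = _ := by ring
      linarith) hph1
  -- second phase
  set U₂ := univ \ F'.biUnion id with hU₂
  have hU₂c : (U₂.card : ℝ) ≤ Ub.card + N₁ := by
    have hsub : U₂ ⊆ Ub ∪ (Ug \ F'.biUnion id) := by
      intro x hx
      have hx' := (mem_sdiff.1 hx).2
      have hxU : x ∈ U := by
        refine mem_sdiff.2 ⟨mem_univ _, fun h => hx' (a3 ?_)⟩
        rw [hFun]; exact h
      by_cases he : e x ≤ K
      · exact mem_union_right _ (mem_sdiff.2 ⟨mem_filter.2 ⟨hxU, he⟩, hx'⟩)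
      · exact mem_union_left _ (mem_filter.2 ⟨hxU, he⟩)
    have := (card_le_card hsub).trans (card_union_le _ _)
    exact_mod_cast (by omega : U₂.card ≤ Ub.card + N₁)
  have hWA : ∀ c ∈ 𝒜 ∪ ℛ, Disjoint c A := by
    intro c hc
    refine Disjoint.mono ?_ hAM g3
    rcases mem_union.1 hc with hc | hc
    · exact (subset_biUnion_of_mem id hc).trans subset_union_left
    · exact (subset_biUnion_of_mem id hc).trans subset_union_right
  have hph2 : t * (U₂.card : ℝ) ≤ c / 8 * m' := by
    have hKr : (0:ℝ) < K := by exact_mod_cast hK0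
    have i1 : t * (Ub.card : ℝ) ≤ c / 16 * m' := by
      have i2 : t * (Ub.card : ℝ) * 256 ≤ c * δ * n := by
        calc t * (Ub.card : ℝ) * 256 = (256 * t) * Ub.card := by ring
          _ ≤ (c * δ * K) * Ub.card := mul_le_mul_of_nonneg_right hK (by positivity)
          _ = (c * δ) * (Ub.card * K) := by ring
          _ ≤ (c * δ) * n := mul_le_mul_of_nonneg_left hUbc (by positivity)
      have i3 : c * (δ * n / 16) ≤ c * m' := mul_le_mul_of_nonneg_left hm2' hc0.le
      linarith
    have i4 : t * (U₂.card : ℝ) ≤ t * (Ub.card + N₁) := mul_le_mul_of_nonneg_left hU₂c htr.le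
    linarith
  obtain ⟨F'', b1, b2, b3, b4, b5, b6⟩ := greedy_tile G s t N₂ ht hk hN₂0 (c / 8 * m') U₂.card
    F' D' U₂ p₂ le_rfl a1 a2 sdiff_disjoint
    (by
      intro y hy
      rw [← (hp₂ y hy).2]
      have hmem : τ' y ∈ ℛ := mem_image_of_mem _ hy
      exact a6 _ (mem_union_left _ (mem_union_right _ hmem)) (hWA _ (mem_union_right _ hmem)))
    (fun y hy => (hp₂ y hy).1)
    (by
      intro y hy hpy
      have hne := (hp₂ y hy).1.ne
      have := k3 y hy _ hpy hne
      refine disjoint_left.1 this ?_ (k2 _ hpy).2.1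
      rw [(hp₂ y hy).2]; simp)
    (by
      rw [k1]
      have : (m' : ℝ) * ((s - t : ℕ) : ℝ) / N₂ ≤ c / 16 * m' := by
        rw [div_le_iff₀ hNr2]
        calc (m' : ℝ) * ((s - t : ℕ) : ℝ) ≤ m' * (c * N₂ / 16) :=
              mul_le_mul_of_nonneg_left (by linarith) (by positivity)
          _ = _ := by ring
      linarith)
    (by
      intro u _
      have i1 := k4 u
      have i2 : t * (U₂.card : ℝ) / ((s - t : ℕ) : ℝ) ≤ t * (U₂.card : ℝ) :=
        div_le_self (by positivity) hk1
      linarith)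
  refine ⟨F'', b2, b1, ?_, 𝒜, ?_, h𝒜cl, hWc, ?_⟩
  · refine (card_le_card ?_).trans b5.le
    intro x hx
    have hx' := (mem_sdiff.1 hx).2
    exact mem_sdiff.2 ⟨mem_sdiff.2 ⟨mem_univ _, fun h => hx' (b3 h)⟩, hx'⟩
  · intro c hc
    refine b6 c (a6 c (mem_union_left _ (mem_union_left _ hc)) (hWA c (mem_union_left _ hc))) ?_
    rw [disjoint_left]
    intro x hx hxD
    exact disjoint_left.1 (k2 x hxD).2.2 (k2 x hxD).2.1 (mem_biUnion.2 ⟨c, hc, hx⟩)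
  · intro x
    refine le_trans ?_ (h7 x)
    push_cast
    have i1 : c * (δ * n / 8) ≤ c * m := mul_le_mul_of_nonneg_left hm2 hc0.le
    have i2 : δ * (δ * n) ≤ (c / 2) * (δ * n) := mul_le_mul_of_nonneg_right hδc hδn.le
    have i3 : (δ / 2) ^ 2 / (24 * 2 ^ 2) * n = δ * (δ * n) / 384 := by ring
    rw [i3]
    nlinarith [mul_pos hc0 hδn]

lemma exp_small (b : ℝ) (hb : 0 < b) :
    ∀ᶠ n : ℕ in Filter.atTop, (n : ℝ) * Real.exp (-(b * n)) < 1 := by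
  have h1 := Real.tendsto_pow_mul_exp_neg_atTop_nhds_zero 1
  have h2 : Filter.Tendsto (fun n : ℕ => b * (n : ℝ)) Filter.atTop Filter.atTop :=
    tendsto_natCast_atTop_atTop.const_mul_atTop hb
  have h3 := (h1.comp h2).eventually (gt_mem_nhds hb)
  filter_upwards [h3] with n hn
  simp only [Function.comp, pow_one] at hn
  have : b * ((n : ℝ) * Real.exp (-(b * n))) < b * 1 := by linarith
  exact lt_of_mul_lt_mul_left this hb.le

lemma floor_half (x : ℝ) (hx : 2 ≤ x) : x / 2 ≤ (⌊x⌋₊ : ℝ) ∧ (⌊x⌋₊ : ℝ) ≤ x :=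
  ⟨by have := Nat.lt_floor_add_one x; linarith, Nat.floor_le (by linarith)⟩

lemma ev_ge (L : ℝ) : ∀ᶠ n : ℕ in Filter.atTop, L ≤ (n : ℝ) :=
  tendsto_natCast_atTop_atTop.eventually_ge_atTop L

lemma exp_mono (n : ℕ) (b x : ℝ) (h : b * n ≤ x) (hn : (n : ℝ) * Real.exp (-(b * n)) < 1) :
    (n : ℝ) * Real.exp (-x) < 1 :=
  lt_of_le_of_lt (mul_le_mul_of_nonneg_left (Real.exp_le_exp.2 (by linarith)) (by positivity)) hn

/-- Lemma 7.3: almost-covering `G` by copies of `K₂` and `Q_{s,t}`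
(resp. `K₃` and `K₂` in the singular case) including an absorber, unless `G` has a large
sparse vertex subset. Here `t = r - s`. -/
theorem statement13 (r s : ℕ) (hrs : r ≤ 2 * s) (hsr : s < r) :
    ∃ C : ℕ, ∃ γ₀ : ℝ, 0 < γ₀ ∧ ∀ γ : ℝ, 0 < γ → γ ≤ γ₀ →
      ∃ δ₀ : ℝ, 0 < δ₀ ∧ ∀ δ : ℝ, 0 < δ → δ ≤ δ₀ →
        ∃ n₀ : ℕ, ∀ n : ℕ, n₀ ≤ n →
          ∀ G : SimpleGraph (Fin n),
            (∀ v, (1 - (s : ℝ) / (r : ℝ) - δ) * n ≤ (degR G v : ℝ)) →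
            (∃ X : Finset (Fin n), ((s : ℝ) / (r : ℝ) - γ) * n ≤ (X.card : ℝ) ∧
              (edgesIn G (X : Set (Fin n)) : ℝ) ≤ δ * (n : ℝ) ^ 2) ∨
            (r < 2 * s ∧ ∃ 𝒞 : Finset (Finset (Fin n)),
              ((𝒞 : Set (Finset (Fin n))).PairwiseDisjoint id) ∧
              (∀ c ∈ 𝒞, G.IsNClique 2 c ∨
                ∃ f : Qgraph s (r - s) →g G, Function.Injective f ∧
                  Set.range f = (c : Set (Fin n))) ∧
              ((Finset.univ \ 𝒞.biUnion id).card ≤ C) ∧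
              (∃ 𝒜 ⊆ 𝒞, IsAbsorber G (δ / 2) 2 𝒜)) ∨
            (r = 2 * s ∧ ∃ 𝒞 : Finset (Finset (Fin n)),
              ((𝒞 : Set (Finset (Fin n))).PairwiseDisjoint id) ∧
              (∀ c ∈ 𝒞, G.IsNClique 2 c ∨ G.IsNClique 3 c) ∧
              ((Finset.univ \ 𝒞.biUnion id).card ≤ C) ∧
              (∃ 𝒜 ⊆ 𝒞, IsAbsorber G (δ / 2) 3 𝒜)) := by
  have hr0 : 0 < r := by omega
  have hrr : (0:ℝ) < r := by exact_mod_cast hr0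
  rcases Nat.lt_or_ge r (2 * s) with hlt | hge
  · -- non-singular case
    obtain ⟨t, rfl⟩ : ∃ t, r = s + t := ⟨r - s, by omega⟩
    have ht : 0 < t := by omega
    have hk : 0 < s - t := by omega
    have htr : (0:ℝ) < t := by exact_mod_cast ht
    have hkr : (0:ℝ) < ((s - t : ℕ) : ℝ) := by exact_mod_cast hk
    set r := s + t with hr
    have hst : 1 - (s : ℝ) / r = t / r := by
      have : (r : ℝ) = s + t := by rw [hr]; push_cast; ring
      field_simp
      linarith
    set c : ℝ := t / (2 * r) with hc
    have hc0 : 0 < c := by positivity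
    set N₂ := ⌈16 * ((s - t : ℕ) : ℝ) / c⌉₊ with hN₂
    have hN₂0 : 0 < N₂ := Nat.ceil_pos.2 (by positivity)
    refine ⟨N₂, 1, one_pos, fun γ hγ _ => ⟨min (c / 2) (γ / (16 * r)), by positivity, ?_⟩⟩
    intro δ hδ hδ₀
    have hδc := hδ₀.trans (min_le_left _ _)
    have hδγ := hδ₀.trans (min_le_right _ _)
    set κ := γ / (4 * r) with hκ
    have hκ0 : 0 < κ := by positivity
    set N₁ := ⌈2 * ((s - t : ℕ) : ℝ) / κ⌉₊ with hN₁
    have hN₁0 : 0 < N₁ := Nat.ceil_pos.2 (by positivity)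
    set K := ⌈256 * (t : ℝ) / (c * δ)⌉₊ with hK
    have hK0 : 0 < K := Nat.ceil_pos.2 (by positivity)
    have hev := (exp_small (c * δ / 64) (by positivity)).and ((ev_ge (16 / δ)).and
      ((ev_ge ((t : ℝ) * 2 ^ N₁ * 2 / κ)).and ((ev_ge ((K : ℝ) * (1 + t) / κ)).and
      ((ev_ge ((t : ℝ) * 2 ^ N₂ * 256 / (c * δ))).and (ev_ge ((t : ℝ) * N₁ * 256 / (c * δ)))))))
    obtain ⟨n₀, hn₀⟩ := Filter.eventually_atTop.1 hev
    refine ⟨n₀, fun n hn G hdeg => ?_⟩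
    obtain ⟨v1, v2, v3, v4, v5, v6⟩ := hn₀ n hn
    rw [div_le_iff₀ (by positivity)] at v2 v3 v4 v5 v6
    by_cases hX : ∃ X : Finset (Fin n), ((s : ℝ) / (r : ℝ) - γ) * n ≤ (X.card : ℝ) ∧
              (edgesIn G (X : Set (Fin n)) : ℝ) ≤ δ * (n : ℝ) ^ 2
    · exact Or.inl hX
    right; left
    push Not at hX
    refine ⟨hlt, ?_⟩
    have hrs' : r - s = t := by omega
    rw [hrs']
    obtain ⟨f1, f2⟩ := floor_half (δ * n / 4) (by linarith)
    obtain ⟨f3, f4⟩ := floor_half (δ * n / 8) (by linarith)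
    have hnpos : 0 < n := by
      rcases Nat.eq_zero_or_pos n with h | h
      · rw [h] at v2; norm_num at v2
      · exact h
    have hcm : c * (δ * n / 16) ≤ c * ⌊δ * n / 8⌋₊ :=
      mul_le_mul_of_nonneg_left (by linarith) hc0.le
    have hcm2 : c * (δ * n / 16) ≤ c * ⌊δ * n / 4⌋₊ :=
      mul_le_mul_of_nonneg_left (by linarith [show 0 ≤ δ * n by positivity]) hc0.le
    exact nonsing_case G s t r hr ht hk γ δ c hc ⌊δ * n / 4⌋₊ ⌊δ * n / 8⌋₊ K N₁ N₂ hδ hγ hδc hδγ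
      hnpos (by rw [← hst]; exact hdeg) hX (by linarith) (by linarith) (by linarith) (by linarith)
      (exp_mono n _ _ (by linarith) v1) (exp_mono n _ _ (by linarith) v1)
      (by rw [mul_comm κ, ← div_le_iff₀ hκ0]; exact Nat.le_ceil _) hN₁0
      (by rw [mul_comm c, ← div_le_iff₀ hc0]; exact Nat.le_ceil _) hN₂0
      (by rw [mul_comm (c * δ), ← div_le_iff₀ (by positivity)]; exact Nat.le_ceil _) hK0
      (by linarith) (by linarith) (by linarith) (by linarith)
  · -- singular case
    have hr2 : r = 2 * s := le_antisymm hrs hge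
    have hs0 : (0:ℝ) < s := by
      have : 0 < s := by omega
      exact_mod_cast this
    have hsr2 : (s : ℝ) / r = 1 / 2 := by
      rw [hr2]; push_cast; field_simp
    refine ⟨2, 1, one_pos, fun γ hγ _ => ⟨min (1 / 16) (γ / 5), by positivity, ?_⟩⟩
    intro δ hδ hδ₀
    have hδc := hδ₀.trans (min_le_left _ _)
    have hδγ := hδ₀.trans (min_le_right _ _)
    have hev := (exp_small (δ / 192) (by positivity)).and (ev_ge (12 / δ))
    obtain ⟨n₀, hn₀⟩ := Filter.eventually_atTop.1 hev
    refine ⟨n₀, fun n hn G hdeg => ?_⟩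
    obtain ⟨v1, v2⟩ := hn₀ n hn
    rw [div_le_iff₀ (by positivity)] at v2
    rw [hsr2] at hdeg ⊢
    by_cases hX : ∃ X : Finset (Fin n), (1 / 2 - γ) * n ≤ (X.card : ℝ) ∧
              (edgesIn G (X : Set (Fin n)) : ℝ) ≤ δ * (n : ℝ) ^ 2
    · exact Or.inl hX
    right; right
    push Not at hX
    refine ⟨hr2, ?_⟩
    obtain ⟨f1, f2⟩ := floor_half (δ * n / 6) (by linarith)
    have hnpos : 0 < n := by
      rcases Nat.eq_zero_or_pos n with h | h
      · rw [h] at v2; norm_num at v2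
      · exact h
    exact sing_case G γ δ ⌊δ * n / 6⌋₊ hδ hδc (by linarith) hnpos
      (fun v => le_trans (le_of_eq (by ring)) (hdeg v)) hX (by linarith) (by linarith)
      (exp_mono n _ _ (by linarith) v1)
end
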